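/- On the event E, assume Condition (H) with the dataset in the sparse-unlearnable regime and Γ ≥ Cd, and run adversarial distillation for T iterations under a Bad Teacher. Then: (1) there exists a filter r ∈ [m] with w_{r,1}^{(T)} ≥ C_0/(α m^{1/3}); (2) there exists an unlearnable sample i ∈ S_U with max over r ∈ [m], j ≠ s(X_i) of y_i⟨w_r^{(T)}, x_{i,j}⟩ ≥ C_1/(3(mP)^{1/3}) (noise memorization); (3) the robust training error is o(1); and (4) the robust test error on the learnable test distribution satisfies L^rob(f_{W^{(T)}}) ≥ 1/2 − o(1). -/

import Mathlib

open Finset MeasureTheory ProbabilityTheory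
open scoped ENNReal NNReal

noncomputable section

namespace AD

/-- Cubic ReLU activation. -/
def phi (z : ℝ) : ℝ := (max 0 z) ^ 3

/-- Negative sigmoid `ψ(z) = 1/(1+e^z)`. -/
def psi (z : ℝ) : ℝ := 1 / (1 + Real.exp z)

/-- Logistic loss `ℓ(z) = log(1+e^{-z})`. -/
def lloss (z : ℝ) : ℝ := Real.log (1 + Real.exp (-z))

/-- Logistic sigmoid `σ(z) = 1/(1+e^{-z})`. -/
def sigm (z : ℝ) : ℝ := 1 / (1 + Real.exp (-z))

/-- Euclidean inner product on `Fin d → ℝ`. -/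
def dot {d : ℕ} (a b : Fin d → ℝ) : ℝ := ∑ k, a k * b k

/-- Squared Euclidean norm. -/
def sqnorm {d : ℕ} (a : Fin d → ℝ) : ℝ := dot a a

/-- First standard basis vector `e₁` (the learnable feature `u`). -/
def e1 (d : ℕ) (hd : 0 < d) : Fin d → ℝ := fun k => if k = (⟨0, hd⟩ : Fin d) then 1 else 0

/-- Last standard basis vector `e_d` (the unlearnable feature `v`). -/
def eLast (d : ℕ) (_hd : 0 < d) : Fin d → ℝ := fun k => if (k : ℕ) = d - 1 then 1 else 0

/-- The two-layer student network
`f_W(X) = ∑_r ∑_p [φ(⟨w_r,x_p⟩) − φ(−⟨w_r,x_p⟩)]`. -/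
def netOut {m P d : ℕ} (w : Fin m → Fin d → ℝ) (X : Fin P → Fin d → ℝ) : ℝ :=
  ∑ r, ∑ p, (phi (dot (w r) (X p)) - phi (-(dot (w r) (X p))))

/-- The concentration event `E` of the paper, i.e. properties (P1)–(P8), stated for
training patches `x`, initialization `w0`, labels `y` and signal-patch indices `sig`. -/
def EventEOn (N m P d : ℕ) (hd : 0 < d) (sigman sigma0 delta : ℝ)
    (y : Fin N → ℝ) (sig : Fin N → Fin P)
    (x : Fin N → Fin P → Fin d → ℝ) (w0 : Fin m → Fin d → ℝ) : Prop :=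
  -- (P1) noise-patch norms
  (∀ i j, j ≠ sig i →
      sigman ^ 2 * d / 2 ≤ sqnorm (x i j) ∧ sqnorm (x i j) ≤ 3 * sigman ^ 2 * d / 2) ∧
  -- (P2) pairwise noise inner products
  (∀ i k j q, j ≠ sig i → q ≠ sig k → ((i, j) : Fin N × Fin P) ≠ (k, q) →
      |dot (x i j) (x k q)| ≤
        2 * sigman ^ 2 * Real.sqrt ((d : ℝ) * Real.log ((16 : ℝ) * N ^ 2 * P ^ 2 / delta))) ∧
  -- (P3) sup-norm of noise patches
  (∀ i j, j ≠ sig i → ∀ kk : Fin d,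
      |x i j kk| ≤ sigman * Real.sqrt (2 * Real.log ((16 : ℝ) * d * N * P / delta))) ∧
  -- (P4) initialization norms
  (∀ r, Real.sqrt (sqnorm (w0 r)) ≤ 2 * sigma0 * Real.sqrt d) ∧
  -- (P5) initialization signal correlation
  (∀ r, |dot (w0 r) (e1 d hd)| ≤ sigma0 * Real.sqrt (2 * Real.log ((16 : ℝ) * m / delta))) ∧
  -- (P6) initialization noise correlations
  (∀ r i j, j ≠ sig i →
      |dot (w0 r) (x i j)| ≤
        2 * sigma0 * sigman * Real.sqrt ((d : ℝ) * Real.log ((16 : ℝ) * N * m * P / delta))) ∧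
  -- (P7) maximal initial signal alignment
  (∃ r, sigma0 / 2 ≤ dot (w0 r) (e1 d hd)) ∧
  -- (P8) maximal initial noise alignment
  (∀ i j, j ≠ sig i → ∃ r, sigma0 * sigman * Real.sqrt d / 4 ≤ y i * dot (w0 r) (x i j))
structure Setting where
  N : ℕ
  m : ℕ
  P : ℕ
  d : ℕ
  T : ℕ
  hN : 0 < N
  hm : 0 < m
  hP : 0 < P
  hd : 0 < d
  alpha : ℝ
  sigman : ℝ
  sigma0 : ℝ
  eta : ℝ
  eps : ℝ
  delta : ℝ
  halpha : 0 < alpha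
  hsigman : 0 < sigman
  hsigma0 : 0 < sigma0
  heta : 0 < eta
  heps : 0 < eps
  hepsalpha : eps < alpha
  hdelta0 : 0 < delta
  hdelta1 : delta < 1
  /-- labels -/
  y : Fin N → ℝ
  hy : ∀ i, y i = 1 ∨ y i = -1
  /-- signal patch index -/
  sig : Fin N → Fin P
  /-- learnable samples -/
  SL : Finset (Fin N)
  /-- unlearnable samples -/
  SU : Finset (Fin N)
  hunion : SL ∪ SU = Finset.univ
  hdisj : Disjoint SL SU
  /-- training patches -/
  x : Fin N → Fin P → Fin d → ℝ
  hsigL : ∀ i ∈ SL, x i (sig i) = (alpha * y i) • e1 d hd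
  hsigU : ∀ i ∈ SU, x i (sig i) = (alpha * y i) • eLast d hd
  hnoiseU : ∀ i j, j ≠ sig i → dot (x i j) (e1 d hd) = 0
  hnoiseV : ∀ i j, j ≠ sig i → dot (x i j) (eLast d hd) = 0
  /-- weight trajectory -/
  w : ℕ → Fin m → Fin d → ℝ
  hwperp : ∀ t r, dot (w t r) (eLast d hd) = 0
  /-- adversarial training examples at each iteration -/
  xadv : ℕ → Fin N → Fin P → Fin d → ℝ
  hadvnoise : ∀ t i j, j ≠ sig i → xadv t i j = x i j
  hadvspan : ∀ t i, ∃ c : ℝ, xadv t i (sig i) - x i (sig i) = c • x i (sig i)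
  hadvlinf : ∀ t i p k, |xadv t i p k - x i p k| ≤ eps
  hadvlearn : ∀ t : ℕ, ∀ i ∈ SL,
    alpha - eps ≤ y i * dot (xadv t i (sig i)) (e1 d hd) ∧
      y i * dot (xadv t i (sig i)) (e1 d hd) ≤ alpha

namespace Setting

variable (S : Setting)

/-- Adversarial margin `y_i f_{W^{(t)}}(X̃_i^{(t)})`. -/
def marg (t : ℕ) (i : Fin S.N) : ℝ := S.y i * netOut (S.w t) (S.xadv t i)

/-- Signal coordinate `w_{r,1}^{(t)}`. -/
def wsig (t : ℕ) (r : Fin S.m) : ℝ := S.w t r ⟨0, S.hd⟩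

/-- Unlearnable fraction `p_un = |S_U|/N`. -/
def pun : ℝ := (S.SU.card : ℝ) / S.N

/-- The adversarial-training gradient-descent dynamics. -/
def ATDyn : Prop :=
  ∀ t r, S.w (t + 1) r = S.w t r +
    (3 * S.eta / S.N) •
      ∑ i : Fin S.N, (psi (S.marg t i) * S.y i) •
        ∑ p : Fin S.P, (dot (S.w t r) (S.xadv t i p)) ^ 2 • S.xadv t i p

/-- The signed gradient weight of sample `i` at iteration `t` under adversarial
distillation from teacher logits `fT`. -/
def gAD (fT : Fin S.N → ℝ) (t : ℕ) (i : Fin S.N) : ℝ :=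
  sigm (S.y i * fT i) * psi (S.marg t i) - sigm (-(S.y i * fT i)) * psi (-(S.marg t i))

/-- The adversarial-distillation gradient-descent dynamics. -/
def ADDyn (fT : Fin S.N → ℝ) : Prop :=
  ∀ t r, S.w (t + 1) r = S.w t r +
    (3 * S.eta / S.N) •
      ∑ i : Fin S.N, (S.gAD fT t i * S.y i) •
        ∑ p : Fin S.P, (dot (S.w t r) (S.xadv t i p)) ^ 2 • S.xadv t i p

/-- Noise coefficients `ρ_{i,j,r}^{(t)}` (adversarial training). -/
def rho (i : Fin S.N) (j : Fin S.P) (r : Fin S.m) : ℕ → ℝ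
  | 0 => 0
  | t + 1 => rho i j r t + (3 * S.eta / S.N) * psi (S.marg t i) * (dot (S.w t r) (S.x i j)) ^ 2

/-- Noise coefficients under adversarial distillation. -/
def rhoAD (fT : Fin S.N → ℝ) (i : Fin S.N) (j : Fin S.P) (r : Fin S.m) : ℕ → ℝ
  | 0 => 0
  | t + 1 => rhoAD fT i j r t + (3 * S.eta / S.N) * S.gAD fT t i * (dot (S.w t r) (S.x i j)) ^ 2

/-- The event `E` for a setting. -/
def EventE : Prop :=
  EventEOn S.N S.m S.P S.d S.hd S.sigman S.sigma0 S.delta S.y S.sig S.x (S.w 0)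

/-- Condition (H): the parameter requirements of Condition 4.1 of the paper
(without the unlearnable-fraction regime item, which is imposed separately). -/
def CondH (C : ℝ) : Prop :=
  1 ≤ C ∧
  -- training horizon
  C * S.N / (S.eta * S.sigma0 * S.sigman ^ 3 * ((S.d : ℝ) * Real.sqrt S.d)) ≤ (S.T : ℝ) ∧
  -- dimension
  C * S.m ^ 2 * S.P ^ 2 * S.N ^ 2 *
      (Real.log ((S.T : ℝ) * S.N * S.m * S.P / S.delta)) ^ 4 ≤ (S.d : ℝ) ∧
  -- signal strength
  C * S.sigman * Real.sqrt S.d * Real.log ((S.T : ℝ) * S.N * S.m * S.P / S.delta) /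
      (((S.N : ℝ) * (1 - S.pun)) ^ ((1 : ℝ) / 3)) ≤ S.alpha ∧
  -- initialization scale
  S.sigma0 ≤
    C⁻¹ *
        min (min (1 / ((S.m : ℝ) ^ ((2 : ℝ) / 3) * (S.P : ℝ) ^ ((2 : ℝ) / 3) *
            S.sigman * Real.sqrt S.d))
          (1 / (S.alpha * (S.m : ℝ) ^ ((2 : ℝ) / 3))))
          (1 / (S.sigman * S.m ^ 2 * Real.sqrt S.P * S.d)) /
      Real.log ((S.T : ℝ) * S.d * S.N * S.m * S.P / S.delta) ∧
  -- learning rate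
  S.eta ≤
    C⁻¹ * min (min (1 / (S.alpha ^ 3 * S.sigma0)) (1 / (S.sigman ^ 2 * S.d))) (1 / S.alpha ^ 2) /
      Real.log ((S.T : ℝ) * S.N * S.m * S.P / S.delta) ∧
  -- adversarial budget
  C * S.sigman * S.m * Real.sqrt S.P * Real.log ((S.T : ℝ) * S.d * S.N * S.P / S.delta) ≤ S.eps ∧
  S.eps < C⁻¹ * min S.alpha (1 / (S.m * S.sigma0 * S.d)) ∧
  -- width and number of patches
  C * Real.log ((S.N : ℝ) * S.P / S.delta) ≤ (S.m : ℝ) ∧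
  (S.m : ℝ) ≤ C * Real.log S.d ^ C ∧
  2 ≤ S.P ∧ (S.P : ℝ) ≤ C

/-- The sparse-unlearnable regime of Condition 4.1. -/
def SparseRegime (C : ℝ) : Prop :=
  C / S.N ≤ S.pun ∧ S.pun ≤ C⁻¹ * Real.log S.d / S.N ∧
  C * S.m * S.P * Real.log ((S.T : ℝ) * S.d * S.N * S.m * S.P / S.delta) ≤ (S.N : ℝ)

/-- The noise-stability bound (NS) on learnable samples at iteration `t`. -/
def NS (t : ℕ) : Prop :=
  ∀ r : Fin S.m, ∀ i ∈ S.SL, ∀ j, j ≠ S.sig i →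
    |dot (S.w t r) (S.x i j)| ≤
      3 * S.sigma0 * S.sigman *
          Real.sqrt ((S.d : ℝ) * Real.log ((16 : ℝ) * S.N * S.m * S.P / S.delta)) +
        21 * S.pun * S.N * S.P * Real.log S.T ^ ((1 : ℝ) / 3) / Real.sqrt S.d *
          Real.sqrt (Real.log ((16 : ℝ) * S.N ^ 2 * S.P ^ 2 / S.delta))

/-- The signal-learning hitting time `T₀`. -/
def T0 (C0 : ℝ) : ℕ :=
  sInf {t : ℕ | ∃ r, C0 / (S.alpha * (S.m : ℝ) ^ ((1 : ℝ) / 3)) < S.wsig t r}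

/-- Maximum of the noise coefficients over unlearnable noise patches. -/
def rhoMaxSU (t : ℕ) : ℝ :=
  sSup {z : ℝ | ∃ r : Fin S.m, ∃ k ∈ S.SU, ∃ q, q ≠ S.sig k ∧ z = S.rho k q r t}

/-- Shifted noise coefficients `ρ̂_{i,j,r}^{(t)}`. -/
def rhoHat (i : Fin S.N) (j : Fin S.P) (r : Fin S.m) (t : ℕ) : ℝ :=
  S.rho i j r t + S.y i * dot (S.w 0 r) (S.x i j) / sqnorm (S.x i j)

/-- Maximum shifted noise coefficient over unlearnable noise patches. -/
def rhoHatMax (t : ℕ) : ℝ :=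
  sSup {z : ℝ | ∃ r : Fin S.m, ∃ k ∈ S.SU, ∃ q, q ≠ S.sig k ∧ z = S.rhoHat k q r t}

/-- The noise-memorization hitting time `T₁`. -/
def T1 (C1 : ℝ) : ℕ :=
  sInf {t : ℕ | C1 / (((S.m : ℝ) * S.P) ^ ((1 : ℝ) / 3) * S.sigman ^ 2 * S.d) < S.rhoHatMax t}

/-- The Good-Teacher horizon `T_max`. -/
def Tmax : ℝ :=
  S.N / (1000 * S.eta * S.m * S.P * S.sigma0 ^ 4 * S.sigman ^ 6 * (S.d : ℝ) ^ 3 *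
    Real.log ((16 : ℝ) * S.N * S.m * S.P / S.delta) ^ 2)

end Setting
/-- Law of the label: uniform on `{+1, −1}`. -/
def labelLaw : Measure ℝ :=
  ((2 : ℝ≥0∞)⁻¹ • Measure.dirac (1 : ℝ)) + ((2 : ℝ≥0∞)⁻¹ • Measure.dirac (-1 : ℝ))

/-- Law of a single coordinate of a noise patch: `N(0, σ_n²)` off the feature
subspace coordinates, `δ₀` on coordinates `1` and `d`. -/
def noiseCoordLaw (sigman : ℝ) (d : ℕ) (k : Fin d) : Measure ℝ :=
  if (k : ℕ) = 0 ∨ (k : ℕ) = d - 1 then Measure.dirac 0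
  else gaussianReal 0 ⟨sigman ^ 2, sq_nonneg _⟩

/-- Law of a noise patch: `N(0, σ_n²(I_d − Π_F))`. -/
def noisePatchLaw (sigman : ℝ) (d : ℕ) : Measure (Fin d → ℝ) :=
  Measure.pi (noiseCoordLaw sigman d)

/-- Uniform law of the signal-patch index. -/
def uniformPatch (P : ℕ) (hP : 0 < P) : Measure (Fin P) :=
  (@PMF.uniformOfFintype (Fin P) _ ⟨⟨0, hP⟩⟩).toMeasure

/-- The learnable test distribution `D_L`: uniform label, uniform signal-patch index,
signal patch `α y u`, independent Gaussian noise patches. -/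
def testLaw (alpha sigman : ℝ) (P d : ℕ) (hP : 0 < P) (hd : 0 < d) :
    Measure ((Fin P → Fin d → ℝ) × ℝ) :=
  Measure.map
    (fun z : ℝ × Fin P × (Fin P → Fin d → ℝ) =>
      (Function.update z.2.2 z.2.1 ((alpha * z.1) • e1 d hd), z.1))
    ((labelLaw).prod ((uniformPatch P hP).prod (Measure.pi fun _ : Fin P => noisePatchLaw sigman d)))

/-- Robust test error of the student at iteration `t` on the learnable test
distribution `D_L`. -/
def Setting.robErr (S : Setting) (t : ℕ) : ℝ≥0∞ :=
  testLaw S.alpha S.sigman S.P S.d S.hP S.hd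
    {Xy : (Fin S.P → Fin S.d → ℝ) × ℝ |
      ∃ Δ : Fin S.P → Fin S.d → ℝ, (∀ p k, |Δ p k| ≤ S.eps) ∧
        Xy.2 * netOut (S.w t) (fun p => Xy.1 p + Δ p) < 0}

/-!
Each signal or noise correlation `⟨w_r, x⟩`, scaled by its feature norm, satisfies a recursion whose
increment is essentially its own square times a logistic weight. The signal grows fastest, so the
learnable samples are fitted through it and their weights vanish while their noise correlations are
still small. A Bad Teacher keeps full weight on the unlearnable samples, where only the noise
patches can be used: their leading noise correlation obeys a discrete Riccati recursion, so it blows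
up until the sample is memorized. A memorized noise patch is then an adversarial direction: adding a
small multiple of it to a noise patch of a fresh test input shifts the output by more than the clean
margin, provided that the filters respond weakly to the test noise, which a second-moment bound
guarantees for at least half of the test distribution.
-/

/-! ### Scalar inequalities -/

lemma cube_le_cube {a b : ℝ} (h : a ≤ b) : a ^ 3 ≤ b ^ 3 :=
  (Odd.pow_le_pow (by decide : Odd 3)).2 h

lemma le_of_cube_le_cube {a b : ℝ} (h : a ^ 3 ≤ b ^ 3) : a ≤ b :=
  (Odd.pow_le_pow (by decide : Odd 3)).1 h

lemma psi_eq_sigmoid_neg (z : ℝ) : psi z = Real.sigmoid (-z) := by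
  rw [psi, Real.sigmoid_def, neg_neg, one_div]

lemma psi_pos (z : ℝ) : 0 < psi z :=
  psi_eq_sigmoid_neg z ▸ Real.sigmoid_pos _

lemma psi_le_one (z : ℝ) : psi z ≤ 1 :=
  psi_eq_sigmoid_neg z ▸ Real.sigmoid_le_one _

lemma psi_antitone : Antitone psi := fun a b h => by
  simp only [psi_eq_sigmoid_neg]
  exact Real.sigmoid_le (neg_le_neg h)

lemma psi_neg (z : ℝ) : psi (-z) = 1 - psi z := by
  rw [psi_eq_sigmoid_neg, psi_eq_sigmoid_neg, Real.sigmoid_neg]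

lemma psi_le_exp_neg (z : ℝ) : psi z ≤ Real.exp (-z) := by
  rw [psi, Real.exp_neg, ← one_div]
  exact one_div_le_one_div_of_le (Real.exp_pos z) (by linarith)

lemma half_exp_neg_le_psi {z : ℝ} (hz : 0 ≤ z) : Real.exp (-z) / 2 ≤ psi z := by
  rw [psi, Real.exp_neg, inv_eq_one_div, div_div]
  exact one_div_le_one_div_of_le (by positivity) (by linarith [Real.one_le_exp hz])

lemma exp_neg_two_le : Real.exp (-2) ≤ 1 / 4 := by
  rw [show (-2 : ℝ) = -1 + -1 by norm_num, Real.exp_add]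
  nlinarith [Real.exp_neg_one_lt_half, Real.exp_pos (-1)]

lemma one_eighth_le_exp_neg_two : 1 / 8 ≤ Real.exp (-2) := by
  have h : Real.exp 2 ≤ 8 := by
    rw [show (2 : ℝ) = 1 + 1 by norm_num, Real.exp_add]
    nlinarith [Real.exp_one_lt_d9, Real.exp_pos 1]
  rw [Real.exp_neg, ← one_div]
  exact one_div_le_one_div_of_le (Real.exp_pos 2) h

lemma quarter_exp_neg_le_psi_sub_psi {L M γ : ℝ} (hL : 0 ≤ L) (hM : M ≤ L) (hγ : L + 2 ≤ γ) :
    Real.exp (-L) / 4 ≤ psi M - psi γ := by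
  have hψM : Real.exp (-L) / 2 ≤ psi M := (half_exp_neg_le_psi hL).trans (psi_antitone hM)
  have hψγ : psi γ ≤ Real.exp (-L) * (1 / 4) :=
    calc psi γ ≤ Real.exp (-γ) := psi_le_exp_neg γ
      _ ≤ Real.exp (-L + -2) := Real.exp_le_exp.2 (by linarith)
      _ ≤ Real.exp (-L) * (1 / 4) := by rw [Real.exp_add]; gcongr; exact exp_neg_two_le
  linarith

lemma lloss_le_exp_neg (z : ℝ) : lloss z ≤ Real.exp (-z) := by
  rw [lloss, add_comm]
  exact (Real.log_le_sub_one_of_pos (by positivity)).trans_eq (add_sub_cancel_right _ _)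

lemma rpow_third_cube {a : ℝ} (ha : 0 ≤ a) : (a ^ ((1 : ℝ) / 3)) ^ 3 = a := by
  rw [← Real.rpow_natCast, ← Real.rpow_mul ha]; norm_num

section SumCubes

variable {ι : Type*} [Fintype ι] {f : ι → ℝ} {b : ℝ}

lemma sum_cube_le_card_mul (h : ∀ i, f i ≤ b) : ∑ i, f i ^ 3 ≤ Fintype.card ι * b ^ 3 := by
  simpa using sum_le_card_nsmul univ (fun i => f i ^ 3) (b ^ 3) fun i _ => cube_le_cube (h i)

lemma neg_card_mul_le_sum_cube (h : ∀ i, -b ≤ f i) :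
    -(Fintype.card ι * b ^ 3) ≤ ∑ i, f i ^ 3 := by
  have hneg := sum_cube_le_card_mul (f := fun i => -f i) fun i => neg_le.1 (h i)
  simp only [Odd.neg_pow (by decide : Odd 3), sum_neg_distrib] at hneg
  linarith

lemma cube_sub_card_mul_le_sum_cube (hb : 0 ≤ b) (h : ∀ i, -b ≤ f i) (i : ι) :
    f i ^ 3 - Fintype.card ι * b ^ 3 ≤ ∑ i, f i ^ 3 := by
  classical
  have hupdate := neg_card_mul_le_sum_cube (f := Function.update f i 0) (b := b) fun j => by
    rcases eq_or_ne j i with rfl | hj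
    · simpa using hb
    · simpa [hj] using h j
  have hsum : ∑ j, Function.update f i 0 j ^ 3 = ∑ j ∈ univ.erase i, f j ^ 3 := by
    rw [← add_sum_erase _ _ (mem_univ i)]
    simp only [Function.update_self, ne_eq, OfNat.ofNat_ne_zero, not_false_eq_true, zero_pow,
      zero_add]
    exact sum_congr rfl fun j hj => by rw [Function.update_of_ne (ne_of_mem_erase hj)]
  rw [hsum] at hupdate
  rw [← add_sum_erase _ _ (mem_univ i)]
  linarith

lemma exists_inv_card_lt_of_one_lt_sum_cube (h : 1 < ∑ i, f i ^ 3) :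
    ∃ i, (Fintype.card ι : ℝ)⁻¹ < f i := by
  by_contra! hle
  have hcard : (Fintype.card ι : ℝ) * (Fintype.card ι : ℝ)⁻¹ ^ 3 ≤ 1 := by
    rcases (Fintype.card ι).eq_zero_or_pos with h0 | hpos
    · simp [h0]
    · have hle1 : (Fintype.card ι : ℝ)⁻¹ ≤ 1 := inv_le_one_of_one_le₀ (by exact_mod_cast hpos)
      rw [pow_succ', mul_inv_cancel_left₀ (by positivity)]
      exact pow_le_one₀ (by positivity) hle1
  linarith [sum_cube_le_card_mul hle]

end SumCubes

/-- The Riccati potential `2 / u` drops by at least `c n` in step `n`. -/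
lemma sum_rate_le {u c : ℕ → ℝ} {t : ℕ} (hu0 : 0 < u 0) (hc : ∀ n < t, 0 ≤ c n)
    (hcu : ∀ n < t, c n * u n ≤ 1) (hstep : ∀ n < t, u n + c n * u n ^ 2 ≤ u (n + 1)) :
    ∑ n ∈ range t, c n ≤ 2 / u 0 := by
  have hpos : ∀ n ≤ t, 0 < u n := by
    intro n
    induction n with
    | zero => exact fun _ => hu0
    | succ n ih =>
      intro hn
      have hun := ih (by omega)
      have hcn := hc n hn
      exact lt_of_lt_of_le (by positivity) (hstep n hn)
  have hdrop : ∀ n < t, c n ≤ 2 / u n - 2 / u (n + 1) := by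
    intro n hn
    have hun := hpos n hn.le
    have hcn := hc n hn
    calc c n ≤ 2 * c n / (1 + c n * u n) := by
          rw [le_div_iff₀ (by positivity)]; nlinarith [hcu n hn]
      _ = 2 / u n - 2 / (u n + c n * u n ^ 2) := by field_simp; ring
      _ ≤ 2 / u n - 2 / u (n + 1) := by gcongr; exact hstep n hn
  calc ∑ n ∈ range t, c n ≤ ∑ n ∈ range t, (2 / u n - 2 / u (n + 1)) :=
        sum_le_sum fun n hn => hdrop n (mem_range.1 hn)
    _ = 2 / u 0 - 2 / u t := sum_range_sub' _ _
    _ ≤ 2 / u 0 := sub_le_self _ (by have := hpos t le_rfl; positivity)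

lemma saturated_step {x δ b : ℝ} {t T : ℕ} (hx : x ≤ b + 1 + t / T) (hδ : δ ≤ 1)
    (hsat : b < x → δ ≤ 1 / T) : x + δ ≤ b + 1 + (t + 1 : ℕ) / T := by
  have hsplit : ((t + 1 : ℕ) : ℝ) / T = t / T + 1 / T := by push_cast; ring
  rw [hsplit]
  rcases le_or_gt x b with hxb | hxb
  · have : 0 ≤ (t : ℝ) / T + 1 / T := by positivity
    linarith
  · linarith [hsat hxb]

/-! ### Normalized dynamics -/

/-- The state of adversarial distillation in normalized coordinates, indexed by sample/patch pairs
`z` and filters `a`. Signal patches are kept in the index set, with all their noise data zero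
(except the self-correlation, set to `1`), so that every sum runs over a product type. -/
structure Dynamics (N m P : ℕ) where
  /-- The learnable samples. -/
  learnable : Finset (Fin N)
  /-- The signal coordinate of each filter, in units of `1 / α`. -/
  signal : ℕ → Fin m → ℝ
  /-- The noise coefficients `ρ`, in units of the squared noise norm. -/
  coef : ℕ → Fin N × Fin P → Fin m → ℝ
  /-- The label-aligned correlations between noise patches and filters at initialization. -/
  initCorr : Fin N × Fin P → Fin m → ℝ
  /-- The label-signed Gram matrix of the noise patches, with diagonal of order one. -/
  gram : Fin N × Fin P → Fin N × Fin P → ℝ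
  /-- The cube of the fraction of the signal that the attack leaves in each sample. -/
  strength : ℕ → Fin N → ℝ
  /-- The label-aligned teacher logits. -/
  teacher : Fin N → ℝ
  /-- The learning rate of the signal coordinates. -/
  ηs : ℝ
  /-- The learning rate of the noise coefficients. -/
  ηn : ℝ

namespace Dynamics

variable {N m P : ℕ} (D : Dynamics N m P)

/-- The label-aligned correlation of noise patch `z` with filter `a`. -/
def corr (t : ℕ) (z : Fin N × Fin P) (a : Fin m) : ℝ :=
  D.initCorr z a + ∑ z', D.coef t z' a * D.gram z' z

/-- The part of `corr` that does not involve the other noise patches (the paper's `ρ̂`). -/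
def shifted (t : ℕ) (z : Fin N × Fin P) (a : Fin m) : ℝ :=
  D.initCorr z a + D.coef t z a * D.gram z z

/-- The student's response to an unattacked signal patch. -/
def signalMass (t : ℕ) : ℝ := ∑ a, D.signal t a ^ 3

/-- The student's label-aligned response to the noise patches of sample `i`. -/
def noiseMass (t : ℕ) (i : Fin N) : ℝ := ∑ x : Fin m × Fin P, D.corr t (i, x.2) x.1 ^ 3

/-- The adversarial margin of sample `i`. -/
def margin (t : ℕ) (i : Fin N) : ℝ := D.strength t i * D.signalMass t + D.noiseMass t i

/-- The weight of sample `i` in the distillation gradient. -/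
def weight (t : ℕ) (i : Fin N) : ℝ := psi (D.margin t i) - psi (D.teacher i)

/-- The common growth rate of the signal coordinates. -/
def growth (t : ℕ) : ℝ := D.ηs / N * ∑ i, D.weight t i * D.strength t i

end Dynamics

/-- Normalized adversarial distillation under a Bad Teacher: the update rules, the concentration
bounds inherited from the event `E`, and the parameter inequalities inherited from Condition (H).
Here `κ` bounds the off-diagonal Gram entries, `ν` is the scale of the initial noise correlations
and `ℓ` a logarithmic factor. -/
structure BadTeacherDynamics (N m P T : ℕ) extends Dynamics N m P where
  κ : ℝ
  ν : ℝ
  ℓ : ℝ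
  sLow : ℝ
  sHigh : ℝ
  Γ : ℝ
  coef_zero : ∀ z a, coef 0 z a = 0
  coef_succ : ∀ t z a, coef (t + 1) z a =
    coef t z a + ηn / N * toDynamics.weight t z.1 * toDynamics.corr t z a ^ 2
  signal_succ : ∀ t a, signal (t + 1) a = signal t a + toDynamics.growth t * signal t a ^ 2
  le_teacher : ∀ i, Γ ≤ teacher i
  strength_mem : ∀ t, ∀ i ∈ learnable, strength t i ∈ Set.Icc (1 / 8 : ℝ) 1
  strength_eq_zero : ∀ t, ∀ i ∉ learnable, strength t i = 0
  gram_self_mem : ∀ z, gram z z ∈ Set.Icc (1 / 2 : ℝ) (3 / 2)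
  abs_gram_le : ∀ z z', z ≠ z' → |gram z z'| ≤ κ
  abs_initCorr_le : ∀ z a, |initCorr z a| ≤ 4 * ν * ℓ
  exists_le_initCorr : ∃ z a, z.1 ∉ learnable ∧ ν / 4 ≤ initCorr z a
  abs_signal_zero_le : ∀ a, |signal 0 a| ≤ sHigh
  exists_le_signal_zero : ∃ a, sLow ≤ signal 0 a
  one_le_ℓ : 1 ≤ ℓ
  log_T_le : Real.log T ≤ ℓ ^ 2
  κ_nonneg : 0 ≤ κ
  κ_small : κ * N * P * m * ℓ ≤ 1 / 10 ^ 6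
  ν_pos : 0 < ν
  ν_small : ν * N * P * m * ℓ ≤ 1 / 10 ^ 6
  sLow_pos : 0 < sLow
  sHigh_le_one : sHigh ≤ 1
  sHigh_small : m * sHigh ^ 3 ≤ 1 / 4
  ηs_pos : 0 < ηs
  ηs_small : ηs * ℓ ^ 2 ≤ 1 / 10 ^ 6
  ηn_pos : 0 < ηn
  ηn_small : ηn * ℓ ^ 2 ≤ 1 / 10 ^ 6
  noise_small : 1728 * (m ^ 2 * P * (4 * ν * ℓ + 12 * (κ * N * P * ℓ)) ^ 3) ≤ 1
  card_unlearnable_le : (learnableᶜ.card : ℝ) ≤ ℓ ^ 2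
  card_unlearnable_le_N : 64 * (learnableᶜ.card : ℝ) ≤ N
  le_Γ : 700 * (m * P * ℓ ^ 3) + 10 ≤ Γ
  signal_faster_early : 10 ^ 5 * (ηn * ν * ℓ ^ 2) ≤ ηs * sLow * N
  signal_faster_late : ηn * ℓ ^ 3 ≤ ηs * N
  horizon : 1000 * N < T * ηn * ν

namespace BadTeacherDynamics

variable {N m P T : ℕ} (D : BadTeacherDynamics N m P T)

section Parameters

include D

lemma one_le_N : (1 : ℝ) ≤ N := by
  obtain ⟨z, -⟩ := D.exists_le_initCorr
  exact_mod_cast z.1.pos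

lemma one_le_P : (1 : ℝ) ≤ P := by
  obtain ⟨z, -⟩ := D.exists_le_initCorr
  exact_mod_cast z.2.pos

lemma one_le_m : (1 : ℝ) ≤ m := by
  obtain ⟨-, a, -⟩ := D.exists_le_initCorr
  exact_mod_cast a.pos

lemma T_pos : (0 : ℝ) < T := by
  by_contra! h
  have hN := D.one_le_N
  have hην := mul_pos D.ηn_pos D.ν_pos
  nlinarith [D.horizon, mul_nonneg (sub_nonneg.2 h) hην.le]

lemma ℓ_pos : 0 < D.ℓ := one_pos.trans_le D.one_le_ℓ

lemma sHigh_nonneg : 0 ≤ D.sHigh := by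
  obtain ⟨a, -⟩ := D.exists_le_signal_zero
  exact (abs_nonneg _).trans (D.abs_signal_zero_le a)

lemma κ_mul_ℓ_le : D.κ * N * P * D.ℓ ≤ 1 / 10 ^ 6 := by
  have hκ := D.κ_nonneg
  have hℓ := D.ℓ_pos
  calc D.κ * N * P * D.ℓ ≤ D.κ * N * P * D.ℓ * m :=
        le_mul_of_one_le_right (by positivity) D.one_le_m
    _ = D.κ * N * P * m * D.ℓ := by ring
    _ ≤ 1 / 10 ^ 6 := D.κ_small

lemma κ_mul_le : D.κ * N * P ≤ 1 / 10 ^ 6 := by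
  have hκ := D.κ_nonneg
  exact (le_mul_of_one_le_right (by positivity) D.one_le_ℓ).trans D.κ_mul_ℓ_le

lemma ν_mul_ℓ_le : D.ν * D.ℓ ≤ 1 / 10 ^ 6 := by
  have hν := D.ν_pos
  have hℓ := D.ℓ_pos
  have hNPm : 1 ≤ (N : ℝ) * P * m :=
    one_le_mul_of_one_le_of_one_le
      (one_le_mul_of_one_le_of_one_le D.one_le_N D.one_le_P) D.one_le_m
  calc D.ν * D.ℓ ≤ D.ν * D.ℓ * (N * P * m) := le_mul_of_one_le_right (by positivity) hNPm
    _ = D.ν * N * P * m * D.ℓ := by ring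
    _ ≤ 1 / 10 ^ 6 := D.ν_small

lemma exp_neg_le_inv_T {x : ℝ} (hx : D.ℓ ^ 2 ≤ x) : Real.exp (-x) ≤ 1 / T := by
  calc Real.exp (-x) ≤ Real.exp (-Real.log T) := Real.exp_le_exp.2 (by linarith [D.log_T_le])
    _ = 1 / T := by rw [Real.exp_neg, Real.exp_log D.T_pos, one_div]

end Parameters

/-- The error up to which a noise correlation is determined by its own coefficient. -/
def τ : ℝ := 4 * D.ν * D.ℓ + 12 * (D.κ * N * P * D.ℓ)

lemma τ_nonneg : 0 ≤ D.τ := by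
  have := D.κ_nonneg
  have := D.ν_pos
  have := D.ℓ_pos
  unfold τ
  positivity

lemma τ_le : D.τ ≤ 1 / 10 := by
  unfold τ
  linarith [D.ν_mul_ℓ_le, D.κ_mul_ℓ_le]

lemma card_mul_τ_cube_le : 1728 * (m * P * D.τ ^ 3) ≤ 1 := by
  have := D.τ_nonneg
  have hm := D.one_le_m
  calc 1728 * (m * P * D.τ ^ 3) ≤ 1728 * (m * P * D.τ ^ 3) * m :=
        le_mul_of_one_le_right (by positivity) hm
    _ = 1728 * (m ^ 2 * P * D.τ ^ 3) := by ring
    _ ≤ 1 := D.noise_small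

lemma gram_self_pos (z : Fin N × Fin P) : 0 < D.gram z z := by
  linarith [(D.gram_self_mem z).1]

lemma abs_corr_sub_shifted_le {t : ℕ} {a : Fin m} (hcoef : ∀ z, 0 ≤ D.coef t z a)
    (z : Fin N × Fin P) : |D.corr t z a - D.shifted t z a| ≤ D.κ * ∑ z', D.coef t z' a := by
  have hcross : D.corr t z a - D.shifted t z a =
      ∑ z' ∈ univ.erase z, D.coef t z' a * D.gram z' z := by
    rw [Dynamics.corr, Dynamics.shifted, ← add_sum_erase _ _ (mem_univ z)]
    ring
  calc |D.corr t z a - D.shifted t z a|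
      ≤ ∑ z' ∈ univ.erase z, |D.coef t z' a * D.gram z' z| := hcross ▸ abs_sum_le_sum_abs _ _
    _ ≤ ∑ z' ∈ univ.erase z, D.κ * D.coef t z' a := sum_le_sum fun z' hz' => by
        rw [abs_mul, abs_of_nonneg (hcoef z'), mul_comm]
        exact mul_le_mul_of_nonneg_right (D.abs_gram_le _ _ (ne_of_mem_erase hz')) (hcoef z')
    _ ≤ ∑ z', D.κ * D.coef t z' a :=
        sum_le_sum_of_subset_of_nonneg (erase_subset _ _) fun z' _ _ =>
          mul_nonneg D.κ_nonneg (hcoef z')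
    _ = D.κ * ∑ z', D.coef t z' a := (mul_sum _ _ _).symm

lemma weight_le_exp_neg (t : ℕ) (i : Fin N) : D.weight t i ≤ Real.exp (-D.margin t i) :=
  (sub_le_self _ (psi_pos _).le).trans (psi_le_exp_neg _)

lemma weight_le_one (t : ℕ) (i : Fin N) : D.weight t i ≤ 1 :=
  (sub_le_self _ (psi_pos _).le).trans (psi_le_one _)

lemma le_weight {t : ℕ} {i : Fin N} {L : ℝ} (hL : 0 ≤ L) (hLΓ : L + 2 ≤ D.Γ)
    (hM : D.margin t i ≤ L) : Real.exp (-L) / 4 ≤ D.weight t i :=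
  quarter_exp_neg_le_psi_sub_psi hL hM (hLΓ.trans (D.le_teacher i))

lemma strength_mul_signalMass_le {t : ℕ} {S : ℝ} (hS : 0 ≤ S) (hmass : D.signalMass t ≤ S)
    (i : Fin N) : D.strength t i * D.signalMass t ≤ S := by
  by_cases hi : i ∈ D.learnable
  · obtain ⟨h0, h1⟩ := D.strength_mem t i hi
    nlinarith
  · rw [D.strength_eq_zero t i hi]; linarith

lemma noiseMass_le {t : ℕ} {i : Fin N} {b : ℝ} (hcorr : ∀ j a, D.corr t (i, j) a ≤ b) :
    D.noiseMass t i ≤ m * P * b ^ 3 := by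
  simpa [Dynamics.noiseMass] using sum_cube_le_card_mul fun x : Fin m × Fin P => hcorr x.2 x.1

lemma growth_eq (t : ℕ) :
    D.growth t = D.ηs / N * ∑ i ∈ D.learnable, D.weight t i * D.strength t i := by
  rw [Dynamics.growth]
  congr 1
  exact (sum_subset (subset_univ _) fun i _ hi => by rw [D.strength_eq_zero t i hi, mul_zero]).symm

lemma growth_le {t : ℕ} {c : ℝ} (hc : 0 ≤ c) (hw : ∀ i ∈ D.learnable, D.weight t i ≤ c) :
    D.growth t ≤ D.ηs * c := by
  have hN := D.one_le_N
  have hηs := D.ηs_pos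
  have hsum : ∑ i ∈ D.learnable, D.weight t i * D.strength t i ≤ N * c := by
    calc ∑ i ∈ D.learnable, D.weight t i * D.strength t i
        ≤ ∑ _i ∈ D.learnable, c := sum_le_sum fun i hi => by
          obtain ⟨h0, h1⟩ := D.strength_mem t i hi
          nlinarith [hw i hi]
      _ = D.learnable.card * c := by rw [sum_const, nsmul_eq_mul]
      _ ≤ N * c := by
          gcongr
          exact_mod_cast card_finset_fin_le D.learnable
  calc D.growth t ≤ D.ηs / N * (N * c) := by rw [growth_eq]; gcongr
    _ = D.ηs * c := by field_simp

lemma growth_nonneg {t : ℕ} (hw : ∀ i, 0 ≤ D.weight t i) : 0 ≤ D.growth t := by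
  have hηs := D.ηs_pos
  rw [growth_eq]
  refine mul_nonneg (by positivity) (sum_nonneg fun i hi => mul_nonneg (hw i) ?_)
  linarith [(D.strength_mem t i hi).1]

/-- The a priori bounds: no quantity exceeds a logarithm, because the weight of a sample is at most
`1 / T` once its margin exceeds `log T`. -/
structure CrudeBounds (t : ℕ) : Prop where
  le_horizon : t ≤ T
  signal_zero_le : ∀ a, D.signal 0 a ≤ D.signal t a
  signal_le_add_div : ∀ a, D.signal t a ≤ 4 * D.ℓ + 1 + t / T
  coef_nonneg : ∀ z a, 0 ≤ D.coef t z a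
  coef_mul_gram_le : ∀ z a, D.coef t z a * D.gram z z ≤ 4 * D.ℓ + 1 + t / T

namespace CrudeBounds

variable {D} {t : ℕ} (h : D.CrudeBounds t)

include h

lemma time_div_le : (t : ℝ) / T ≤ 1 :=
  div_le_one_of_le₀ (by exact_mod_cast h.le_horizon) D.T_pos.le

lemma signal_le (a : Fin m) : D.signal t a ≤ 6 * D.ℓ := by
  linarith [h.signal_le_add_div a, h.time_div_le, D.one_le_ℓ]

lemma neg_sHigh_le_signal (a : Fin m) : -D.sHigh ≤ D.signal t a := by
  linarith [h.signal_zero_le a, (abs_le.1 (D.abs_signal_zero_le a)).1]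

lemma coef_le (z : Fin N × Fin P) (a : Fin m) : D.coef t z a ≤ 12 * D.ℓ := by
  nlinarith [h.coef_mul_gram_le z a, h.time_div_le, D.one_le_ℓ, h.coef_nonneg z a,
    (D.gram_self_mem z).1]

lemma abs_corr_sub_le (z : Fin N × Fin P) (a : Fin m) :
    |D.corr t z a - D.coef t z a * D.gram z z| ≤ D.τ := by
  have hsum : ∑ z', D.coef t z' a ≤ N * P * (12 * D.ℓ) := by
    simpa using sum_le_card_nsmul univ (fun z' => D.coef t z' a) _ fun z' _ => h.coef_le z' a
  calc |D.corr t z a - D.coef t z a * D.gram z z|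
      = |D.initCorr z a + (D.corr t z a - D.shifted t z a)| := by
        rw [Dynamics.shifted]; ring_nf
    _ ≤ |D.initCorr z a| + |D.corr t z a - D.shifted t z a| := abs_add_le _ _
    _ ≤ 4 * D.ν * D.ℓ + D.κ * (N * P * (12 * D.ℓ)) :=
        add_le_add (D.abs_initCorr_le z a)
          ((D.abs_corr_sub_shifted_le (fun z => h.coef_nonneg z a) z).trans
            (mul_le_mul_of_nonneg_left hsum D.κ_nonneg))
    _ = D.τ := by rw [τ]; ring

lemma neg_τ_le_corr (z : Fin N × Fin P) (a : Fin m) : -D.τ ≤ D.corr t z a := by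
  linarith [(abs_le.1 (h.abs_corr_sub_le z a)).1,
    mul_nonneg (h.coef_nonneg z a) (D.gram_self_pos z).le]

lemma corr_le (z : Fin N × Fin P) (a : Fin m) : D.corr t z a ≤ 7 * D.ℓ := by
  linarith [(abs_le.1 (h.abs_corr_sub_le z a)).2, h.coef_mul_gram_le z a, h.time_div_le, D.τ_le,
    D.one_le_ℓ]

lemma corr_cube_sub_le_noiseMass (z : Fin N × Fin P) (a : Fin m) :
    D.corr t z a ^ 3 - 1 / 1728 ≤ D.noiseMass t z.1 := by
  have hle := cube_sub_card_mul_le_sum_cube (f := fun x : Fin m × Fin P => D.corr t (z.1, x.2) x.1)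
    D.τ_nonneg (fun x => h.neg_τ_le_corr _ _) (a, z.2)
  simp only [Fintype.card_prod, Fintype.card_fin, Nat.cast_mul] at hle
  rw [Dynamics.noiseMass]
  linarith [D.card_mul_τ_cube_le]

lemma le_noiseMass (i : Fin N) : -(1 / 1728) ≤ D.noiseMass t i := by
  have hle := neg_card_mul_le_sum_cube (f := fun x : Fin m × Fin P => D.corr t (i, x.2) x.1)
    fun x => h.neg_τ_le_corr _ _
  simp only [Fintype.card_prod, Fintype.card_fin, Nat.cast_mul] at hle
  rw [Dynamics.noiseMass]
  linarith [D.card_mul_τ_cube_le]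

lemma neg_quarter_le_signalMass : -(1 / 4) ≤ D.signalMass t := by
  have hle := neg_card_mul_le_sum_cube h.neg_sHigh_le_signal
  rw [Fintype.card_fin] at hle
  rw [Dynamics.signalMass]
  linarith [D.sHigh_small]

lemma signal_cube_sub_le_signalMass (a : Fin m) :
    D.signal t a ^ 3 - 1 / 4 ≤ D.signalMass t := by
  have hle := cube_sub_card_mul_le_sum_cube D.sHigh_nonneg h.neg_sHigh_le_signal a
  rw [Fintype.card_fin] at hle
  rw [Dynamics.signalMass]
  linarith [D.sHigh_small]

lemma le_strength_mul_signalMass (i : Fin N) :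
    -(1 / 4) ≤ D.strength t i * D.signalMass t := by
  have hS := h.neg_quarter_le_signalMass
  by_cases hi : i ∈ D.learnable
  · obtain ⟨h0, h1⟩ := D.strength_mem t i hi
    nlinarith
  · rw [D.strength_eq_zero t i hi]; linarith

lemma neg_one_le_margin (i : Fin N) : -1 ≤ D.margin t i := by
  rw [Dynamics.margin]
  linarith [h.le_strength_mul_signalMass i, h.le_noiseMass i]

lemma corr_cube_sub_one_le_margin (z : Fin N × Fin P) (a : Fin m) :
    D.corr t z a ^ 3 - 1 ≤ D.margin t z.1 := by
  rw [Dynamics.margin]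
  linarith [h.le_strength_mul_signalMass z.1, h.corr_cube_sub_le_noiseMass z a]

lemma signalMass_div_sub_le_margin {i : Fin N} (hi : i ∈ D.learnable) :
    D.signalMass t / 8 - 1 / 2 ≤ D.margin t i := by
  obtain ⟨h0, h1⟩ := D.strength_mem t i hi
  rw [Dynamics.margin]
  nlinarith [h.le_noiseMass i, h.neg_quarter_le_signalMass]

lemma signalMass_le : D.signalMass t ≤ m * (6 * D.ℓ) ^ 3 := by
  simpa [Dynamics.signalMass] using sum_cube_le_card_mul h.signal_le

lemma margin_le_Γ (i : Fin N) : D.margin t i ≤ D.Γ := by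
  have hℓ := D.ℓ_pos
  have hstrength := D.strength_mul_signalMass_le (by positivity) h.signalMass_le i
  have hnoise := D.noiseMass_le fun j a => h.corr_le (i, j) a
  have hmP : (m : ℝ) * D.ℓ ^ 3 ≤ m * P * D.ℓ ^ 3 := by
    gcongr
    exact le_mul_of_one_le_right (by positivity) D.one_le_P
  have hmP0 : 0 ≤ (m : ℝ) * P * D.ℓ ^ 3 := by positivity
  rw [Dynamics.margin]
  linarith [D.le_Γ]

lemma weight_nonneg (i : Fin N) : 0 ≤ D.weight t i :=
  sub_nonneg.2 (psi_antitone ((h.margin_le_Γ i).trans (D.le_teacher i)))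

lemma growth_nonneg : 0 ≤ D.growth t :=
  BadTeacherDynamics.growth_nonneg D h.weight_nonneg

lemma growth_mul_signal_sq_nonneg (a : Fin m) : 0 ≤ D.growth t * D.signal t a ^ 2 :=
  mul_nonneg h.growth_nonneg (sq_nonneg _)

lemma signal_le_succ (a : Fin m) : D.signal t a ≤ D.signal (t + 1) a := by
  rw [D.signal_succ]
  exact le_add_of_nonneg_right (h.growth_mul_signal_sq_nonneg a)

lemma coef_le_succ (z : Fin N × Fin P) (a : Fin m) : D.coef t z a ≤ D.coef (t + 1) z a := by
  rw [D.coef_succ]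
  have := h.weight_nonneg z.1
  have := D.ηn_pos
  exact le_add_of_nonneg_right (by positivity)

lemma growth_mul_signal_sq_le {c : ℝ} (hc : 0 ≤ c) (hw : ∀ i ∈ D.learnable, D.weight t i ≤ c)
    (a : Fin m) : D.growth t * D.signal t a ^ 2 ≤ c := by
  have hηs := D.ηs_pos
  have hsq : D.signal t a ^ 2 ≤ 36 * D.ℓ ^ 2 := by
    nlinarith [h.signal_le a, h.neg_sHigh_le_signal a, D.sHigh_le_one, D.one_le_ℓ]
  calc D.growth t * D.signal t a ^ 2 ≤ D.ηs * c * (36 * D.ℓ ^ 2) := by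
        gcongr
        exact D.growth_le hc hw
    _ = c * (36 * (D.ηs * D.ℓ ^ 2)) := by ring
    _ ≤ c := mul_le_of_le_one_right hc (by linarith [D.ηs_small])

lemma coef_increment_le (z : Fin N × Fin P) (a : Fin m) :
    D.ηn / N * D.weight t z.1 * D.corr t z a ^ 2 * D.gram z z ≤ D.weight t z.1 := by
  have hw := h.weight_nonneg z.1
  have hηn := D.ηn_pos
  have hgram := D.gram_self_pos z
  have hsq : D.corr t z a ^ 2 ≤ 49 * D.ℓ ^ 2 := by
    nlinarith [h.corr_le z a, h.neg_τ_le_corr z a, D.τ_le, D.one_le_ℓ]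
  calc D.ηn / N * D.weight t z.1 * D.corr t z a ^ 2 * D.gram z z
      ≤ D.ηn / 1 * D.weight t z.1 * (49 * D.ℓ ^ 2) * (3 / 2) := by
        gcongr
        · exact D.one_le_N
        · exact (D.gram_self_mem z).2
    _ = D.weight t z.1 * (49 * 3 / 2 * (D.ηn * D.ℓ ^ 2)) := by ring
    _ ≤ D.weight t z.1 := mul_le_of_le_one_right hw (by linarith [D.ηn_small])

lemma weight_le_inv_T_of_lt_signal {a : Fin m} (ha : 4 * D.ℓ < D.signal t a) {i : Fin N}
    (hi : i ∈ D.learnable) : D.weight t i ≤ 1 / T := by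
  refine (D.weight_le_exp_neg t i).trans (D.exp_neg_le_inv_T ?_)
  have hℓ := D.one_le_ℓ
  have hcube : (4 * D.ℓ) ^ 3 ≤ D.signal t a ^ 3 := cube_le_cube ha.le
  have hℓ3 : D.ℓ ^ 2 ≤ D.ℓ ^ 3 := pow_le_pow_right₀ hℓ (by norm_num)
  have hℓ2 : 1 ≤ D.ℓ ^ 2 := one_le_pow₀ hℓ
  nlinarith [h.signalMass_div_sub_le_margin hi, h.signal_cube_sub_le_signalMass a]

lemma weight_le_inv_T_of_lt_coef {z : Fin N × Fin P} {a : Fin m}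
    (hz : 4 * D.ℓ < D.coef t z a * D.gram z z) : D.weight t z.1 ≤ 1 / T := by
  refine (D.weight_le_exp_neg t z.1).trans (D.exp_neg_le_inv_T ?_)
  have hℓ := D.one_le_ℓ
  have hcorr : 3 * D.ℓ ≤ D.corr t z a := by
    linarith [(abs_le.1 (h.abs_corr_sub_le z a)).1, D.τ_le]
  have hcube : (3 * D.ℓ) ^ 3 ≤ D.corr t z a ^ 3 := cube_le_cube hcorr
  have hℓ3 : D.ℓ ^ 2 ≤ D.ℓ ^ 3 := pow_le_pow_right₀ hℓ (by norm_num)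
  have hℓ2 : 1 ≤ D.ℓ ^ 2 := one_le_pow₀ hℓ
  nlinarith [h.corr_cube_sub_one_le_margin z a]

lemma succ (ht : t + 1 ≤ T) : D.CrudeBounds (t + 1) where
  le_horizon := ht
  signal_zero_le a := (h.signal_zero_le a).trans (h.signal_le_succ a)
  signal_le_add_div a := by
    rw [D.signal_succ]
    refine saturated_step (h.signal_le_add_div a)
      (h.growth_mul_signal_sq_le zero_le_one (fun i _ => D.weight_le_one t i) a) fun hsat => ?_
    exact h.growth_mul_signal_sq_le (by positivity) (fun i => h.weight_le_inv_T_of_lt_signal hsat) a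
  coef_nonneg z a := (h.coef_nonneg z a).trans (h.coef_le_succ z a)
  coef_mul_gram_le z a := by
    rw [D.coef_succ, add_mul]
    refine saturated_step (h.coef_mul_gram_le z a)
      ((h.coef_increment_le z a).trans (D.weight_le_one t z.1)) fun hsat => ?_
    exact (h.coef_increment_le z a).trans (h.weight_le_inv_T_of_lt_coef hsat)

end CrudeBounds

theorem crudeBounds {t : ℕ} (ht : t ≤ T) : D.CrudeBounds t := by
  induction t with
  | zero =>
    have hℓ := D.one_le_ℓ
    refine ⟨ht, fun _ => le_rfl, fun a => ?_, fun z a => (D.coef_zero z a).ge, fun z a => ?_⟩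
    · rw [Nat.cast_zero, zero_div]
      linarith [le_of_abs_le (D.abs_signal_zero_le a), D.sHigh_le_one]
    · rw [D.coef_zero, Nat.cast_zero, zero_div]
      linarith
  | succ t ih => exact (ih (by omega)).succ ht

lemma signal_mono (a : Fin m) : MonotoneOn (fun t => D.signal t a) (Set.Iic T) :=
  monotoneOn_of_le_succ Set.ordConnected_Iic fun _ _ ht _ =>
    (D.crudeBounds ht).signal_le_succ a

lemma coef_mono (z : Fin N × Fin P) (a : Fin m) :
    MonotoneOn (fun t => D.coef t z a) (Set.Iic T) :=
  monotoneOn_of_le_succ Set.ordConnected_Iic fun _ _ ht _ =>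
    (D.crudeBounds ht).coef_le_succ z a

lemma signalMass_mono : MonotoneOn D.signalMass (Set.Iic T) := fun _ hs _ ht hst =>
  sum_le_sum fun a _ => cube_le_cube (D.signal_mono a hs ht hst)

end BadTeacherDynamics

/-! ### Growth of the signal -/

namespace BadTeacherDynamics

variable {N m P T : ℕ} (D : BadTeacherDynamics N m P T) {t : ℕ}

lemma le_growth {c : ℝ} (hc : 0 ≤ c) (hw : ∀ i ∈ D.learnable, c ≤ D.weight t i) :
    D.ηs * c / 16 ≤ D.growth t := by
  have hN := D.one_le_N
  have hηs := D.ηs_pos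
  have hcard : (D.learnable.card : ℝ) + (D.learnableᶜ.card : ℝ) = N := by
    exact_mod_cast (card_add_card_compl D.learnable).trans (Fintype.card_fin N)
  have hsum : N / 2 * (c / 8) ≤ ∑ i ∈ D.learnable, D.weight t i * D.strength t i := by
    calc N / 2 * (c / 8) ≤ D.learnable.card * (c / 8) := by
          gcongr; linarith [D.card_unlearnable_le_N]
      _ = ∑ _i ∈ D.learnable, c / 8 := by rw [sum_const, nsmul_eq_mul]
      _ ≤ _ := sum_le_sum fun i hi => by nlinarith [(D.strength_mem t i hi).1, hw i hi]
  calc D.ηs * c / 16 = D.ηs / N * (N / 2 * (c / 8)) := by field_simp; ring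
    _ ≤ D.growth t := by rw [growth_eq]; gcongr

lemma sum_weight_le_growth (ht : t ≤ T) :
    D.ηs / N * (1 / 8) * ∑ i ∈ D.learnable, D.weight t i ≤ D.growth t := by
  have hηs := D.ηs_pos
  rw [growth_eq, mul_assoc, mul_sum]
  refine mul_le_mul_of_nonneg_left (sum_le_sum fun i hi => ?_) (by positivity)
  nlinarith [(D.crudeBounds ht).weight_nonneg i, (D.strength_mem t i hi).1]

lemma growth_mul_signal_le_one (ht : t ≤ T) (a : Fin m) : D.growth t * D.signal t a ≤ 1 := by
  have hgrowth := (D.crudeBounds ht).growth_nonneg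
  have hℓ := D.ℓ_pos
  calc D.growth t * D.signal t a ≤ D.growth t * (6 * D.ℓ) := by
        gcongr
        exact (D.crudeBounds ht).signal_le a
    _ ≤ D.ηs * 1 * (6 * D.ℓ) := by
        gcongr
        exact D.growth_le zero_le_one fun i _ => D.weight_le_one t i
    _ ≤ 1 := by nlinarith [D.ηs_small, D.one_le_ℓ]

lemma sum_growth_Ico_le {s : ℕ} (hst : s ≤ t) (ht : t ≤ T) {a : Fin m} (ha : 0 < D.signal s a) :
    ∑ n ∈ Ico s t, D.growth n ≤ 2 / D.signal s a := by
  rw [sum_Ico_eq_sum_range]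
  exact sum_rate_le (u := fun n => D.signal (s + n) a) (c := fun n => D.growth (s + n)) ha
    (fun n hn => (D.crudeBounds (by omega)).growth_nonneg)
    (fun n hn => D.growth_mul_signal_le_one (by omega) a)
    (fun n _ => (D.signal_succ (s + n) a).ge)

lemma mul_mul_sLow_le_two {c : ℝ} (ht : t ≤ T) (hc : ∀ s < t, c ≤ D.growth s) :
    t * c * D.sLow ≤ 2 := by
  obtain ⟨a, ha⟩ := D.exists_le_signal_zero
  have hsLow := D.sLow_pos
  rw [← le_div_iff₀ hsLow]
  calc t * c = ∑ _s ∈ Ico 0 t, c := by simp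
    _ ≤ ∑ s ∈ Ico 0 t, D.growth s := sum_le_sum fun s hs => hc s (mem_Ico.1 hs).2
    _ ≤ 2 / D.signal 0 a := D.sum_growth_Ico_le t.zero_le ht (hsLow.trans_le ha)
    _ ≤ 2 / D.sLow := by gcongr

lemma coef_eq_add_sum {s : ℕ} (hst : s ≤ t) (z : Fin N × Fin P) (a : Fin m) :
    D.coef t z a =
      D.coef s z a + ∑ n ∈ Ico s t, D.ηn / N * D.weight n z.1 * D.corr n z a ^ 2 := by
  induction t, hst using Nat.le_induction with
  | base => rw [Ico_self, sum_empty, add_zero]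
  | succ n hn ih => rw [D.coef_succ, ih, sum_Ico_succ_top hn, add_assoc]

lemma card_mul_cube_le_one {b : ℝ} (hb : b ≤ 3 * D.τ) : m * P * b ^ 3 ≤ 1 := by
  calc (m : ℝ) * P * b ^ 3 ≤ m * P * (3 * D.τ) ^ 3 :=
        mul_le_mul_of_nonneg_left (cube_le_cube hb) (by positivity)
    _ ≤ 1 := by linarith [D.card_mul_τ_cube_le, D.τ_nonneg, mul_nonneg (mul_nonneg
        (Nat.cast_nonneg (α := ℝ) m) (Nat.cast_nonneg P)) (pow_nonneg D.τ_nonneg 3)]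

lemma margin_le_add_one {i : Fin N} {S b : ℝ} (hS : 0 ≤ S) (hmass : D.signalMass t ≤ S)
    (hcorr : ∀ j a, D.corr t (i, j) a ≤ b) (hb : b ≤ 3 * D.τ) : D.margin t i ≤ S + 1 :=
  add_le_add (D.strength_mul_signalMass_le hS hmass i)
    ((D.noiseMass_le hcorr).trans (D.card_mul_cube_le_one hb))

include D in
lemma ten_le_Γ : 10 ≤ D.Γ := by
  have := D.ℓ_pos
  have : 0 ≤ (m : ℝ) * P * D.ℓ ^ 3 := by positivity
  linarith [D.le_Γ]

/-! ### Early phase -/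

lemma abs_corr_le {z : Fin N × Fin P} {a : Fin m} {b B : ℝ} (ht : t ≤ T)
    (hb : D.coef t z a ≤ b) (hB : ∑ z', D.coef t z' a ≤ B) :
    |D.corr t z a| ≤ 4 * D.ν * D.ℓ + b * (3 / 2) + D.κ * B := by
  have hcoef := (D.crudeBounds ht).coef_nonneg
  have hgram := (D.gram_self_pos z).le
  calc |D.corr t z a|
      = |D.initCorr z a + D.coef t z a * D.gram z z + (D.corr t z a - D.shifted t z a)| := by
        rw [Dynamics.shifted]; ring_nf
    _ ≤ |D.initCorr z a| + |D.coef t z a * D.gram z z| + |D.corr t z a - D.shifted t z a| :=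
        abs_add_three _ _ _
    _ ≤ 4 * D.ν * D.ℓ + b * (3 / 2) + D.κ * B := by
        refine add_le_add_three (D.abs_initCorr_le z a) ?_
          ((D.abs_corr_sub_shifted_le (fun z => hcoef z a) z).trans
            (mul_le_mul_of_nonneg_left hB D.κ_nonneg))
        rw [abs_of_nonneg (mul_nonneg (hcoef z a) hgram)]
        exact mul_le_mul hb (D.gram_self_mem z).2 hgram ((hcoef z a).trans hb)

lemma abs_corr_le_of_coef_le_ν (ht : t ≤ T) (hcoef : ∀ z a, D.coef t z a ≤ D.ν)
    (z : Fin N × Fin P) (a : Fin m) : |D.corr t z a| ≤ 7 * (D.ν * D.ℓ) := by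
  have hsum : ∑ z', D.coef t z' a ≤ N * P * D.ν := by
    simpa using sum_le_card_nsmul univ (fun z' => D.coef t z' a) _ fun z' _ => hcoef z' a
  nlinarith [D.abs_corr_le ht (hcoef z a) hsum, D.κ_mul_le, D.ν_pos, D.one_le_ℓ]

lemma le_growth_of_signalMass_le_one (ht : t ≤ T) (hmass : D.signalMass t ≤ 1)
    (hcoef : ∀ z a, D.coef t z a ≤ D.ν) : D.ηs / 512 ≤ D.growth t := by
  have hτ : 7 * (D.ν * D.ℓ) ≤ 3 * D.τ := by
    have hκ := D.κ_nonneg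
    have hν := D.ν_pos
    have hℓ := D.ℓ_pos
    have : 0 ≤ D.κ * N * P * D.ℓ := by positivity
    have : 0 ≤ D.ν * D.ℓ := by positivity
    rw [τ]; linarith
  have hweight : ∀ i ∈ D.learnable, 1 / 32 ≤ D.weight t i := fun i _ => by
    have hmargin : D.margin t i ≤ 1 + 1 := D.margin_le_add_one zero_le_one hmass
      (fun j a => le_of_abs_le (D.abs_corr_le_of_coef_le_ν ht hcoef (i, j) a)) hτ
    have hle := D.le_weight (L := 2) (by norm_num) (by linarith [D.ten_le_Γ]) (by linarith)
    linarith [one_eighth_le_exp_neg_two]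
  linarith [D.le_growth (by norm_num) hweight]

lemma coef_le_mul_sq {b : ℝ} {z : Fin N × Fin P} {a : Fin m}
    (hcorr : ∀ s < t, |D.corr s z a| ≤ b) : D.coef t z a ≤ t * (D.ηn / N * b ^ 2) := by
  have hηn := D.ηn_pos
  have hterm : ∀ s ∈ Ico 0 t,
      D.ηn / N * D.weight s z.1 * D.corr s z a ^ 2 ≤ D.ηn / N * b ^ 2 := by
    intro s hs
    have hst := (mem_Ico.1 hs).2
    obtain ⟨hlow, hhigh⟩ := abs_le.1 (hcorr s hst)
    calc D.ηn / N * D.weight s z.1 * D.corr s z a ^ 2 ≤ D.ηn / N * 1 * b ^ 2 := by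
          gcongr ?_ * ?_
          · gcongr
            exact D.weight_le_one s z.1
          · exact sq_le_sq' hlow hhigh
      _ = D.ηn / N * b ^ 2 := by rw [mul_one]
  rw [D.coef_eq_add_sum t.zero_le, D.coef_zero, zero_add]
  simpa using sum_le_sum hterm

lemma coef_le_ν_of_signalMass_le_one (ht : t ≤ T) (hmass : ∀ s < t, D.signalMass s ≤ 1)
    (z : Fin N × Fin P) (a : Fin m) : D.coef t z a ≤ D.ν := by
  induction t using Nat.strong_induction_on generalizing z a with
  | _ t ih =>
    have hprev : ∀ s < t, ∀ z a, D.coef s z a ≤ D.ν := fun s hs =>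
      ih s hs (by omega) fun s' hs' => hmass s' (by omega)
    have htime : t * (D.ηs / 512) * D.sLow ≤ 2 := D.mul_mul_sLow_le_two ht fun s hs =>
      D.le_growth_of_signalMass_le_one (by omega) (hmass s hs) (hprev s hs)
    have hN := D.one_le_N
    have hfaster : (t : ℝ) * (D.ηn * D.ν * D.ℓ ^ 2) * 49 ≤ N := by
      have := mul_le_mul_of_nonneg_left D.signal_faster_early (Nat.cast_nonneg (α := ℝ) t)
      nlinarith [mul_le_mul_of_nonneg_right htime (zero_le_one.trans hN)]
    calc D.coef t z a ≤ t * (D.ηn / N * (7 * (D.ν * D.ℓ)) ^ 2) :=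
          D.coef_le_mul_sq fun s hs =>
            D.abs_corr_le_of_coef_le_ν (by omega) (hprev s hs) z a
      _ = D.ν * (t * (D.ηn * D.ν * D.ℓ ^ 2) * 49 / N) := by field_simp; ring
      _ ≤ D.ν := mul_le_of_le_one_right D.ν_pos.le (div_le_one_of_le₀ hfaster (by positivity))

end BadTeacherDynamics

/-! ### The leading noise correlation -/

namespace BadTeacherDynamics

variable {N m P T : ℕ} (D : BadTeacherDynamics N m P T) {t : ℕ}

/-- The pairs of a noise patch of an unlearnable sample and a filter. -/
def unlearnablePairs : Finset ((Fin N × Fin P) × Fin m) := univ.filter fun x => x.1.1 ∉ D.learnable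

lemma unlearnablePairs_nonempty : D.unlearnablePairs.Nonempty := by
  obtain ⟨z, a, hz, -⟩ := D.exists_le_initCorr
  exact ⟨(z, a), by simp [unlearnablePairs, hz]⟩

/-- The largest shifted correlation over the unlearnable samples. -/
def maxShifted (t : ℕ) : ℝ :=
  D.unlearnablePairs.sup' D.unlearnablePairs_nonempty fun x => D.shifted t x.1 x.2

lemma shifted_le_maxShifted (t : ℕ) {z : Fin N × Fin P} (hz : z.1 ∉ D.learnable) (a : Fin m) :
    D.shifted t z a ≤ D.maxShifted t :=
  le_sup' (fun x : (Fin N × Fin P) × Fin m => D.shifted t x.1 x.2)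
    (by simp [unlearnablePairs, hz] : (z, a) ∈ D.unlearnablePairs)

lemma exists_shifted_eq_maxShifted (t : ℕ) :
    ∃ z a, z.1 ∉ D.learnable ∧ D.shifted t z a = D.maxShifted t := by
  obtain ⟨x, hx, hmax⟩ := exists_mem_eq_sup' D.unlearnablePairs_nonempty
    fun x : (Fin N × Fin P) × Fin m => D.shifted t x.1 x.2
  exact ⟨x.1, x.2, by simpa [unlearnablePairs] using hx, hmax.symm⟩

lemma maxShifted_mono : MonotoneOn D.maxShifted (Set.Iic T) := fun s hs t ht hst => by
  obtain ⟨z, a, hz, hmax⟩ := D.exists_shifted_eq_maxShifted s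
  rw [← hmax]
  refine le_trans ?_ (D.shifted_le_maxShifted t hz a)
  exact add_le_add_right
    (mul_le_mul_of_nonneg_right (D.coef_mono z a hs ht hst) (D.gram_self_pos z).le) _

lemma ν_div_four_le_maxShifted (ht : t ≤ T) : D.ν / 4 ≤ D.maxShifted t := by
  obtain ⟨z, a, hz, hinit⟩ := D.exists_le_initCorr
  calc D.ν / 4 ≤ D.shifted 0 z a := by simpa [Dynamics.shifted, D.coef_zero] using hinit
    _ ≤ D.maxShifted 0 := D.shifted_le_maxShifted 0 hz a
    _ ≤ D.maxShifted t := D.maxShifted_mono T.zero_le ht t.zero_le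

lemma maxShifted_pos (ht : t ≤ T) : 0 < D.maxShifted t := by
  linarith [D.ν_div_four_le_maxShifted ht, D.ν_pos]

lemma maxShifted_le (ht : t ≤ T) : D.maxShifted t ≤ 8 * D.ℓ := by
  obtain ⟨z, a, -, hmax⟩ := D.exists_shifted_eq_maxShifted t
  have h := D.crudeBounds ht
  rw [← hmax, Dynamics.shifted]
  linarith [le_of_abs_le (D.abs_initCorr_le z a), h.coef_mul_gram_le z a, h.time_div_le,
    D.ν_mul_ℓ_le, D.one_le_ℓ]

lemma coef_le_maxShifted (ht : t ≤ T) {z : Fin N × Fin P} (hz : z.1 ∉ D.learnable) (a : Fin m) :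
    D.coef t z a ≤ 2 * (D.maxShifted t + 4 * (D.ν * D.ℓ)) := by
  have hshifted := D.shifted_le_maxShifted t hz a
  rw [Dynamics.shifted] at hshifted
  nlinarith [(abs_le.1 (D.abs_initCorr_le z a)).1, (D.crudeBounds ht).coef_nonneg z a,
    (D.gram_self_mem z).1]

/-! ### Noise correlations of the learnable samples -/

lemma card_unlearnable_le_self : (D.learnableᶜ.card : ℝ) ≤ N := by
  linarith [D.card_unlearnable_le_N, Nat.cast_nonneg (α := ℝ) D.learnableᶜ.card]

lemma κ_mul_card_mul_ℓ_le : D.κ * D.learnableᶜ.card * P * D.ℓ ≤ 1 / 10 ^ 6 := by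
  have hκ := D.κ_nonneg
  have hℓ := D.ℓ_pos
  refine le_trans ?_ D.κ_mul_ℓ_le
  gcongr ?_ * P * D.ℓ
  exact mul_le_mul_of_nonneg_left D.card_unlearnable_le_self hκ

lemma κ_mul_card_le : D.κ * D.learnableᶜ.card * P ≤ 1 / 10 ^ 6 := by
  have hκ := D.κ_nonneg
  exact (le_mul_of_one_le_right (by positivity) D.one_le_ℓ).trans D.κ_mul_card_mul_ℓ_le

lemma κ_mul_P_mul_ℓ_le : D.κ * P * D.ℓ ≤ 1 / 10 ^ 6 := by
  have hκ := D.κ_nonneg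
  have hℓ := D.ℓ_pos
  calc D.κ * P * D.ℓ ≤ D.κ * P * D.ℓ * N := le_mul_of_one_le_right (by positivity) D.one_le_N
    _ = D.κ * N * P * D.ℓ := by ring
    _ ≤ 1 / 10 ^ 6 := D.κ_mul_ℓ_le

lemma κ_mul_P_le : D.κ * P ≤ 1 / 10 ^ 6 := by
  have hκ := D.κ_nonneg
  exact (le_mul_of_one_le_right (by positivity) D.one_le_ℓ).trans D.κ_mul_P_mul_ℓ_le

/-- The bound on the noise correlations of the learnable samples: the initial scale plus the
crosstalk of the memorized unlearnable samples. -/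
def corrBound (t : ℕ) : ℝ :=
  12 * (D.ν * D.ℓ) + 8 * (D.κ * D.learnableᶜ.card * P * D.maxShifted t)

lemma corrBound_nonneg (ht : t ≤ T) : 0 ≤ D.corrBound t := by
  have := D.maxShifted_pos ht
  have := D.ν_pos
  have := D.κ_nonneg
  have := D.ℓ_pos
  unfold corrBound
  positivity

lemma corrBound_mono : MonotoneOn D.corrBound (Set.Iic T) := fun s hs t ht hst => by
  have := D.maxShifted_mono hs ht hst
  have := D.κ_nonneg
  unfold corrBound
  gcongr

lemma corrBound_le (ht : t ≤ T) :
    D.corrBound t ≤ 12 * (D.ν * D.ℓ) + 64 * (D.κ * D.learnableᶜ.card * P * D.ℓ) := by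
  have hκ := D.κ_nonneg
  calc D.corrBound t
      ≤ 12 * (D.ν * D.ℓ) + 8 * (D.κ * D.learnableᶜ.card * P * (8 * D.ℓ)) := by
        unfold corrBound; gcongr; exact D.maxShifted_le ht
    _ = _ := by ring

lemma corrBound_le_τ (ht : t ≤ T) : D.corrBound t ≤ 3 * D.τ := by
  have hκ := D.κ_nonneg
  have hℓ := D.ℓ_pos
  have hcard : D.κ * D.learnableᶜ.card * P * D.ℓ ≤ D.κ * (N / 64) * P * D.ℓ := by
    gcongr
    linarith [D.card_unlearnable_le_N]
  have hκℓ : 0 ≤ D.κ * N * P * D.ℓ := by positivity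
  rw [τ]
  linarith [D.corrBound_le ht]

lemma mul_corrBound_le (ht : t ≤ T) : 320 * (m * N * D.corrBound t) ≤ D.ℓ ^ 3 := by
  have hκ := D.κ_nonneg
  have hν := D.ν_pos
  have hℓ := D.one_le_ℓ
  have hνterm : m * N * (D.ν * D.ℓ) ≤ 1 / 10 ^ 6 :=
    calc m * N * (D.ν * D.ℓ) ≤ m * N * (D.ν * D.ℓ) * P :=
          le_mul_of_one_le_right (by positivity) D.one_le_P
      _ = D.ν * N * P * m * D.ℓ := by ring
      _ ≤ 1 / 10 ^ 6 := D.ν_small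
  have hκterm : m * N * (D.κ * D.learnableᶜ.card * P * D.ℓ) ≤ D.ℓ ^ 2 * (1 / 10 ^ 6) :=
    calc m * N * (D.κ * D.learnableᶜ.card * P * D.ℓ)
        ≤ m * N * (D.κ * D.ℓ ^ 2 * P * D.ℓ) := by gcongr; exact D.card_unlearnable_le
      _ = D.ℓ ^ 2 * (D.κ * N * P * m * D.ℓ) := by ring
      _ ≤ D.ℓ ^ 2 * (1 / 10 ^ 6) := by gcongr; exact D.κ_small
  have hbound : m * N * D.corrBound t ≤
      m * N * (12 * (D.ν * D.ℓ) + 64 * (D.κ * D.learnableᶜ.card * P * D.ℓ)) := by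
    gcongr
    exact D.corrBound_le ht
  have hℓ2 : 1 ≤ D.ℓ ^ 2 := one_le_pow₀ hℓ
  have hℓ3 : D.ℓ ^ 2 ≤ D.ℓ ^ 3 := pow_le_pow_right₀ hℓ (by norm_num)
  linarith

lemma corrBound_mul_ηn_le (ht : t ≤ T) : 320 * m * D.corrBound t * D.ηn ≤ D.ηs := by
  have hbound := D.corrBound_nonneg ht
  have hηs := D.ηs_pos
  have hℓ := D.ℓ_pos
  refine le_of_mul_le_mul_right ?_ (pow_pos hℓ 3)
  calc 320 * m * D.corrBound t * D.ηn * D.ℓ ^ 3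
      = 320 * m * D.corrBound t * (D.ηn * D.ℓ ^ 3) := by ring
    _ ≤ 320 * m * D.corrBound t * (D.ηs * N) :=
        mul_le_mul_of_nonneg_left D.signal_faster_late (by positivity)
    _ = D.ηs * (320 * (m * N * D.corrBound t)) := by ring
    _ ≤ D.ηs * D.ℓ ^ 3 := by gcongr; exact D.mul_corrBound_le ht

/-- The induction hypothesis on the noise coefficients of the learnable samples. -/
structure LearnableBound (t : ℕ) : Prop where
  sum_coef_le : ∀ j a, ∑ i ∈ D.learnable, D.coef t (i, j) a ≤ N * D.ν + D.corrBound t / 20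
  coef_le : ∀ z a, z.1 ∈ D.learnable → D.coef t z a ≤ D.ν + D.corrBound t / 20

namespace LearnableBound

variable {D} (h : D.LearnableBound t)

include h

lemma sum_coef_univ_le (ht : t ≤ T) (a : Fin m) :
    ∑ z, D.coef t z a ≤ P * (N * D.ν + D.corrBound t / 20) +
      D.learnableᶜ.card * P * (2 * (D.maxShifted t + 4 * (D.ν * D.ℓ))) := by
  rw [Fintype.sum_prod_type, ← sum_add_sum_compl D.learnable]
  refine add_le_add ?_ ?_
  · rw [sum_comm]
    simpa only [card_univ, Fintype.card_fin, nsmul_eq_mul] using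
      sum_le_card_nsmul univ _ _ fun j _ => h.sum_coef_le j a
  · have hU : ∑ i ∈ D.learnableᶜ, ∑ j, D.coef t (i, j) a ≤
        ∑ i ∈ D.learnableᶜ, ∑ _j : Fin P, 2 * (D.maxShifted t + 4 * (D.ν * D.ℓ)) :=
      sum_le_sum fun i hi => sum_le_sum fun j _ =>
        D.coef_le_maxShifted ht (z := (i, j)) (mem_compl.1 hi) a
    simpa only [sum_const, card_univ, Fintype.card_fin, nsmul_eq_mul, mul_assoc] using hU

lemma κ_mul_sum_coef_le (ht : t ≤ T) (a : Fin m) :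
    D.κ * ∑ z, D.coef t z a ≤
      D.ν / 10 + 3 * (D.κ * D.learnableᶜ.card * P * D.maxShifted t) := by
  have hκ := D.κ_nonneg
  have hν := D.ν_pos
  have hmax := D.maxShifted_pos ht
  have hcross : 0 ≤ D.κ * D.learnableᶜ.card * P * D.maxShifted t := by positivity
  calc D.κ * ∑ z, D.coef t z a
      ≤ D.κ * (P * (N * D.ν + D.corrBound t / 20) +
          D.learnableᶜ.card * P * (2 * (D.maxShifted t + 4 * (D.ν * D.ℓ)))) := by
        gcongr
        exact h.sum_coef_univ_le ht a
    _ = D.κ * N * P * D.ν + D.κ * P * D.ℓ * (3 / 5 * D.ν) +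
          D.κ * P * (2 / 5 * (D.κ * D.learnableᶜ.card * P * D.maxShifted t)) +
          2 * (D.κ * D.learnableᶜ.card * P * D.maxShifted t) +
          D.κ * D.learnableᶜ.card * P * D.ℓ * (8 * D.ν) := by rw [corrBound]; ring
    _ ≤ 1 / 10 ^ 6 * D.ν + 1 / 10 ^ 6 * (3 / 5 * D.ν) +
          1 / 10 ^ 6 * (2 / 5 * (D.κ * D.learnableᶜ.card * P * D.maxShifted t)) +
          2 * (D.κ * D.learnableᶜ.card * P * D.maxShifted t) + 1 / 10 ^ 6 * (8 * D.ν) := by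
        gcongr ?_ * _ + ?_ * _ + ?_ * _ + _ + ?_ * _
        exacts [D.κ_mul_le, D.κ_mul_P_mul_ℓ_le, D.κ_mul_P_le, D.κ_mul_card_mul_ℓ_le]
    _ ≤ D.ν / 10 + 3 * (D.κ * D.learnableᶜ.card * P * D.maxShifted t) := by linarith

lemma abs_corr_le (ht : t ≤ T) {z : Fin N × Fin P} (hz : z.1 ∈ D.learnable) (a : Fin m) :
    |D.corr t z a| ≤ D.corrBound t := by
  have hν := D.ν_pos
  have hνℓ : D.ν ≤ D.ν * D.ℓ := le_mul_of_one_le_right hν.le D.one_le_ℓ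
  have hcorr := D.abs_corr_le ht (h.coef_le z a hz) le_rfl
  have hκsum := h.κ_mul_sum_coef_le ht a
  have hκ := D.κ_nonneg
  have hmax := D.maxShifted_pos ht
  have hcross : 0 ≤ D.κ * D.learnableᶜ.card * P * D.maxShifted t := by positivity
  have hdef : D.corrBound t =
    12 * (D.ν * D.ℓ) + 8 * (D.κ * D.learnableᶜ.card * P * D.maxShifted t) := rfl
  linarith

end LearnableBound

lemma sum_learnable_coef_le_of_coef_le_ν {j : Fin P} {a : Fin m}
    (hcoef : ∀ z a, D.coef t z a ≤ D.ν) : ∑ i ∈ D.learnable, D.coef t (i, j) a ≤ N * D.ν :=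
  calc ∑ i ∈ D.learnable, D.coef t (i, j) a ≤ D.learnable.card * D.ν := by
        simpa using sum_le_card_nsmul D.learnable _ _ fun i _ => hcoef (i, j) a
    _ ≤ N * D.ν := by
        have := D.ν_pos
        gcongr
        exact_mod_cast card_finset_fin_le D.learnable

lemma sum_sum_weight_le {s : ℕ} (hst : s ≤ t) (ht : t ≤ T) (hs : 1 < D.signalMass s) :
    ∑ n ∈ Ico s t, ∑ i ∈ D.learnable, D.weight n i ≤ 16 * m * N / D.ηs := by
  obtain ⟨a, ha⟩ := exists_inv_card_lt_of_one_lt_sum_cube hs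
  rw [Fintype.card_fin] at ha
  have hm : (0 : ℝ) < m := one_pos.trans_le D.one_le_m
  have hN : (0 : ℝ) < N := one_pos.trans_le D.one_le_N
  have hηs := D.ηs_pos
  have hsum : D.ηs / N * (1 / 8) * ∑ n ∈ Ico s t, ∑ i ∈ D.learnable, D.weight n i ≤ 2 * m :=
    calc D.ηs / N * (1 / 8) * ∑ n ∈ Ico s t, ∑ i ∈ D.learnable, D.weight n i
        ≤ ∑ n ∈ Ico s t, D.growth n := by
          rw [mul_sum]
          exact sum_le_sum fun n hn =>
            D.sum_weight_le_growth ((mem_Ico.1 hn).2.le.trans ht)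
      _ ≤ 2 / D.signal s a := D.sum_growth_Ico_le hst ht ((by positivity : 0 < (m : ℝ)⁻¹).trans ha)
      _ ≤ 2 / (m : ℝ)⁻¹ := by gcongr
      _ = 2 * m := div_inv_eq_mul _ _
  rw [le_div_iff₀ hηs]
  calc (∑ n ∈ Ico s t, ∑ i ∈ D.learnable, D.weight n i) * D.ηs
      = 8 * N * (D.ηs / N * (1 / 8) * ∑ n ∈ Ico s t, ∑ i ∈ D.learnable, D.weight n i) := by
        field_simp
    _ ≤ 8 * N * (2 * m) := by gcongr
    _ = 16 * m * N := by ring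

lemma sum_increment_le {s : ℕ} (hst : s ≤ t) (ht : t ≤ T) (hs : 1 < D.signalMass s)
    {j : Fin P} {a : Fin m}
    (hcorr : ∀ n < t, ∀ i ∈ D.learnable, |D.corr n (i, j) a| ≤ D.corrBound t) :
    ∑ i ∈ D.learnable, ∑ n ∈ Ico s t, D.ηn / N * D.weight n i * D.corr n (i, j) a ^ 2 ≤
      D.corrBound t / 20 := by
  have hN : (0 : ℝ) < N := one_pos.trans_le D.one_le_N
  have hηs := D.ηs_pos
  have hηn := D.ηn_pos
  have hbound := D.corrBound_nonneg ht
  have hterm : ∀ n ∈ Ico s t, ∀ i ∈ D.learnable,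
      D.ηn / N * D.weight n i * D.corr n (i, j) a ^ 2 ≤
        D.ηn / N * D.corrBound t ^ 2 * D.weight n i := by
    intro n hn i hi
    have hnt := (mem_Ico.1 hn).2
    have hw := (D.crudeBounds (hnt.le.trans ht)).weight_nonneg i
    rw [mul_right_comm]
    gcongr D.ηn / N * ?_ * D.weight n i
    exact sq_le_sq' (abs_le.1 (hcorr n hnt i hi)).1 (abs_le.1 (hcorr n hnt i hi)).2
  calc ∑ i ∈ D.learnable, ∑ n ∈ Ico s t, D.ηn / N * D.weight n i * D.corr n (i, j) a ^ 2
      ≤ ∑ n ∈ Ico s t, ∑ i ∈ D.learnable, D.ηn / N * D.corrBound t ^ 2 * D.weight n i := by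
        rw [sum_comm]
        exact sum_le_sum fun n hn => sum_le_sum (hterm n hn)
    _ = D.ηn / N * D.corrBound t ^ 2 * ∑ n ∈ Ico s t, ∑ i ∈ D.learnable, D.weight n i := by
        simp only [mul_sum]
    _ ≤ D.ηn / N * D.corrBound t ^ 2 * (16 * m * N / D.ηs) := by
        gcongr
        exact D.sum_sum_weight_le hst ht hs
    _ = (320 * m * D.corrBound t * D.ηn) / D.ηs * (D.corrBound t / 20) := by field_simp; ring
    _ ≤ D.corrBound t / 20 := mul_le_of_le_one_left (by positivity)
        (div_le_one_of_le₀ (D.corrBound_mul_ηn_le ht) hηs.le)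

lemma exists_first_one_lt_signalMass (h : ∃ s < t, 1 < D.signalMass s) :
    ∃ s < t, 1 < D.signalMass s ∧ ∀ n < s, D.signalMass n ≤ 1 := by
  classical
  obtain ⟨s, hst, hs⟩ := h
  have hex : ∃ n, 1 < D.signalMass n := ⟨s, hs⟩
  exact ⟨Nat.find hex, (Nat.find_min' hex hs).trans_lt hst, Nat.find_spec hex,
    fun n hn => not_lt.1 (Nat.find_min hex hn)⟩

lemma learnableBound_of_abs_corr_le (ht : t ≤ T)
    (hcorr : ∀ n < t, ∀ i ∈ D.learnable, ∀ j a, |D.corr n (i, j) a| ≤ D.corrBound t) :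
    D.LearnableBound t := by
  have hbound := D.corrBound_nonneg ht
  by_cases hearly : ∀ s < t, D.signalMass s ≤ 1
  · have hcoef := D.coef_le_ν_of_signalMass_le_one ht hearly
    exact ⟨fun j a => by linarith [D.sum_learnable_coef_le_of_coef_le_ν (j := j) (a := a) hcoef],
      fun z a _ => by linarith [hcoef z a]⟩
  · push Not at hearly
    obtain ⟨s, hst, hs, hbefore⟩ := D.exists_first_one_lt_signalMass hearly
    have hcoef := D.coef_le_ν_of_signalMass_le_one (hst.le.trans ht) hbefore
    have hsum := fun j a => D.sum_increment_le hst.le ht hs fun n hn i hi => hcorr n hn i hi j a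
    constructor
    · intro j a
      simp only [D.coef_eq_add_sum hst.le, sum_add_distrib]
      exact add_le_add (D.sum_learnable_coef_le_of_coef_le_ν hcoef) (hsum j a)
    · intro z a hz
      rw [D.coef_eq_add_sum hst.le]
      refine add_le_add (hcoef z a) (le_trans ?_ (hsum z.2 a))
      refine single_le_sum (f := fun i => ∑ n ∈ Ico s t,
        D.ηn / N * D.weight n i * D.corr n (i, z.2) a ^ 2) (fun i _ => sum_nonneg fun n hn => ?_) hz
      have hw := (D.crudeBounds ((mem_Ico.1 hn).2.le.trans ht)).weight_nonneg i
      have hηn := D.ηn_pos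
      positivity

theorem learnableBound (ht : t ≤ T) : D.LearnableBound t := by
  induction t using Nat.strong_induction_on with
  | _ t ih =>
    refine D.learnableBound_of_abs_corr_le ht fun n hn i hi j a => ?_
    have hnT : n ≤ T := hn.le.trans ht
    exact ((ih n hn hnT).abs_corr_le hnT hi a).trans (D.corrBound_mono hnT ht hn.le)

theorem le_signalMass {K : ℝ} (hK : 0 ≤ K) (hKΓ : K + 3 ≤ D.Γ)
    (hT : 128 * Real.exp (K + 1) < T * D.ηs * D.sLow) : K ≤ D.signalMass T := by
  by_contra! hlt
  have hgrowth : ∀ t < T, D.ηs * (Real.exp (-(K + 1)) / 4) / 16 ≤ D.growth t := by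
    refine fun t ht => D.le_growth (by positivity) fun i hi => ?_
    refine D.le_weight (by linarith) (by linarith) (D.margin_le_add_one hK ?_ (fun j a => ?_)
      (D.corrBound_le_τ ht.le))
    · exact (D.signalMass_mono ht.le (Set.self_mem_Iic) ht.le).trans hlt.le
    · exact le_of_abs_le ((D.learnableBound ht.le).abs_corr_le ht.le (z := (i, j)) hi a)
  have htime := D.mul_mul_sLow_le_two le_rfl hgrowth
  have hexp := Real.exp_pos (K + 1)
  rw [Real.exp_neg, show T * (D.ηs * ((Real.exp (K + 1))⁻¹ / 4) / 16) * D.sLow =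
    T * D.ηs * D.sLow / (64 * Real.exp (K + 1)) by field_simp; ring,
    div_le_iff₀ (by positivity)] at htime
  linarith

/-! ### Memorization of the unlearnable samples -/

lemma abs_corr_sub_shifted_le_half (ht : t ≤ T) (z : Fin N × Fin P) (a : Fin m) :
    |D.corr t z a - D.shifted t z a| ≤ D.maxShifted t / 2 := by
  have hcross : D.κ * D.learnableᶜ.card * P * D.maxShifted t ≤ 1 / 10 ^ 6 * D.maxShifted t :=
    mul_le_mul_of_nonneg_right D.κ_mul_card_le (D.maxShifted_pos ht).le
  calc |D.corr t z a - D.shifted t z a| ≤ D.κ * ∑ z', D.coef t z' a :=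
        D.abs_corr_sub_shifted_le (fun z => (D.crudeBounds ht).coef_nonneg z a) z
    _ ≤ D.ν / 10 + 3 * (D.κ * D.learnableᶜ.card * P * D.maxShifted t) :=
        (D.learnableBound ht).κ_mul_sum_coef_le ht a
    _ ≤ D.maxShifted t / 2 := by
        linarith [D.ν_div_four_le_maxShifted ht, D.maxShifted_pos ht]

lemma twelfth_le_weight (ht : t ≤ T) (hmax : m * P * (3 / 2 * D.maxShifted t) ^ 3 ≤ 1)
    {i : Fin N} (hi : i ∉ D.learnable) : 1 / 12 ≤ D.weight t i := by
  have hnoise : D.noiseMass t i ≤ m * P * (3 / 2 * D.maxShifted t) ^ 3 :=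
    D.noiseMass_le fun j a => by
      linarith [(abs_le.1 (D.abs_corr_sub_shifted_le_half ht (i, j) a)).2,
        D.shifted_le_maxShifted t (z := (i, j)) hi a]
  have hmargin : D.margin t i ≤ 1 := by
    rw [Dynamics.margin, D.strength_eq_zero t i hi]
    linarith
  have hexp : 1 / 3 ≤ Real.exp (-1) := by
    rw [Real.exp_neg, ← one_div]
    exact one_div_le_one_div_of_le (Real.exp_pos 1) (by linarith [Real.exp_one_lt_d9])
  linarith [D.le_weight zero_le_one (by linarith [D.ten_le_Γ]) hmargin]

lemma maxShifted_add_le_succ (ht : t ≤ T) (hmax : m * P * (3 / 2 * D.maxShifted t) ^ 3 ≤ 1) :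
    D.maxShifted t + D.ηn / (96 * N) * D.maxShifted t ^ 2 ≤ D.maxShifted (t + 1) := by
  obtain ⟨z, a, hz, hattained⟩ := D.exists_shifted_eq_maxShifted t
  have hpos := D.maxShifted_pos ht
  have hηn := D.ηn_pos
  have hcorr : D.maxShifted t / 2 ≤ D.corr t z a := by
    linarith [(abs_le.1 (D.abs_corr_sub_shifted_le_half ht z a)).1]
  calc D.maxShifted t + D.ηn / (96 * N) * D.maxShifted t ^ 2
      = D.maxShifted t + D.ηn / N * (1 / 12) * (D.maxShifted t / 2) ^ 2 * (1 / 2) := by ring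
    _ ≤ D.maxShifted t + D.ηn / N * D.weight t z.1 * D.corr t z a ^ 2 * D.gram z z := by
        have hweight := D.twelfth_le_weight ht hmax hz
        gcongr
        exact (D.gram_self_mem z).1
    _ = D.shifted (t + 1) z a := by
        rw [← hattained, Dynamics.shifted, Dynamics.shifted, D.coef_succ]
        ring
    _ ≤ D.maxShifted (t + 1) := D.shifted_le_maxShifted (t + 1) hz a

lemma ηn_mul_maxShifted_le_one (ht : t ≤ T) : D.ηn / (96 * N) * D.maxShifted t ≤ 1 := by
  have hηn := D.ηn_pos
  have hpos := D.maxShifted_pos ht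
  have hℓ : D.ℓ ≤ D.ℓ ^ 2 := le_self_pow₀ D.one_le_ℓ two_ne_zero
  calc D.ηn / (96 * N) * D.maxShifted t ≤ D.ηn / 1 * (8 * D.ℓ ^ 2) := by
        gcongr
        · linarith [D.one_le_N]
        · linarith [D.maxShifted_le ht]
    _ = 8 * (D.ηn * D.ℓ ^ 2) := by ring
    _ ≤ 1 := by linarith [D.ηn_small]

lemma one_lt_mul_maxShifted_cube : 1 < m * P * (3 / 2 * D.maxShifted T) ^ 3 := by
  by_contra! hsmall
  have hN : (0 : ℝ) < N := one_pos.trans_le D.one_le_N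
  have hηn := D.ηn_pos
  have hν := D.ν_pos
  have htime : ∑ _t ∈ range T, D.ηn / (96 * N) ≤ 2 / D.maxShifted 0 := by
    refine sum_rate_le (D.maxShifted_pos T.zero_le) (fun _ _ => by positivity)
      (fun t ht => D.ηn_mul_maxShifted_le_one ht.le)
      fun t ht => D.maxShifted_add_le_succ ht.le (le_trans ?_ hsmall)
    have := D.maxShifted_pos ht.le
    gcongr
    exact D.maxShifted_mono ht.le Set.self_mem_Iic ht.le
  have hhorizon : T * (D.ηn / (96 * N)) ≤ 2 / (D.ν / 4) := by
    calc T * (D.ηn / (96 * N)) ≤ 2 / D.maxShifted 0 := by simpa using htime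
      _ ≤ 2 / (D.ν / 4) := by
          gcongr
          exact D.ν_div_four_le_maxShifted T.zero_le
  rw [← mul_div_assoc, div_le_div_iff₀ (by positivity) (by positivity)] at hhorizon
  linarith [D.horizon]

theorem exists_memorized :
    ∃ z a, z.1 ∉ D.learnable ∧ 0 < D.corr T z a ∧ 1 ≤ 27 * (m * P * D.corr T z a ^ 3) := by
  obtain ⟨z, a, hz, hattained⟩ := D.exists_shifted_eq_maxShifted T
  have hpos := D.maxShifted_pos le_rfl
  have hcorr : D.maxShifted T / 2 ≤ D.corr T z a := by
    linarith [(abs_le.1 (D.abs_corr_sub_shifted_le_half le_rfl z a)).1]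
  refine ⟨z, a, hz, by linarith, ?_⟩
  calc (1 : ℝ) ≤ m * P * (3 / 2 * D.maxShifted T) ^ 3 := D.one_lt_mul_maxShifted_cube.le
    _ = 27 * (m * P * (D.maxShifted T / 2) ^ 3) := by ring
    _ ≤ 27 * (m * P * D.corr T z a ^ 3) := by gcongr

end BadTeacherDynamics

/-! ### Reduction of a setting to normalized dynamics -/

lemma phi_sub_phi_neg (z : ℝ) : phi z - phi (-z) = z ^ 3 := by
  unfold phi
  rcases le_total 0 z with h | h
  · rw [max_eq_right h, max_eq_left (by linarith)]
    ring
  · rw [max_eq_left h, max_eq_right (by linarith)]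
    ring

lemma netOut_eq_sum_cube {m P d : ℕ} (w : Fin m → Fin d → ℝ) (X : Fin P → Fin d → ℝ) :
    netOut w X = ∑ r, ∑ p, dot (w r) (X p) ^ 3 := by
  simp only [netOut, phi_sub_phi_neg]

lemma sigm_eq_psi_neg (z : ℝ) : sigm z = psi (-z) := rfl

section Dot

variable {d : ℕ} (a b c : Fin d → ℝ)

lemma dot_comm : dot a b = dot b a := dotProduct_comm a b

lemma dot_add_left : dot (a + b) c = dot a c + dot b c := add_dotProduct a b c

lemma dot_add_right : dot a (b + c) = dot a b + dot a c := dotProduct_add a b c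

lemma dot_smul_left (k : ℝ) : dot (k • a) b = k * dot a b := smul_dotProduct k a b

lemma dot_smul_right (k : ℝ) : dot a (k • b) = k * dot a b := dotProduct_smul k a b

lemma dot_sum_left {ι : Type*} (s : Finset ι) (a : ι → Fin d → ℝ) :
    dot (∑ i ∈ s, a i) b = ∑ i ∈ s, dot (a i) b := sum_dotProduct s a b

lemma dot_e1 (hd : 0 < d) : dot a (e1 d hd) = a ⟨0, hd⟩ := by
  simp [dot, e1]

end Dot

namespace Setting

variable (S : Setting)

lemma y_mul_y (i : Fin S.N) : S.y i * S.y i = 1 := by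
  rcases S.hy i with h | h <;> rw [h] <;> norm_num

lemma abs_y (i : Fin S.N) : |S.y i| = 1 := by
  rcases S.hy i with h | h <;> rw [h] <;> norm_num

lemma compl_SL : S.SLᶜ = S.SU :=
  (IsCompl.of_eq (disjoint_iff.1 S.hdisj) S.hunion).compl_eq

lemma notMem_SL {i : Fin S.N} : i ∉ S.SL ↔ i ∈ S.SU := by
  rw [← S.compl_SL, Finset.mem_compl]

lemma gAD_eq (fT : Fin S.N → ℝ) (t : ℕ) (i : Fin S.N) :
    S.gAD fT t i = psi (S.marg t i) - psi (S.y i * fT i) := by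
  rw [gAD, sigm_eq_psi_neg, sigm_eq_psi_neg, neg_neg, psi_neg, psi_neg]
  ring

/-- The label-aligned coordinate of the attacked signal patch along the learnable feature. -/
def attackedSignal (t : ℕ) (i : Fin S.N) : ℝ :=
  S.y i * dot (S.xadv t i (S.sig i)) (e1 S.d S.hd)

lemma dot_xadv_sig_e1 (t : ℕ) (i : Fin S.N) :
    dot (S.xadv t i (S.sig i)) (e1 S.d S.hd) = S.y i * S.attackedSignal t i := by
  rw [attackedSignal, ← mul_assoc, y_mul_y, one_mul]

lemma xadv_sig_learnable (t : ℕ) {i : Fin S.N} (hi : i ∈ S.SL) :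
    S.xadv t i (S.sig i) = (S.y i * S.attackedSignal t i) • e1 S.d S.hd := by
  obtain ⟨c, hc⟩ := S.hadvspan t i
  have hx : S.xadv t i (S.sig i) = ((1 + c) * (S.alpha * S.y i)) • e1 S.d S.hd := by
    rw [sub_eq_iff_eq_add.1 hc, S.hsigL i hi]
    module
  rw [← dot_xadv_sig_e1, hx, dot_smul_left, dot_e1]
  simp [e1]

lemma dot_xadv_sig_unlearnable (t : ℕ) {i : Fin S.N} (hi : i ∉ S.SL) (r : Fin S.m) :
    dot (S.w t r) (S.xadv t i (S.sig i)) = 0 := by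
  obtain ⟨c, hc⟩ := S.hadvspan t i
  rw [sub_eq_iff_eq_add.1 hc, S.hsigU i (S.notMem_SL.1 hi), dot_add_right, dot_smul_right,
    dot_smul_right, S.hwperp]
  simp

lemma dot_xadv_sig_learnable (t : ℕ) {i : Fin S.N} (hi : i ∈ S.SL) (r : Fin S.m) :
    dot (S.w t r) (S.xadv t i (S.sig i)) = S.y i * S.attackedSignal t i * S.wsig t r := by
  rw [S.xadv_sig_learnable t hi, dot_smul_right, dot_e1, wsig]

/-- The cube of the fraction of the signal patch that survives the attack; zero for unlearnable
samples, whose signal patches the student does not see. -/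
def strength (t : ℕ) (i : Fin S.N) : ℝ :=
  if i ∈ S.SL then (S.attackedSignal t i / S.alpha) ^ 3 else 0

/-- The label-aligned noise correlations, extended by zero to signal patches. -/
def noiseCorr (t : ℕ) (z : Fin S.N × Fin S.P) (r : Fin S.m) : ℝ :=
  if z.2 = S.sig z.1 then 0 else S.y z.1 * dot (S.w t r) (S.x z.1 z.2)

/-- The noise coefficients in units of `σ_n² d`, extended by zero to signal patches. -/
def noiseCoef (fT : Fin S.N → ℝ) (t : ℕ) (z : Fin S.N × Fin S.P) (r : Fin S.m) : ℝ :=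
  if z.2 = S.sig z.1 then 0 else S.sigman ^ 2 * S.d * S.rhoAD fT z.1 z.2 r t

/-- The label-signed Gram matrix of the noise patches in units of `σ_n² d`, extended by the
identity to signal patches. -/
def gram (z z' : Fin S.N × Fin S.P) : ℝ :=
  if z.2 = S.sig z.1 ∨ z'.2 = S.sig z'.1 then (if z = z' then 1 else 0)
  else S.y z.1 * S.y z'.1 * dot (S.x z.1 z.2) (S.x z'.1 z'.2) / (S.sigman ^ 2 * S.d)

/-- Adversarial distillation of a setting in normalized coordinates. -/
def dynamics (fT : Fin S.N → ℝ) : Dynamics S.N S.m S.P where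
  learnable := S.SL
  signal t r := S.alpha * S.wsig t r
  coef := S.noiseCoef fT
  initCorr := S.noiseCorr 0
  gram := S.gram
  strength := S.strength
  teacher i := S.y i * fT i
  ηs := 3 * S.eta * S.alpha ^ 2
  ηn := 3 * S.eta * (S.sigman ^ 2 * S.d)

lemma y_mul_dot_xadv_sig_cube (t : ℕ) (i : Fin S.N) (r : Fin S.m) :
    S.y i * dot (S.w t r) (S.xadv t i (S.sig i)) ^ 3 =
      S.strength t i * (S.alpha * S.wsig t r) ^ 3 := by
  by_cases hi : i ∈ S.SL
  · rw [S.dot_xadv_sig_learnable t hi, strength, if_pos hi, ← mul_pow, ← mul_assoc,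
      div_mul_cancel₀ _ S.halpha.ne']
    linear_combination (S.attackedSignal t i ^ 3 * S.wsig t r ^ 3) * (S.y i * S.y i + 1) *
      S.y_mul_y i
  · rw [S.dot_xadv_sig_unlearnable t hi, strength, if_neg hi]
    ring

lemma y_mul_dot_xadv_cube (t : ℕ) {i : Fin S.N} {j : Fin S.P} (hj : j ≠ S.sig i) (r : Fin S.m) :
    S.y i * dot (S.w t r) (S.xadv t i j) ^ 3 = S.noiseCorr t (i, j) r ^ 3 := by
  rw [S.hadvnoise t i j hj, noiseCorr, if_neg hj]
  linear_combination (-(S.y i) * dot (S.w t r) (S.x i j) ^ 3) * S.y_mul_y i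

lemma marg_eq (t : ℕ) (i : Fin S.N) :
    S.marg t i = S.strength t i * ∑ r, (S.alpha * S.wsig t r) ^ 3 +
      ∑ x : Fin S.m × Fin S.P, S.noiseCorr t (i, x.2) x.1 ^ 3 := by
  rw [marg, netOut_eq_sum_cube, Fintype.sum_prod_type, mul_sum, mul_sum, ← sum_add_distrib]
  refine Finset.sum_congr rfl fun r _ => ?_
  have hsig : S.noiseCorr t (i, S.sig i) r = 0 := if_pos rfl
  rw [← Finset.add_sum_erase _ _ (mem_univ (S.sig i)),
    ← Finset.add_sum_erase _ (fun j => S.noiseCorr t (i, j) r ^ 3) (mem_univ (S.sig i)), mul_add,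
    y_mul_dot_xadv_sig_cube, hsig, mul_sum, zero_pow three_ne_zero, zero_add]
  congr 1
  exact Finset.sum_congr rfl fun j hj => S.y_mul_dot_xadv_cube t (Finset.ne_of_mem_erase hj) r

variable {S} {fT : Fin S.N → ℝ}

lemma noiseCoef_succ (t : ℕ) (z : Fin S.N × Fin S.P) (r : Fin S.m) :
    S.noiseCoef fT (t + 1) z r = S.noiseCoef fT t z r +
      3 * S.eta * (S.sigman ^ 2 * S.d) / S.N * S.gAD fT t z.1 * S.noiseCorr t z r ^ 2 := by
  unfold noiseCoef noiseCorr
  split_ifs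
  · ring
  · rw [rhoAD, mul_pow, pow_two (S.y z.1), y_mul_y]
    ring

namespace ADDyn

lemma dot_w_eq (h : S.ADDyn fT) (t : ℕ) (r : Fin S.m) {v : Fin S.d → ℝ} (hv : v ⟨0, S.hd⟩ = 0) :
    dot (S.w t r) v = dot (S.w 0 r) v +
      ∑ i, ∑ j, if j = S.sig i then 0 else S.y i * S.rhoAD fT i j r t * dot (S.x i j) v := by
  induction t with
  | zero => simp [rhoAD]
  | succ t ih =>
    rw [h t r, dot_add_left, ih, dot_smul_left, dot_sum_left, add_assoc, mul_sum,
      ← sum_add_distrib]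
    congr 1
    refine Finset.sum_congr rfl fun i _ => ?_
    rw [dot_smul_left, dot_sum_left, mul_sum, mul_sum, ← sum_add_distrib]
    refine Finset.sum_congr rfl fun j _ => ?_
    split_ifs with hj
    · subst hj
      rw [zero_add]
      by_cases hi : i ∈ S.SL
      · rw [S.xadv_sig_learnable t hi, dot_smul_left, dot_smul_left, dot_comm (e1 _ _), dot_e1, hv]
        ring
      · rw [S.dot_xadv_sig_unlearnable t hi, dot_smul_left]
        ring
    · rw [S.hadvnoise t i j hj, dot_smul_left, rhoAD]
      ring

lemma noiseCorr_eq (h : S.ADDyn fT) (t : ℕ) (z : Fin S.N × Fin S.P) (r : Fin S.m) :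
    S.noiseCorr t z r = S.noiseCorr 0 z r + ∑ z', S.noiseCoef fT t z' r * S.gram z' z := by
  by_cases hz : z.2 = S.sig z.1
  · have hzero (z') : S.noiseCoef fT t z' r * S.gram z' z = 0 := by
      rcases eq_or_ne z' z with rfl | h'
      · rw [noiseCoef, if_pos hz, zero_mul]
      · rw [gram, if_pos (Or.inr hz), if_neg h', mul_zero]
    simp [noiseCorr, hz, hzero]
  · have hz0 : S.x z.1 z.2 ⟨0, S.hd⟩ = 0 := by
      rw [← dot_e1 (S.x z.1 z.2) S.hd, S.hnoiseU _ _ hz]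
    rw [noiseCorr, if_neg hz, noiseCorr, if_neg hz, h.dot_w_eq t r hz0, mul_add,
      Fintype.sum_prod_type, mul_sum]
    congr 1
    refine Finset.sum_congr rfl fun i _ => ?_
    rw [mul_sum]
    refine Finset.sum_congr rfl fun j _ => ?_
    by_cases hj : j = S.sig i
    · simp [noiseCoef, hj]
    · rw [if_neg hj, noiseCoef, if_neg hj, gram, if_neg (by simp [hj, hz])]
      have hσ := S.hsigman.ne'
      have hd : (S.d : ℝ) ≠ 0 := by exact_mod_cast S.hd.ne'
      field_simp

lemma corr_dynamics (h : S.ADDyn fT) : (S.dynamics fT).corr = S.noiseCorr := by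
  ext t z r
  exact (h.noiseCorr_eq t z r).symm

lemma margin_dynamics (h : S.ADDyn fT) : (S.dynamics fT).margin = S.marg := by
  ext t i
  rw [S.marg_eq, Dynamics.margin, Dynamics.noiseMass, h.corr_dynamics]
  rfl

lemma weight_dynamics (h : S.ADDyn fT) : (S.dynamics fT).weight = S.gAD fT := by
  ext t i
  rw [S.gAD_eq, Dynamics.weight, h.margin_dynamics]
  rfl

lemma coef_dynamics_succ (h : S.ADDyn fT) (t : ℕ) (z : Fin S.N × Fin S.P) (r : Fin S.m) :
    (S.dynamics fT).coef (t + 1) z r = (S.dynamics fT).coef t z r +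
      (S.dynamics fT).ηn / S.N * (S.dynamics fT).weight t z.1 *
        (S.dynamics fT).corr t z r ^ 2 := by
  rw [h.weight_dynamics, h.corr_dynamics]
  exact noiseCoef_succ t z r

lemma wsig_succ (h : S.ADDyn fT) (t : ℕ) (r : Fin S.m) :
    S.wsig (t + 1) r = S.wsig t r + 3 * S.eta / S.N *
      ∑ i, S.gAD fT t i * (S.alpha ^ 3 * S.strength t i) * S.wsig t r ^ 2 := by
  have hwsig (t) : S.wsig t r = dot (S.w t r) (e1 S.d S.hd) := by rw [dot_e1, wsig]
  rw [hwsig (t + 1), h t r, dot_add_left, ← hwsig t, dot_smul_left, dot_sum_left]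
  congr 2
  refine Finset.sum_congr rfl fun i _ => ?_
  rw [dot_smul_left, dot_sum_left, Finset.sum_eq_single (S.sig i), dot_smul_left]
  · by_cases hi : i ∈ S.SL
    · rw [dot_xadv_sig_e1, S.dot_xadv_sig_learnable t hi, strength, if_pos hi, div_pow,
        mul_div_cancel₀ _ (pow_ne_zero 3 S.halpha.ne')]
      linear_combination (S.gAD fT t i * S.attackedSignal t i ^ 3 * S.wsig t r ^ 2) *
        (S.y i * S.y i + 1) * S.y_mul_y i
    · rw [S.dot_xadv_sig_unlearnable t hi, strength, if_neg hi]
      ring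
  · intro j _ hj
    rw [dot_smul_left, S.hadvnoise t i j hj, S.hnoiseU i j hj, mul_zero]
  · simp

lemma signal_dynamics_succ (h : S.ADDyn fT) (t : ℕ) (r : Fin S.m) :
    (S.dynamics fT).signal (t + 1) r = (S.dynamics fT).signal t r +
      (S.dynamics fT).growth t * (S.dynamics fT).signal t r ^ 2 := by
  rw [Dynamics.growth, h.weight_dynamics]
  simp only [dynamics]
  rw [h.wsig_succ, ← sum_mul]
  simp only [mul_left_comm _ (S.alpha ^ 3), ← mul_sum]
  ring

end ADDyn

end Setting

/-! ### Parameter conditions -/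

lemma mul_le_one_of_le_inv_mul_div {a b C M l : ℝ} (hC : 0 < C) (hl : 0 < l) (hb : 0 < b)
    (h : a ≤ C⁻¹ * M / l) (hM : M ≤ 1 / b) : C * l * (a * b) ≤ 1 := by
  have haM : a * (C * l) ≤ M := by
    rwa [inv_mul_eq_div, div_div, le_div_iff₀ (mul_pos hC hl)] at h
  have hab := haM.trans hM
  rw [le_div_iff₀ hb] at hab
  linarith

namespace Setting

variable (S : Setting)

/-- The logarithmic factor of the parameter conditions. -/
def Λ : ℝ := Real.log ((S.T : ℝ) * S.N * S.m * S.P / S.delta)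

/-- The square root of the logarithmic factor of the parameter conditions. -/
def ℓ : ℝ := Real.sqrt S.Λ

/-- A bound for the normalized inner products of distinct noise patches. -/
def κ : ℝ := 5 * S.ℓ / Real.sqrt S.d

/-- The scale of the initial noise correlations. -/
def ν : ℝ := S.sigma0 * S.sigman * Real.sqrt S.d

lemma one_le_N : (1 : ℝ) ≤ S.N := by exact_mod_cast S.hN

lemma one_le_m : (1 : ℝ) ≤ S.m := by exact_mod_cast S.hm

lemma one_le_P : (1 : ℝ) ≤ S.P := by exact_mod_cast S.hP

lemma one_le_d : (1 : ℝ) ≤ S.d := by exact_mod_cast S.hd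

lemma d_pos : (0 : ℝ) < S.d := one_pos.trans_le S.one_le_d

lemma one_le_sqrt_d : 1 ≤ Real.sqrt S.d := Real.one_le_sqrt.2 S.one_le_d

lemma one_le_sqrt_P : 1 ≤ Real.sqrt S.P := Real.one_le_sqrt.2 S.one_le_P

lemma ν_pos : 0 < S.ν :=
  mul_pos (mul_pos S.hsigma0 S.hsigman) (Real.sqrt_pos.2 S.d_pos)

lemma ℓ_nonneg : 0 ≤ S.ℓ := Real.sqrt_nonneg _

lemma κ_nonneg : 0 ≤ S.κ :=
  div_nonneg (mul_nonneg (by norm_num) S.ℓ_nonneg) (Real.sqrt_nonneg _)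

lemma noiseVar_pos : 0 < S.sigman ^ 2 * (S.d : ℝ) :=
  mul_pos (pow_pos S.hsigman 2) S.d_pos

lemma pun_nonneg : 0 ≤ S.pun := div_nonneg (Nat.cast_nonneg _) (Nat.cast_nonneg _)

lemma pun_mul_N : S.pun * S.N = S.SU.card :=
  div_mul_cancel₀ _ (one_pos.trans_le S.one_le_N).ne'

lemma one_le_inv_delta : 1 ≤ S.delta⁻¹ := (one_le_inv₀ S.hdelta0).2 S.hdelta1.le

variable {S} {C : ℝ}

namespace CondH

variable (h : S.CondH C)

include h

lemma horizon : C * S.N ≤ S.T * (S.eta * S.sigma0 * (S.sigman * Real.sqrt S.d) ^ 3) := by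
  have hη := S.heta
  have hσ₀ := S.hsigma0
  have hσ := S.hsigman
  have hd := S.d_pos
  have hT := h.2.1
  rw [div_le_iff₀ (by positivity)] at hT
  calc C * S.N ≤ _ := hT
    _ = S.T * (S.eta * S.sigma0 * (S.sigman ^ 3 * (S.d * Real.sqrt S.d))) := by ring
    _ = S.T * (S.eta * S.sigma0 * (S.sigman ^ 3 * (Real.sqrt S.d ^ 2 * Real.sqrt S.d))) := by
      rw [Real.sq_sqrt hd.le]
    _ = _ := by ring

lemma C_pos : 0 < C := one_pos.trans_le h.1

lemma T_pos : (0 : ℝ) < S.T := by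
  by_contra! hT
  have hCN : 0 < C * S.N := mul_pos h.C_pos (one_pos.trans_le S.one_le_N)
  have hη := S.heta
  have hσ₀ := S.hsigma0
  have hσ := S.hsigman
  exact (hCN.trans_le h.horizon).not_ge (mul_nonpos_of_nonpos_of_nonneg hT (by positivity))

lemma one_le_T : (1 : ℝ) ≤ S.T := by
  have := h.T_pos
  exact_mod_cast this

lemma log_T_le : Real.log S.T ≤ S.Λ := by
  refine Real.log_le_log h.T_pos ?_
  have hone : 1 ≤ S.N * S.m * S.P * S.delta⁻¹ :=
    one_le_mul_of_one_le_of_one_le (one_le_mul_of_one_le_of_one_le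
      (one_le_mul_of_one_le_of_one_le S.one_le_N S.one_le_m) S.one_le_P) S.one_le_inv_delta
  calc (S.T : ℝ) ≤ S.T * (S.N * S.m * S.P * S.delta⁻¹) := le_mul_of_one_le_right h.T_pos.le hone
    _ = _ := by ring

lemma two_le_P : 2 ≤ S.P := by
  have ⟨_, _, _, _, _, _, _, _, _, _, hP, _⟩ := h
  exact hP

lemma P_le : (S.P : ℝ) ≤ C := by
  have ⟨_, _, _, _, _, _, _, _, _, _, _, hP⟩ := h
  exact hP

lemma half_le_Λ : 1 / 2 ≤ S.Λ := by
  have hP2 : (2 : ℝ) ≤ S.P := by exact_mod_cast h.two_le_P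
  have hlog : Real.log 2 ≤ S.Λ := by
    refine Real.log_le_log two_pos ?_
    have hone : 1 ≤ S.T * S.N * S.m * S.delta⁻¹ :=
      one_le_mul_of_one_le_of_one_le (one_le_mul_of_one_le_of_one_le
        (one_le_mul_of_one_le_of_one_le h.one_le_T S.one_le_N) S.one_le_m) S.one_le_inv_delta
    calc (2 : ℝ) ≤ S.P := hP2
      _ ≤ S.P * (S.T * S.N * S.m * S.delta⁻¹) := le_mul_of_one_le_right (by linarith) hone
      _ = _ := by ring
  linarith [Real.log_two_gt_d9]

lemma rate_noise : C * S.Λ * (S.eta * (S.sigman ^ 2 * S.d)) ≤ 1 := by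
  have ⟨_, _, _, _, _, hη, _⟩ := h
  exact mul_le_one_of_le_inv_mul_div h.C_pos (by linarith [h.half_le_Λ]) S.noiseVar_pos hη
    ((min_le_left _ _).trans (min_le_right _ _))

lemma rate_signal : C * S.Λ * (S.eta * S.alpha ^ 2) ≤ 1 := by
  have ⟨_, _, _, _, _, hη, _⟩ := h
  exact mul_le_one_of_le_inv_mul_div h.C_pos (by linarith [h.half_le_Λ]) (pow_pos S.halpha 2) hη
    (min_le_right _ _)

lemma log_all_eq : Real.log ((S.T : ℝ) * S.d * S.N * S.m * S.P / S.delta) =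
    Real.log S.d + S.Λ := by
  have hT := h.T_pos
  have hN := S.one_le_N
  have hm := S.one_le_m
  have hP := S.one_le_P
  have hδ := S.hdelta0
  rw [Λ, ← Real.log_mul S.d_pos.ne' (by positivity)]
  congr 1
  ring

lemma init_le_of_le {M b : ℝ} (hb : 0 < b) (hM : M ≤ 1 / b)
    (hσ : S.sigma0 ≤ C⁻¹ * M / Real.log ((S.T : ℝ) * S.d * S.N * S.m * S.P / S.delta)) :
    C * S.Λ * (S.sigma0 * b) ≤ 1 := by
  have hC := h.C_pos
  have hσ₀ := S.hsigma0
  have hlogd := Real.log_nonneg S.one_le_d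
  rw [h.log_all_eq] at hσ
  refine le_trans ?_
    (mul_le_one_of_le_inv_mul_div hC (by linarith [h.half_le_Λ]) hb hσ hM)
  gcongr
  linarith

lemma init_signal : C * S.Λ * (S.sigma0 * (S.alpha * (S.m : ℝ) ^ ((2 : ℝ) / 3))) ≤ 1 := by
  have ⟨_, _, _, _, hσ₀, _⟩ := h
  have hα := S.halpha
  have hm := S.one_le_m
  exact h.init_le_of_le (by positivity) ((min_le_left _ _).trans (min_le_right _ _)) hσ₀

lemma init_noise : C * S.Λ * (S.ν * Real.sqrt S.d * S.m ^ 2 * Real.sqrt S.P) ≤ 1 := by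
  have ⟨_, _, _, _, hσ₀, _⟩ := h
  have hσ := S.hsigman
  have hm := S.one_le_m
  have hd := S.d_pos
  have hP := S.one_le_P
  have hsd := Real.mul_self_sqrt S.d_pos.le
  refine le_trans (le_of_eq ?_) (h.init_le_of_le (b := S.sigman * S.m ^ 2 * Real.sqrt S.P * S.d)
    (by positivity) (min_le_right _ _) hσ₀)
  unfold ν
  linear_combination (C * S.Λ * S.sigma0 * S.sigman * S.m ^ 2 * Real.sqrt S.P) * hsd

lemma sqrt_d_le_T (hC : 16 ≤ C) : 16 * Real.sqrt S.d ≤ S.T := by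
  have hη := S.heta
  have hν := S.ν_pos
  have hd := S.d_pos
  have hCΛ : 1 ≤ C * S.Λ := by nlinarith [h.half_le_Λ]
  have hrate : S.eta * (S.sigman ^ 2 * S.d) ≤ 1 :=
    (le_mul_of_one_le_left (by positivity) hCΛ).trans h.rate_noise
  have hinit : S.ν * Real.sqrt S.d ≤ 1 := by
    have hmP : 1 ≤ (S.m : ℝ) ^ 2 * Real.sqrt S.P :=
      one_le_mul_of_one_le_of_one_le (one_le_pow₀ S.one_le_m) S.one_le_sqrt_P
    calc S.ν * Real.sqrt S.d
        ≤ C * S.Λ * (S.m ^ 2 * Real.sqrt S.P) * (S.ν * Real.sqrt S.d) :=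
          le_mul_of_one_le_left (by positivity) (one_le_mul_of_one_le_of_one_le hCΛ hmP)
      _ = C * S.Λ * (S.ν * Real.sqrt S.d * S.m ^ 2 * Real.sqrt S.P) := by ring
      _ ≤ 1 := h.init_noise
  calc 16 * Real.sqrt S.d ≤ C * S.N * Real.sqrt S.d := by
        gcongr
        exact hC.trans (le_mul_of_one_le_right h.C_pos.le S.one_le_N)
    _ ≤ S.T * (S.eta * S.sigma0 * (S.sigman * Real.sqrt S.d) ^ 3) * Real.sqrt S.d :=
        mul_le_mul_of_nonneg_right h.horizon (Real.sqrt_nonneg _)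
    _ = S.T * ((S.eta * (S.sigman ^ 2 * Real.sqrt S.d ^ 2)) * (S.ν * Real.sqrt S.d)) := by
        unfold ν
        ring
    _ ≤ S.T * 1 := by
        rw [Real.sq_sqrt hd.le]
        gcongr
        exact mul_le_one₀ hrate (by positivity) hinit
    _ = S.T := mul_one _

lemma log_d_le (hC : 16 ≤ C) : Real.log S.d ≤ 2 * S.Λ := by
  have hsd : 0 < Real.sqrt S.d := one_pos.trans_le S.one_le_sqrt_d
  have hlog := Real.log_le_log hsd (show Real.sqrt S.d ≤ S.T by linarith [h.sqrt_d_le_T hC])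
  rw [Real.log_sqrt S.d_pos.le] at hlog
  linarith [h.log_T_le]

lemma dim : C * (S.m * S.P * S.N * S.Λ ^ 2) ^ 2 ≤ S.d := by
  have ⟨_, _, hd, _⟩ := h
  exact le_trans (le_of_eq (by rw [Λ]; ring)) hd

lemma eps_le : C * S.eps ≤ S.alpha := by
  have ⟨_, _, _, _, _, _, _, hε, _⟩ := h
  have hle := hε.le.trans
    (mul_le_mul_of_nonneg_left (min_le_left _ _) (inv_nonneg.2 h.C_pos.le))
  rwa [inv_mul_eq_div, le_div_iff₀' h.C_pos] at hle

lemma m_le_d (hΛ : 1 ≤ S.Λ) : (S.m : ℝ) ≤ S.d := by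
  have hm := S.one_le_m
  have hone : 1 ≤ S.P * S.N * S.Λ ^ 2 :=
    one_le_mul_of_one_le_of_one_le
      (one_le_mul_of_one_le_of_one_le S.one_le_P S.one_le_N) (one_le_pow₀ hΛ)
  have hmq : (S.m : ℝ) ≤ S.m * (S.P * S.N * S.Λ ^ 2) := le_mul_of_one_le_right (by linarith) hone
  calc (S.m : ℝ) ≤ 1 * (S.m * (S.P * S.N * S.Λ ^ 2)) ^ 2 := by
        rw [one_mul]
        exact hmq.trans (le_self_pow₀ (hm.trans hmq) two_ne_zero)
    _ ≤ C * (S.m * (S.P * S.N * S.Λ ^ 2)) ^ 2 := by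
        gcongr
        exact h.1
    _ = C * (S.m * S.P * S.N * S.Λ ^ 2) ^ 2 := by ring
    _ ≤ S.d := h.dim

lemma attack (hC : 16 ≤ C) (hΛ : 1 ≤ S.Λ) :
    C * (S.sigman * (S.m * Real.sqrt S.P * S.ℓ) *
      Real.sqrt (Real.log ((16 : ℝ) * S.d * S.N * S.P / S.delta))) ≤ S.eps := by
  have ⟨_, _, _, _, _, _, hε, _⟩ := h
  have hσ := S.hsigman
  have hδ := S.hdelta0
  have hT := h.T_pos
  have hd := S.d_pos
  have hN := S.one_le_N
  have hm := S.one_le_m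
  have hP := S.one_le_P
  set L := Real.log ((S.T : ℝ) * S.d * S.N * S.P / S.delta)
  have hlog : Real.log ((16 : ℝ) * S.d * S.N * S.P / S.delta) ≤ L := by
    refine Real.log_le_log (by positivity) ?_
    gcongr
    linarith [h.sqrt_d_le_T hC, S.one_le_sqrt_d]
  have hΛL : S.Λ ≤ L := by
    refine Real.log_le_log (by positivity) ?_
    calc (S.T : ℝ) * S.N * S.m * S.P / S.delta ≤ S.T * S.N * S.d * S.P / S.delta := by
          gcongr
          exact_mod_cast h.m_le_d hΛ
      _ = _ := by ring
  calc _ = C * S.sigman * S.m * Real.sqrt S.P *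
        (S.ℓ * Real.sqrt (Real.log ((16 : ℝ) * S.d * S.N * S.P / S.delta))) := by ring
    _ ≤ C * S.sigman * S.m * Real.sqrt S.P * (Real.sqrt L * Real.sqrt L) := by
        unfold ℓ
        gcongr
    _ = C * S.sigman * S.m * Real.sqrt S.P * L := by rw [Real.mul_self_sqrt (by linarith)]
    _ ≤ S.eps := hε

end CondH

namespace SparseRegime

variable (h : S.SparseRegime C) (hC : 0 < C)

include h

lemma le_card : C ≤ S.SU.card := by
  rw [← S.pun_mul_N, ← div_le_iff₀ (one_pos.trans_le S.one_le_N)]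
  exact h.1

include hC

lemma card_le_log_d : C * S.SU.card ≤ Real.log S.d := by
  have hpun := h.2.1
  rwa [le_div_iff₀ (one_pos.trans_le S.one_le_N), S.pun_mul_N, inv_mul_eq_div, le_div_iff₀' hC]
    at hpun

lemma sq_le_log_d : C ^ 2 ≤ Real.log S.d :=
  calc C ^ 2 = C * C := pow_two C
    _ ≤ C * S.SU.card := by
      gcongr
      exact h.le_card
    _ ≤ _ := h.card_le_log_d hC

end SparseRegime

lemma C_le_Λ (hC : 16 ≤ C) (hH : S.CondH C) (hS : S.SparseRegime C) : C ≤ S.Λ := by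
  have hsq := (hS.sq_le_log_d hH.C_pos).trans (hH.log_d_le hC)
  nlinarith

lemma sq_mul_card_le_N (hH : S.CondH C) (hS : S.SparseRegime C) :
    C ^ 2 * S.SU.card ≤ S.N := by
  have hC := hH.C_pos
  have hΛ := hH.half_le_Λ
  have hmP : 1 ≤ (S.m : ℝ) * S.P := one_le_mul_of_one_le_of_one_le S.one_le_m S.one_le_P
  have hN := hS.2.2
  rw [hH.log_all_eq] at hN
  calc C ^ 2 * S.SU.card = C * (C * S.SU.card) := by ring
    _ ≤ C * (Real.log S.d + S.Λ) := by
        gcongr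
        linarith [hS.card_le_log_d hC]
    _ ≤ C * (Real.log S.d + S.Λ) * (S.m * S.P) := le_mul_of_one_le_right (by positivity) hmP
    _ = C * S.m * S.P * (Real.log S.d + S.Λ) := by ring
    _ ≤ S.N := hN

lemma pun_lt_one (hC : 16 ≤ C) (hH : S.CondH C) (hS : S.SparseRegime C) : S.pun < 1 := by
  have hcard := sq_mul_card_le_N hH hS
  have hN := S.one_le_N
  have hC2 : 2 ≤ C ^ 2 := by nlinarith
  have htwo : 2 * (S.SU.card : ℝ) ≤ C ^ 2 * S.SU.card := by gcongr
  rw [pun, div_lt_one (by linarith)]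
  linarith

lemma signal_le (hC : 16 ≤ C) (hH : S.CondH C) (hS : S.SparseRegime C) :
    C * (S.sigman * Real.sqrt S.d) * S.Λ ≤ S.alpha * (S.N : ℝ) ^ ((1 : ℝ) / 3) := by
  have ⟨_, _, _, hα, _⟩ := hH
  have hpun := pun_lt_one hC hH hS
  have hα0 := S.halpha
  have hN := S.one_le_N
  have hpos : 0 < (S.N : ℝ) * (1 - S.pun) := mul_pos (by linarith) (by linarith)
  rw [div_le_iff₀ (by positivity)] at hα
  calc C * (S.sigman * Real.sqrt S.d) * S.Λ = C * S.sigman * Real.sqrt S.d * S.Λ := by ring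
    _ ≤ S.alpha * (S.N * (1 - S.pun)) ^ ((1 : ℝ) / 3) := hα
    _ ≤ S.alpha * (S.N : ℝ) ^ ((1 : ℝ) / 3) := by
        gcongr
        exact mul_le_of_le_one_right (by linarith) (by linarith [S.pun_nonneg])

/-- Condition (H) and the sparse-unlearnable regime for a large constant `C`, cleared of
denominators and of all logarithms but `Λ`. -/
structure ParamBounds (S : Setting) (C : ℝ) : Prop where
  C_ge : 10 ^ 20 ≤ C
  two_le_P : 2 ≤ S.P
  P_le : (S.P : ℝ) ≤ C
  T_ge : 16 ≤ (S.T : ℝ)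
  C_le_Λ : C ≤ S.Λ
  log_T_le : Real.log S.T ≤ S.Λ
  dim : C * (S.m * S.P * S.N * S.Λ ^ 2) ^ 2 ≤ S.d
  init_signal : C * S.Λ * (S.sigma0 * (S.alpha * (S.m : ℝ) ^ ((2 : ℝ) / 3))) ≤ 1
  init_noise : C * S.Λ * (S.ν * Real.sqrt S.d * S.m ^ 2 * Real.sqrt S.P) ≤ 1
  rate_noise : C * S.Λ * (S.eta * (S.sigman ^ 2 * S.d)) ≤ 1
  rate_signal : C * S.Λ * (S.eta * S.alpha ^ 2) ≤ 1
  horizon : C * S.N ≤ S.T * (S.eta * S.sigma0 * (S.sigman * Real.sqrt S.d) ^ 3)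
  signal : C * (S.sigman * Real.sqrt S.d) * S.Λ ≤ S.alpha * (S.N : ℝ) ^ ((1 : ℝ) / 3)
  attack : C * (S.sigman * (S.m * Real.sqrt S.P * S.ℓ) *
    Real.sqrt (Real.log ((16 : ℝ) * S.d * S.N * S.P / S.delta))) ≤ S.eps
  eps_le : C * S.eps ≤ S.alpha
  C_le_card : C ≤ S.SU.card
  card_le : C * S.SU.card ≤ 2 * S.Λ
  card_le_N : C ^ 2 * S.SU.card ≤ S.N

lemma paramBounds (hC : 10 ^ 20 ≤ C) (hH : S.CondH C) (hS : S.SparseRegime C) :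
    S.ParamBounds C := by
  have hC16 : 16 ≤ C := by linarith
  have hΛ : C ≤ S.Λ := C_le_Λ hC16 hH hS
  exact
    { C_ge := hC
      two_le_P := hH.two_le_P
      P_le := hH.P_le
      T_ge := by linarith [hH.sqrt_d_le_T hC16, S.one_le_sqrt_d]
      C_le_Λ := hΛ
      log_T_le := hH.log_T_le
      dim := hH.dim
      init_signal := hH.init_signal
      init_noise := hH.init_noise
      rate_noise := hH.rate_noise
      rate_signal := hH.rate_signal
      horizon := hH.horizon
      signal := signal_le hC16 hH hS
      attack := hH.attack hC16 (by linarith)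
      eps_le := hH.eps_le
      C_le_card := hS.le_card
      card_le := (hS.card_le_log_d hH.C_pos).trans (hH.log_d_le hC16)
      card_le_N := sq_mul_card_le_N hH hS }

end Setting

namespace Setting

variable {S : Setting} {C : ℝ}

lemma noiseVar_eq_sq : S.sigman ^ 2 * S.d = (S.sigman * Real.sqrt S.d) ^ 2 := by
  rw [mul_pow, Real.sq_sqrt S.d_pos.le]

lemma ν_eq : S.ν = S.sigma0 * (S.sigman * Real.sqrt S.d) := mul_assoc _ _ _

namespace ParamBounds

variable (h : S.ParamBounds C)

include h

lemma C_pos : 0 < C := by linarith [h.C_ge]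

lemma one_le_C : 1 ≤ C := by linarith [h.C_ge]

lemma one_le_Λ : 1 ≤ S.Λ := h.one_le_C.trans h.C_le_Λ

lemma ℓ_sq : S.ℓ ^ 2 = S.Λ := Real.sq_sqrt (by linarith [h.one_le_Λ])

lemma one_le_ℓ : 1 ≤ S.ℓ := Real.one_le_sqrt.2 h.one_le_Λ

lemma ℓ_le : S.ℓ ≤ S.Λ := by
  rw [← h.ℓ_sq]
  exact le_self_pow₀ h.one_le_ℓ two_ne_zero

lemma sqrt_le_two_mul_ℓ {z : ℝ} (hz : z ≤ 4 * S.Λ) : Real.sqrt z ≤ 2 * S.ℓ := by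
  refine Real.sqrt_le_iff.2 ⟨by linarith [h.one_le_ℓ], hz.trans_eq ?_⟩
  rw [← h.ℓ_sq]
  ring

lemma sqrt_C_ge : 10 ^ 10 ≤ Real.sqrt C :=
  Real.le_sqrt_of_sq_le (by linarith [h.C_ge])

lemma sqrt_C_mul_self : Real.sqrt C * Real.sqrt C = C := Real.mul_self_sqrt h.C_pos.le

lemma sqrt_C_mul_le_sqrt_d : Real.sqrt C * (S.m * S.P * S.N * S.Λ ^ 2) ≤ Real.sqrt S.d := by
  refine Real.le_sqrt_of_sq_le ?_
  rw [mul_pow, Real.sq_sqrt h.C_pos.le]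
  exact h.dim

lemma κ_mul_sqrt_C_le : S.κ * S.N * S.P * S.m * S.ℓ * (Real.sqrt C * S.Λ) ≤ 5 := by
  have hΛ := h.one_le_Λ
  have hsd : 0 < Real.sqrt S.d := Real.sqrt_pos.2 S.d_pos
  have hκℓ : S.κ * S.ℓ * Real.sqrt S.d = 5 * S.Λ := by
    rw [← h.ℓ_sq, κ]
    field_simp
  refine le_of_mul_le_mul_right (a := S.Λ) ?_ (by linarith)
  calc S.κ * S.N * S.P * S.m * S.ℓ * (Real.sqrt C * S.Λ) * S.Λ
      = S.κ * S.ℓ * (Real.sqrt C * (S.m * S.P * S.N * S.Λ ^ 2)) := by ring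
    _ ≤ S.κ * S.ℓ * Real.sqrt S.d :=
      mul_le_mul_of_nonneg_left h.sqrt_C_mul_le_sqrt_d (mul_nonneg S.κ_nonneg S.ℓ_nonneg)
    _ = 5 * S.Λ := hκℓ

lemma κ_small : S.κ * S.N * S.P * S.m * S.ℓ ≤ 1 / 10 ^ 6 := by
  have hκ := S.κ_nonneg
  have hℓ := S.ℓ_nonneg
  have hle : S.κ * S.N * S.P * S.m * S.ℓ * (10 ^ 10 * 1) ≤
      S.κ * S.N * S.P * S.m * S.ℓ * (Real.sqrt C * S.Λ) := by
    gcongr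
    exacts [h.sqrt_C_ge, h.one_le_Λ]
  linarith [h.κ_mul_sqrt_C_le]

lemma C_mul_ν_le {z : ℝ} (hz : z ≤ Real.sqrt S.d) : C * (S.ν * z * S.m * S.ℓ) ≤ 1 := by
  have hC := h.C_pos
  have hν := S.ν_pos
  have hℓ := S.ℓ_nonneg
  have hΛ := h.one_le_Λ
  calc C * (S.ν * z * S.m * S.ℓ)
      ≤ C * (S.ν * Real.sqrt S.d * S.m * S.ℓ) := by gcongr
    _ = C * S.ℓ * (S.ν * Real.sqrt S.d * S.m * 1) := by ring
    _ ≤ C * S.Λ * (S.ν * Real.sqrt S.d * S.m ^ 2 * Real.sqrt S.P) := by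
      gcongr
      exacts [h.ℓ_le, le_self_pow₀ S.one_le_m two_ne_zero, S.one_le_sqrt_P]
    _ ≤ 1 := h.init_noise

lemma ν_small : S.ν * S.N * S.P * S.m * S.ℓ ≤ 1 / 10 ^ 6 := by
  have hν := S.ν_pos
  have hℓ := S.ℓ_nonneg
  have hC := h.C_ge
  have hPN : (S.P * S.N : ℝ) ≤ Real.sqrt S.d := by
    refine le_trans ?_ h.sqrt_C_mul_le_sqrt_d
    calc (S.P * S.N : ℝ) = 1 * (1 * S.P * S.N * 1) := by ring
      _ ≤ _ := by
        gcongr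
        exacts [by linarith [h.sqrt_C_ge], S.one_le_m, one_le_pow₀ h.one_le_Λ]
  have hle : 10 ^ 20 * (S.ν * (S.P * S.N) * S.m * S.ℓ) ≤ C * (S.ν * (S.P * S.N) * S.m * S.ℓ) := by
    gcongr
  linarith [h.C_mul_ν_le hPN]

lemma noiseFloor_le :
    S.m * (4 * S.ν * S.ℓ + 12 * (S.κ * S.N * S.P * S.ℓ)) * Real.sqrt C ≤ 64 := by
  have hν := S.ν_pos
  have hκ := S.κ_nonneg
  have hℓ := S.ℓ_nonneg
  have hC : Real.sqrt C ≤ C := Real.sqrt_le_self_iff.2 (Or.inr h.one_le_C)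
  have hν_le : Real.sqrt C * (S.ν * 1 * S.m * S.ℓ) ≤ 1 := by
    refine le_trans ?_ (h.C_mul_ν_le S.one_le_sqrt_d)
    gcongr
  have hκ_le : S.κ * S.N * S.P * S.m * S.ℓ * (Real.sqrt C * 1) ≤ 5 := by
    refine le_trans ?_ h.κ_mul_sqrt_C_le
    gcongr
    exact h.one_le_Λ
  linarith

lemma noise_small :
    1728 * (S.m ^ 2 * S.P * (4 * S.ν * S.ℓ + 12 * (S.κ * S.N * S.P * S.ℓ)) ^ 3) ≤ 1 := by
  have hν := S.ν_pos
  have hκ := S.κ_nonneg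
  have hℓ := S.ℓ_nonneg
  have hcube := cube_le_cube h.noiseFloor_le
  set τ := 4 * S.ν * S.ℓ + 12 * (S.κ * S.N * S.P * S.ℓ)
  have hle : S.m ^ 2 * S.P * τ ^ 3 * 10 ^ 10 ≤ 64 ^ 3 :=
    calc S.m ^ 2 * S.P * τ ^ 3 * 10 ^ 10 ≤ S.m ^ 3 * C * τ ^ 3 * Real.sqrt C := by
          have hC := h.C_pos
          gcongr
          exacts [S.one_le_m, by norm_num, h.P_le, h.sqrt_C_ge]
      _ = (S.m * τ * Real.sqrt C) ^ 3 := by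
          linear_combination (-(S.m ^ 3 * τ ^ 3 * Real.sqrt C)) * h.sqrt_C_mul_self
      _ ≤ 64 ^ 3 := hcube
  linarith

lemma init_variance_small : S.m * S.P * S.ν ^ 2 ≤ 1 / 100 := by
  have hν := S.ν_pos
  have hm := S.one_le_m
  have hC := h.C_ge
  have hC0 := h.C_pos
  have hνm : C * (S.ν * S.m) ≤ 1 := by
    refine le_trans ?_ (h.C_mul_ν_le S.one_le_sqrt_d)
    rw [mul_one]
    exact mul_le_mul_of_nonneg_left (le_mul_of_one_le_right (by positivity) h.one_le_ℓ) hC0.le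
  have hνm_small : 10 ^ 20 * (S.ν * S.m) ≤ C * (S.ν * S.m) := by gcongr
  calc S.m * S.P * S.ν ^ 2 ≤ S.m ^ 2 * C * S.ν ^ 2 := by
        gcongr
        exacts [le_self_pow₀ hm two_ne_zero, h.P_le]
    _ = C * (S.ν * S.m) * (S.ν * S.m) := by ring
    _ ≤ 1 * (S.ν * S.m) := by gcongr
    _ ≤ 1 / 100 := by linarith

lemma learned_variance_small : S.m * S.P * (S.κ * S.N * S.P) ^ 2 ≤ 1 / 100 := by
  have hκ := S.κ_nonneg
  have hℓ := S.ℓ_nonneg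
  have hκC : S.κ * S.N * S.P * S.m * Real.sqrt C ≤ 1 / 100 := by
    have hle : S.κ * S.N * S.P * S.m * Real.sqrt C * (1 * 500) ≤
        S.κ * S.N * S.P * S.m * Real.sqrt C * (S.ℓ * S.Λ) := by
      gcongr
      exacts [h.one_le_ℓ, by linarith [h.C_ge, h.C_le_Λ]]
    linarith [h.κ_mul_sqrt_C_le]
  calc S.m * S.P * (S.κ * S.N * S.P) ^ 2 ≤ S.m ^ 2 * C * (S.κ * S.N * S.P) ^ 2 := by
        gcongr
        exacts [le_self_pow₀ S.one_le_m two_ne_zero, h.P_le]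
    _ = (S.κ * S.N * S.P * S.m * Real.sqrt C) ^ 2 := by
        linear_combination (-(S.m ^ 2 * (S.κ * S.N * S.P) ^ 2)) * h.sqrt_C_mul_self
    _ ≤ (1 / 100) ^ 2 := by gcongr
    _ ≤ 1 / 100 := by norm_num

lemma signal_cube : (C * (S.sigman * Real.sqrt S.d) * S.Λ) ^ 3 ≤ S.alpha ^ 3 * S.N := by
  have hcube := cube_le_cube h.signal
  rwa [mul_pow S.alpha, rpow_third_cube (Nat.cast_nonneg _)] at hcube

lemma signal_sq : (C * (S.sigman * Real.sqrt S.d) * S.Λ) ^ 2 ≤ S.alpha ^ 2 * S.N := by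
  have hσ := S.hsigman
  have hC := h.C_pos
  have hΛ := h.one_le_Λ
  have hroot : 1 ≤ (S.N : ℝ) ^ ((1 : ℝ) / 3) := Real.one_le_rpow S.one_le_N (by norm_num)
  calc (C * (S.sigman * Real.sqrt S.d) * S.Λ) ^ 2
      ≤ (S.alpha * (S.N : ℝ) ^ ((1 : ℝ) / 3)) ^ 2 :=
        pow_le_pow_left₀ (by positivity) h.signal 2
    _ = S.alpha ^ 2 * ((S.N : ℝ) ^ ((1 : ℝ) / 3)) ^ 2 := mul_pow _ _ _
    _ ≤ S.alpha ^ 2 * ((S.N : ℝ) ^ ((1 : ℝ) / 3)) ^ 3 := by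
        gcongr
        norm_num
    _ = S.alpha ^ 2 * S.N := by rw [rpow_third_cube (Nat.cast_nonneg _)]

lemma le_signal_horizon : C ≤ S.T * (S.eta * S.sigma0 * S.alpha ^ 3) := by
  have hσ := S.hsigman
  have hσ₀ := S.hsigma0
  have hη := S.heta
  have hN := S.one_le_N
  have hCΛ : 1 ≤ C * S.Λ := one_le_mul_of_one_le_of_one_le h.one_le_C h.one_le_Λ
  have hA : (S.sigman * Real.sqrt S.d) ^ 3 ≤ S.alpha ^ 3 * S.N := by
    refine le_trans (cube_le_cube ?_) h.signal_cube
    linarith [le_mul_of_one_le_right (by positivity : 0 ≤ S.sigman * Real.sqrt S.d) hCΛ]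
  refine le_of_mul_le_mul_right (a := (S.N : ℝ)) ?_ (by linarith)
  calc C * S.N ≤ S.T * (S.eta * S.sigma0 * (S.sigman * Real.sqrt S.d) ^ 3) := h.horizon
    _ ≤ S.T * (S.eta * S.sigma0 * (S.alpha ^ 3 * S.N)) := by gcongr
    _ = _ := by ring

lemma attack_dominates_noise :
    10 ^ 4 * (S.m * Real.sqrt S.P * S.ℓ) *
      (S.sigman * Real.sqrt (2 * Real.log ((16 : ℝ) * S.d * S.N * S.P / S.delta))) ≤ S.eps := by
  have hσ := S.hsigman
  have hℓ := S.ℓ_nonneg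
  have hsqrt : Real.sqrt 2 ≤ 2 := Real.sqrt_le_self_iff.2 (by norm_num)
  rw [Real.sqrt_mul zero_le_two]
  calc _ = 10 ^ 4 * Real.sqrt 2 * (S.sigman * (S.m * Real.sqrt S.P * S.ℓ) *
        Real.sqrt (Real.log ((16 : ℝ) * S.d * S.N * S.P / S.delta))) := by ring
    _ ≤ C * (S.sigman * (S.m * Real.sqrt S.P * S.ℓ) *
        Real.sqrt (Real.log ((16 : ℝ) * S.d * S.N * S.P / S.delta))) := by
      gcongr
      linarith [h.C_ge]
    _ ≤ S.eps := h.attack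

lemma C_mul_card_le_N : C * S.SU.card ≤ S.N := by
  refine le_trans ?_ h.card_le_N
  gcongr
  exact le_self_pow₀ h.one_le_C two_ne_zero

lemma C_mul_pun_le_one : C * S.pun ≤ 1 := by
  rw [pun, ← mul_div_assoc, div_le_one (by linarith [S.one_le_N])]
  exact h.C_mul_card_le_N

lemma signal_init_le :
    S.alpha * S.sigma0 * S.ℓ * (S.m : ℝ) ^ ((2 : ℝ) / 3) ≤ 1 / 10 := by
  have hσ₀ := S.hsigma0
  have hα := S.halpha
  have hℓ := S.ℓ_nonneg
  have hC := h.C_pos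
  have hle : 10 * S.ℓ * (S.sigma0 * (S.alpha * (S.m : ℝ) ^ ((2 : ℝ) / 3))) ≤
      C * S.Λ * (S.sigma0 * (S.alpha * (S.m : ℝ) ^ ((2 : ℝ) / 3))) := by
    gcongr
    exacts [by linarith [h.C_ge], h.ℓ_le]
  linarith [h.init_signal]

lemma sHigh_le_one : 3 * (S.alpha * S.sigma0) * S.ℓ ≤ 1 := by
  have hσ₀ := S.hsigma0
  have hα := S.halpha
  have hℓ := S.ℓ_nonneg
  have hm : 1 ≤ (S.m : ℝ) ^ ((2 : ℝ) / 3) := Real.one_le_rpow S.one_le_m (by norm_num)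
  have hle : S.alpha * S.sigma0 * S.ℓ ≤ S.alpha * S.sigma0 * S.ℓ * (S.m : ℝ) ^ ((2 : ℝ) / 3) :=
    le_mul_of_one_le_right (by positivity) hm
  linarith [h.signal_init_le]

lemma sHigh_small : S.m * (3 * (S.alpha * S.sigma0) * S.ℓ) ^ 3 ≤ 1 / 4 := by
  have hσ₀ := S.hsigma0
  have hα := S.halpha
  have hℓ := S.ℓ_nonneg
  have hm : ((S.m : ℝ) ^ ((2 : ℝ) / 3)) ^ 3 = S.m ^ 2 := by
    rw [← Real.rpow_mul_natCast (Nat.cast_nonneg _), ← Real.rpow_natCast]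
    norm_num
  calc S.m * (3 * (S.alpha * S.sigma0) * S.ℓ) ^ 3
      = 27 * ((S.alpha * S.sigma0 * S.ℓ) ^ 3 * S.m) := by ring
    _ ≤ 27 * ((S.alpha * S.sigma0 * S.ℓ) ^ 3 * S.m ^ 2) := by
        gcongr
        exact le_self_pow₀ S.one_le_m two_ne_zero
    _ = 27 * (S.alpha * S.sigma0 * S.ℓ * (S.m : ℝ) ^ ((2 : ℝ) / 3)) ^ 3 := by
        rw [mul_pow _ ((S.m : ℝ) ^ ((2 : ℝ) / 3)), hm]
    _ ≤ 27 * (1 / 10) ^ 3 := by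
        gcongr
        exact h.signal_init_le
    _ ≤ 1 / 4 := by norm_num

lemma signal_rate_small : 3 * S.eta * S.alpha ^ 2 * S.ℓ ^ 2 ≤ 1 / 10 ^ 6 := by
  have hη := S.heta
  have hΛ := h.one_le_Λ
  have hle : 10 ^ 20 * S.Λ * (S.eta * S.alpha ^ 2) ≤ C * S.Λ * (S.eta * S.alpha ^ 2) := by
    gcongr
    exact h.C_ge
  rw [h.ℓ_sq]
  linarith [h.rate_signal]

lemma noise_rate_small : 3 * S.eta * (S.sigman ^ 2 * S.d) * S.ℓ ^ 2 ≤ 1 / 10 ^ 6 := by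
  have hη := S.heta
  have hΛ := h.one_le_Λ
  have hle : 10 ^ 20 * S.Λ * (S.eta * (S.sigman ^ 2 * S.d)) ≤
      C * S.Λ * (S.eta * (S.sigman ^ 2 * S.d)) := by
    gcongr
    exact h.C_ge
  rw [h.ℓ_sq]
  linarith [h.rate_noise]

lemma card_SU_le : (S.SU.card : ℝ) ≤ S.ℓ ^ 2 := by
  have htwo : 2 * (S.SU.card : ℝ) ≤ C * S.SU.card := by
    gcongr
    linarith [h.C_ge]
  rw [h.ℓ_sq]
  linarith [h.card_le]

lemma card_SU_le_N : 64 * (S.SU.card : ℝ) ≤ S.N := by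
  refine le_trans ?_ h.C_mul_card_le_N
  gcongr
  linarith [h.C_ge]

lemma SU_nonempty : S.SU.Nonempty := by
  have hcard : (0 : ℝ) < S.SU.card := h.C_pos.trans_le h.C_le_card
  exact Finset.card_pos.1 (by exact_mod_cast hcard)

lemma margin_cap_le_d : 700 * (S.m * S.P * S.ℓ ^ 3) + 10 ≤ (S.d : ℝ) := by
  have hm := S.one_le_m
  have hP := S.one_le_P
  have hN := S.one_le_N
  have hℓ := h.one_le_ℓ
  set q := S.m * S.P * S.N * S.Λ ^ 2 with hq
  have hle : S.m * S.P * S.ℓ ^ 3 ≤ q :=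
    calc S.m * S.P * S.ℓ ^ 3 = S.m * S.P * 1 * S.ℓ ^ 3 := by ring
      _ ≤ S.m * S.P * S.N * S.ℓ ^ 4 := by
        gcongr
        norm_num
      _ = q := by
        rw [hq, ← h.ℓ_sq]
        ring
  have hq1 : 1 ≤ q :=
    one_le_mul_of_one_le_of_one_le (one_le_mul_of_one_le_of_one_le
      (one_le_mul_of_one_le_of_one_le hm hP) hN) (one_le_pow₀ h.one_le_Λ)
  have hqsq : 1000 * q ≤ C * q ^ 2 := by
    gcongr
    exacts [h.C_pos.le, by linarith [h.C_ge], le_self_pow₀ hq1 two_ne_zero]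
  linarith [h.dim]

lemma signal_faster_early :
    10 ^ 5 * (3 * S.eta * (S.sigman ^ 2 * S.d) * S.ν * S.ℓ ^ 2) ≤
      3 * S.eta * S.alpha ^ 2 * (S.alpha * S.sigma0 / 2) * S.N := by
  have hη := S.heta
  have hσ₀ := S.hsigma0
  have hσ := S.hsigman
  have hC := h.C_pos
  have hΛ := h.one_le_Λ
  rw [h.ℓ_sq, noiseVar_eq_sq, ν_eq]
  set A := S.sigman * Real.sqrt S.d
  have hle : 10 ^ 6 * (A ^ 3 * S.Λ) ≤ S.alpha ^ 3 * S.N :=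
    calc 10 ^ 6 * (A ^ 3 * S.Λ) ≤ C ^ 3 * (A ^ 3 * S.Λ ^ 3) := by
          have hC3 : C ≤ C ^ 3 := le_self_pow₀ h.one_le_C three_ne_zero
          gcongr
          exacts [by linarith [h.C_ge], le_self_pow₀ hΛ three_ne_zero]
      _ = (C * A * S.Λ) ^ 3 := by ring
      _ ≤ _ := h.signal_cube
  have hscaled := mul_le_mul_of_nonneg_left hle (mul_pos hη hσ₀).le
  have hnonneg : 0 ≤ S.eta * S.sigma0 * (A ^ 3 * S.Λ) := by positivity
  linarith

lemma signal_faster_late :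
    3 * S.eta * (S.sigman ^ 2 * S.d) * S.ℓ ^ 3 ≤ 3 * S.eta * S.alpha ^ 2 * S.N := by
  have hη := S.heta
  have hℓ := h.one_le_ℓ
  rw [noiseVar_eq_sq]
  set A := S.sigman * Real.sqrt S.d
  have hle : A ^ 2 * S.ℓ ^ 3 ≤ S.alpha ^ 2 * S.N :=
    calc A ^ 2 * S.ℓ ^ 3 ≤ A ^ 2 * S.ℓ ^ 4 := by
          gcongr
          norm_num
      _ = 1 * (A ^ 2 * S.Λ ^ 2) := by
          rw [← h.ℓ_sq]
          ring
      _ ≤ C ^ 2 * (A ^ 2 * S.Λ ^ 2) := by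
          gcongr
          exact one_le_pow₀ h.one_le_C
      _ = (C * A * S.Λ) ^ 2 := by ring
      _ ≤ _ := h.signal_sq
  linarith [mul_le_mul_of_nonneg_left hle hη.le]

lemma noise_horizon : 1000 * S.N < S.T * (3 * S.eta * (S.sigman ^ 2 * S.d)) * S.ν := by
  have hN := S.one_le_N
  have hle : 10 ^ 20 * (S.N : ℝ) ≤ C * S.N := by
    gcongr
    exact h.C_ge
  rw [noiseVar_eq_sq, ν_eq]
  linarith [h.horizon]

lemma two_eps_le : 2 * S.eps ≤ S.alpha := by
  refine le_trans ?_ h.eps_le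
  have hε := S.heps
  gcongr
  linarith [h.C_ge]

lemma log_gram_le : Real.log ((16 : ℝ) * S.N ^ 2 * S.P ^ 2 / S.delta) ≤ 2 * S.Λ := by
  have hm := S.one_le_m
  have hP := S.one_le_P
  have hN := S.one_le_N
  have hδ := S.hdelta0
  have hΛ : 2 * S.Λ = Real.log (((S.T : ℝ) * S.N * S.m * S.P / S.delta) ^ 2) := by
    rw [Real.log_pow, Λ]
    norm_num
  have hδ2 : S.delta ^ 2 ≤ S.delta := pow_le_of_le_one hδ.le S.hdelta1.le two_ne_zero
  rw [hΛ]
  refine Real.log_le_log (by positivity) ?_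
  calc (16 : ℝ) * S.N ^ 2 * S.P ^ 2 / S.delta = 16 * S.N ^ 2 * 1 * S.P ^ 2 / S.delta := by ring
    _ ≤ S.T ^ 2 * S.N ^ 2 * S.m ^ 2 * S.P ^ 2 / S.delta ^ 2 := by
      gcongr
      exacts [by nlinarith [h.T_ge], one_le_pow₀ hm]
    _ = _ := by ring

lemma log_init_noise_le : Real.log ((16 : ℝ) * S.N * S.m * S.P / S.delta) ≤ S.Λ := by
  have hm := S.one_le_m
  have hP := S.one_le_P
  have hN := S.one_le_N
  have hδ := S.hdelta0
  refine Real.log_le_log (by positivity) ?_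
  gcongr
  exact h.T_ge

lemma log_init_signal_le : Real.log ((16 : ℝ) * S.m / S.delta) ≤ S.Λ := by
  have hm := S.one_le_m
  have hδ := S.hdelta0
  refine le_trans (Real.log_le_log (by positivity) ?_) h.log_init_noise_le
  calc (16 : ℝ) * S.m / S.delta = 16 * 1 * S.m * 1 / S.delta := by ring
    _ ≤ _ := by
      gcongr
      exacts [S.one_le_N, S.one_le_P]

end ParamBounds

end Setting

lemma exists_ne_of_two_le {P : ℕ} (hP : 2 ≤ P) (p : Fin P) : ∃ q, q ≠ p :=
  have : Nontrivial (Fin P) := Fin.nontrivial_iff_two_le.2 hP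
  exists_ne p

namespace Setting

variable {S : Setting} {C Γ : ℝ} {fT : Fin S.N → ℝ}

namespace EventE

variable (hE : S.EventE)

include hE

lemma noise_sup_le {i : Fin S.N} {j : Fin S.P} (hj : j ≠ S.sig i) (k : Fin S.d) :
    |S.x i j k| ≤
      S.sigman * Real.sqrt (2 * Real.log ((16 : ℝ) * S.d * S.N * S.P / S.delta)) :=
  hE.2.2.1 i j hj k

lemma gram_self_mem (z : Fin S.N × Fin S.P) : S.gram z z ∈ Set.Icc (1 / 2 : ℝ) (3 / 2) := by
  by_cases hz : z.2 = S.sig z.1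
  · rw [gram, if_pos (Or.inl hz), if_pos rfl]
    norm_num
  · obtain ⟨hlow, hhigh⟩ := hE.1 z.1 z.2 hz
    rw [gram, if_neg (by simp [hz]), y_mul_y, one_mul, Set.mem_Icc, le_div_iff₀ S.noiseVar_pos,
      div_le_iff₀ S.noiseVar_pos]
    unfold sqnorm at hlow hhigh
    constructor <;> linarith

lemma abs_gram_le (h : S.ParamBounds C) {z z' : Fin S.N × Fin S.P} (hne : z ≠ z') :
    |S.gram z z'| ≤ S.κ := by
  by_cases hz : z.2 = S.sig z.1 ∨ z'.2 = S.sig z'.1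
  · rw [gram, if_pos hz, if_neg hne, abs_zero]
    exact S.κ_nonneg
  rw [gram, if_neg hz, abs_div, abs_mul, abs_mul, abs_y, abs_y, one_mul, one_mul,
    abs_of_pos S.noiseVar_pos, div_le_iff₀ S.noiseVar_pos]
  push Not at hz
  have hdot := hE.2.1 z.1 z'.1 z.2 z'.2 hz.1 hz.2 hne
  rw [Real.sqrt_mul S.d_pos.le] at hdot
  have hlog : Real.sqrt (Real.log ((16 : ℝ) * S.N ^ 2 * S.P ^ 2 / S.delta)) ≤ 2 * S.ℓ :=
    h.sqrt_le_two_mul_ℓ (by linarith [h.log_gram_le, h.one_le_Λ])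
  have hℓ := S.ℓ_nonneg
  have hd : Real.sqrt S.d * Real.sqrt S.d = S.d := Real.mul_self_sqrt S.d_pos.le
  have hd0 : Real.sqrt S.d ≠ 0 := (one_pos.trans_le S.one_le_sqrt_d).ne'
  calc |dot (S.x z.1 z.2) (S.x z'.1 z'.2)|
      ≤ 2 * S.sigman ^ 2 * (Real.sqrt S.d * (2 * S.ℓ)) := hdot.trans (by gcongr)
    _ ≤ 5 * S.ℓ * (S.sigman ^ 2 * Real.sqrt S.d) := by
      linarith [show 0 ≤ S.ℓ * (S.sigman ^ 2 * Real.sqrt S.d) by positivity]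
    _ = S.κ * (S.sigman ^ 2 * S.d) := by
      rw [κ, div_mul_eq_mul_div, eq_div_iff hd0]
      linear_combination (5 * S.ℓ * S.sigman ^ 2) * hd

lemma abs_noiseCorr_zero_le (h : S.ParamBounds C) (z : Fin S.N × Fin S.P) (r : Fin S.m) :
    |S.noiseCorr 0 z r| ≤ 4 * S.ν * S.ℓ := by
  have hν := S.ν_pos
  have hℓ := S.ℓ_nonneg
  by_cases hz : z.2 = S.sig z.1
  · rw [noiseCorr, if_pos hz, abs_zero]
    positivity
  have hlog : Real.sqrt (Real.log ((16 : ℝ) * S.N * S.m * S.P / S.delta)) ≤ 2 * S.ℓ :=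
    h.sqrt_le_two_mul_ℓ (by linarith [h.log_init_noise_le, h.one_le_Λ])
  have hdot := hE.2.2.2.2.2.1 r z.1 z.2 hz
  rw [Real.sqrt_mul S.d_pos.le] at hdot
  rw [noiseCorr, if_neg hz, abs_mul, abs_y, one_mul]
  calc |dot (S.w 0 r) (S.x z.1 z.2)|
      ≤ 2 * S.ν * Real.sqrt (Real.log ((16 : ℝ) * S.N * S.m * S.P / S.delta)) := by
        rw [ν]
        linarith
    _ ≤ 2 * S.ν * (2 * S.ℓ) := by gcongr
    _ = 4 * S.ν * S.ℓ := by ring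

lemma exists_le_noiseCorr_zero (h : S.ParamBounds C) :
    ∃ z r, z.1 ∉ S.SL ∧ S.ν / 4 ≤ S.noiseCorr 0 z r := by
  obtain ⟨i, hi⟩ := h.SU_nonempty
  obtain ⟨j, hj⟩ := exists_ne_of_two_le h.two_le_P (S.sig i)
  obtain ⟨r, hr⟩ := hE.2.2.2.2.2.2.2 i j hj
  exact ⟨(i, j), r, S.notMem_SL.2 hi, by rwa [noiseCorr, if_neg hj]⟩

lemma abs_signal_zero_le (h : S.ParamBounds C) (r : Fin S.m) :
    |S.alpha * S.wsig 0 r| ≤ 3 * (S.alpha * S.sigma0) * S.ℓ := by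
  have hα := S.halpha
  have hσ₀ := S.hsigma0
  have hlog : Real.sqrt (2 * Real.log ((16 : ℝ) * S.m / S.delta)) ≤ 2 * S.ℓ :=
    h.sqrt_le_two_mul_ℓ (by linarith [h.log_init_signal_le, h.one_le_Λ])
  have hdot := hE.2.2.2.2.1 r
  rw [dot_e1] at hdot
  calc |S.alpha * S.wsig 0 r| = S.alpha * |S.wsig 0 r| := by rw [abs_mul, abs_of_pos hα]
    _ ≤ S.alpha * (S.sigma0 * (2 * S.ℓ)) := by
      gcongr
      exact hdot.trans (by gcongr)
    _ ≤ 3 * (S.alpha * S.sigma0) * S.ℓ := by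
      linarith [mul_nonneg (mul_pos hα hσ₀).le S.ℓ_nonneg]

lemma exists_le_signal_zero : ∃ r, S.alpha * S.sigma0 / 2 ≤ S.alpha * S.wsig 0 r := by
  obtain ⟨r, hr⟩ := hE.2.2.2.2.2.2.1
  rw [dot_e1] at hr
  refine ⟨r, ?_⟩
  rw [mul_div_assoc]
  exact mul_le_mul_of_nonneg_left hr S.halpha.le

end EventE

lemma strength_mem (h : S.ParamBounds C) (t : ℕ) {i : Fin S.N} (hi : i ∈ S.SL) :
    S.strength t i ∈ Set.Icc (1 / 8 : ℝ) 1 := by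
  have hα := S.halpha
  obtain ⟨hlow, hhigh⟩ := S.hadvlearn t i hi
  have hhalf : 1 / 2 ≤ S.attackedSignal t i / S.alpha := by
    rw [le_div_iff₀ hα, attackedSignal]
    linarith [h.two_eps_le]
  have hone : S.attackedSignal t i / S.alpha ≤ 1 := (div_le_one hα).2 hhigh
  rw [strength, if_pos hi]
  constructor
  · exact (by norm_num : (1 / 8 : ℝ) = (1 / 2) ^ 3).trans_le (cube_le_cube hhalf)
  · exact (cube_le_cube hone).trans_eq (one_pow 3)

/-- Adversarial distillation under a Bad Teacher, on the event `E`, as normalized dynamics. -/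
def toBadTeacherDynamics (hdyn : S.ADDyn fT) (hE : S.EventE) (h : S.ParamBounds C)
    (hdΓ : S.d ≤ Γ) (hΓ : ∀ i, Γ ≤ S.y i * fT i) : BadTeacherDynamics S.N S.m S.P S.T where
  toDynamics := S.dynamics fT
  κ := S.κ
  ν := S.ν
  ℓ := S.ℓ
  sLow := S.alpha * S.sigma0 / 2
  sHigh := 3 * (S.alpha * S.sigma0) * S.ℓ
  Γ := Γ
  coef_zero z r := by simp [dynamics, noiseCoef, rhoAD]
  coef_succ := hdyn.coef_dynamics_succ
  signal_succ := hdyn.signal_dynamics_succ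
  le_teacher := hΓ
  strength_mem t _ hi := strength_mem h t hi
  strength_eq_zero _ _ hi := if_neg hi
  gram_self_mem := hE.gram_self_mem
  abs_gram_le _ _ hne := hE.abs_gram_le h hne
  abs_initCorr_le := hE.abs_noiseCorr_zero_le h
  exists_le_initCorr := hE.exists_le_noiseCorr_zero h
  abs_signal_zero_le := hE.abs_signal_zero_le h
  exists_le_signal_zero := hE.exists_le_signal_zero
  one_le_ℓ := h.one_le_ℓ
  log_T_le := h.log_T_le.trans_eq h.ℓ_sq.symm
  κ_nonneg := S.κ_nonneg
  κ_small := h.κ_small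
  ν_pos := S.ν_pos
  ν_small := h.ν_small
  sLow_pos := half_pos (mul_pos S.halpha S.hsigma0)
  sHigh_le_one := h.sHigh_le_one
  sHigh_small := h.sHigh_small
  ηs_pos := mul_pos (mul_pos three_pos S.heta) (pow_pos S.halpha 2)
  ηs_small := h.signal_rate_small
  ηn_pos := mul_pos (mul_pos three_pos S.heta) S.noiseVar_pos
  ηn_small := h.noise_rate_small
  noise_small := h.noise_small
  card_unlearnable_le := by
    rw [dynamics, compl_SL]
    exact h.card_SU_le
  card_unlearnable_le_N := by
    rw [dynamics, compl_SL]
    exact h.card_SU_le_N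
  le_Γ := h.margin_cap_le_d.trans hdΓ
  signal_faster_early := h.signal_faster_early
  signal_faster_late := h.signal_faster_late
  horizon := h.noise_horizon

end Setting

/-! ### The test distribution -/

lemma exists_noiseCoordLaw_eq (sigman : ℝ) (d : ℕ) (k : Fin d) :
    ∃ v : ℝ≥0, noiseCoordLaw sigman d k = gaussianReal 0 v ∧
      (v : ℝ) ≤ if (k : ℕ) = 0 then 0 else sigman ^ 2 := by
  unfold noiseCoordLaw
  by_cases h : (k : ℕ) = 0 ∨ (k : ℕ) = d - 1
  · refine ⟨0, by rw [if_pos h, gaussianReal_zero_var], ?_⟩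
    rw [NNReal.coe_zero]
    split_ifs <;> positivity
  · refine ⟨⟨sigman ^ 2, sq_nonneg _⟩, by rw [if_neg h], ?_⟩
    push Not at h
    rw [if_neg h.1]
    exact le_rfl

instance isProbabilityMeasure_noiseCoordLaw (sigman : ℝ) (d : ℕ) (k : Fin d) :
    IsProbabilityMeasure (noiseCoordLaw sigman d k) := by
  obtain ⟨v, hv, -⟩ := exists_noiseCoordLaw_eq sigman d k
  rw [hv]
  infer_instance

instance isProbabilityMeasure_noisePatchLaw (sigman : ℝ) (d : ℕ) :
    IsProbabilityMeasure (noisePatchLaw sigman d) := by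
  unfold noisePatchLaw
  infer_instance

instance isProbabilityMeasure_uniformPatch (P : ℕ) (hP : 0 < P) :
    IsProbabilityMeasure (uniformPatch P hP) := by
  unfold uniformPatch
  infer_instance

section NoiseMoments

variable (sigman : ℝ)

lemma memLp_noiseCoordLaw (d : ℕ) (k : Fin d) : MemLp id 2 (noiseCoordLaw sigman d k) := by
  obtain ⟨v, hv, -⟩ := exists_noiseCoordLaw_eq sigman d k
  rw [hv]
  exact memLp_id_gaussianReal 2

lemma integral_noiseCoordLaw (d : ℕ) (k : Fin d) : ∫ z, z ∂noiseCoordLaw sigman d k = 0 := by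
  obtain ⟨v, hv, -⟩ := exists_noiseCoordLaw_eq sigman d k
  rw [hv, integral_id_gaussianReal]

lemma variance_noiseCoordLaw_le (d : ℕ) (k : Fin d) :
    Var[id; noiseCoordLaw sigman d k] ≤ if (k : ℕ) = 0 then 0 else sigman ^ 2 := by
  obtain ⟨v, hv, hle⟩ := exists_noiseCoordLaw_eq sigman d k
  rwa [hv, variance_id_gaussianReal]

variable {d : ℕ} (w : Fin d → ℝ)

lemma memLp_dot_noisePatchLaw : MemLp (fun ξ => dot w ξ) 2 (noisePatchLaw sigman d) := by
  unfold dot noisePatchLaw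
  exact memLp_finsetSum _ fun k _ => ((memLp_noiseCoordLaw sigman d k).comp_measurePreserving
    (measurePreserving_eval _ k)).const_mul (w k)

lemma integral_dot_noisePatchLaw : ∫ ξ, dot w ξ ∂noisePatchLaw sigman d = 0 := by
  unfold dot noisePatchLaw
  rw [integral_finsetSum]
  · refine Finset.sum_eq_zero fun k _ => ?_
    rw [integral_const_mul, integral_eval, integral_noiseCoordLaw, mul_zero]
  · exact fun k _ => (integrable_comp_eval (f := fun z => z)
      ((memLp_noiseCoordLaw sigman d k).integrable one_le_two)).const_mul (w k)

lemma integral_dot_sq_noisePatchLaw_le :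
    ∫ ξ, dot w ξ ^ 2 ∂noisePatchLaw sigman d ≤
      sigman ^ 2 * ∑ k : Fin d, if (k : ℕ) = 0 then 0 else w k ^ 2 := by
  have hsum : (fun ξ : Fin d → ℝ => dot w ξ) = ∑ k, fun ξ : Fin d → ℝ => w k * id (ξ k) := by
    ext ξ
    simp [dot]
  rw [← variance_of_integral_eq_zero
      (memLp_dot_noisePatchLaw sigman w).aestronglyMeasurable.aemeasurable
      (integral_dot_noisePatchLaw sigman w),
    hsum, noisePatchLaw,
    variance_sum_pi fun k => (memLp_noiseCoordLaw sigman d k).const_mul (w k), mul_sum]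
  refine Finset.sum_le_sum fun k _ => ?_
  rw [variance_const_mul]
  refine (mul_le_mul_of_nonneg_left (variance_noiseCoordLaw_le sigman d k) (sq_nonneg _)).trans ?_
  split_ifs <;> simp [mul_comm]

end NoiseMoments

section FreshNoise

variable {m P d : ℕ} (sigman : ℝ) (w : Fin m → Fin d → ℝ)

lemma measurable_dot (v : Fin d → ℝ) : Measurable fun ξ : Fin d → ℝ => dot v ξ := by
  unfold dot
  fun_prop

lemma integrable_dot_sq_pi_noisePatchLaw (r : Fin m) (p : Fin P) :
    Integrable (fun ξ : Fin P → Fin d → ℝ => dot (w r) (ξ p) ^ 2)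
      (Measure.pi fun _ => noisePatchLaw sigman d) :=
  integrable_comp_eval (μ := fun _ : Fin P => noisePatchLaw sigman d) (i := p)
    (f := fun ξ : Fin d → ℝ => dot (w r) ξ ^ 2)
    (memLp_dot_noisePatchLaw sigman (w r)).integrable_sq

variable {w} {b : ℝ}
  (hw : ∀ r, sigman ^ 2 * ∑ k : Fin d, (if (k : ℕ) = 0 then 0 else w r k ^ 2) ≤ b)

include hw

lemma integral_sum_dot_sq_le :
    ∫ ξ, ∑ r, ∑ p, dot (w r) (ξ p) ^ 2 ∂Measure.pi (fun _ : Fin P => noisePatchLaw sigman d) ≤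
      m * P * b := by
  have hint := integrable_dot_sq_pi_noisePatchLaw (P := P) sigman w
  have hpatch (r : Fin m) (p : Fin P) :
      ∫ ξ, dot (w r) (ξ p) ^ 2 ∂Measure.pi (fun _ : Fin P => noisePatchLaw sigman d) ≤ b := by
    rw [integral_comp_eval (μ := fun _ : Fin P => noisePatchLaw sigman d) (i := p)
      (f := fun ξ : Fin d → ℝ => dot (w r) ξ ^ 2)
      ((measurable_dot (w r)).pow_const 2).aestronglyMeasurable]
    exact (integral_dot_sq_noisePatchLaw_le sigman (w r)).trans (hw r)
  rw [integral_finsetSum _ fun r _ => integrable_finsetSum _ fun p _ => hint r p]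
  simp only [integral_finsetSum _ fun p _ => hint _ p]
  calc ∑ r, ∑ p, ∫ ξ, dot (w r) (ξ p) ^ 2 ∂Measure.pi (fun _ : Fin P => noisePatchLaw sigman d)
      ≤ ∑ _r : Fin m, ∑ _p : Fin P, b := sum_le_sum fun r _ => sum_le_sum fun p _ => hpatch r p
    _ = m * P * b := by
      simp only [sum_const, card_univ, Fintype.card_fin, nsmul_eq_mul]
      ring

lemma half_le_measure_sum_dot_sq_le_one (hb : m * P * b ≤ 1 / 2) :
    ENNReal.ofReal (1 / 2) ≤ (Measure.pi fun _ : Fin P => noisePatchLaw sigman d)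
      {ξ | ∑ r, ∑ p, dot (w r) (ξ p) ^ 2 ≤ 1} := by
  set μ := Measure.pi fun _ : Fin P => noisePatchLaw sigman d
  set f : (Fin P → Fin d → ℝ) → ℝ := fun ξ => ∑ r, ∑ p, dot (w r) (ξ p) ^ 2
  have hint : Integrable f μ := integrable_finsetSum _ fun r _ => integrable_finsetSum _ fun p _ =>
    integrable_dot_sq_pi_noisePatchLaw sigman w r p
  have hnonneg : 0 ≤ f := fun ξ => sum_nonneg fun r _ => sum_nonneg fun p _ => sq_nonneg _
  have hmeas : MeasurableSet {ξ | f ξ ≤ 1} :=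
    measurableSet_le (Finset.measurable_sum _ fun r _ => Finset.measurable_sum _ fun p _ =>
      ((measurable_dot (w r)).comp (measurable_pi_apply p)).pow_const 2) measurable_const
  have hmarkov := mul_meas_ge_le_integral_of_nonneg (ae_of_all μ hnonneg) hint 1
  rw [one_mul] at hmarkov
  have hcompl : μ.real {ξ | f ξ ≤ 1}ᶜ ≤ 1 / 2 := calc
    μ.real {ξ | f ξ ≤ 1}ᶜ ≤ μ.real {ξ | 1 ≤ f ξ} :=
      measureReal_mono fun ξ (hξ : ¬f ξ ≤ 1) => show 1 ≤ f ξ from (not_le.1 hξ).le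
    _ ≤ ∫ ξ, f ξ ∂μ := hmarkov
    _ ≤ 1 / 2 := (integral_sum_dot_sq_le sigman hw).trans hb
  rw [probReal_compl_eq_one_sub hmeas] at hcompl
  rw [← ofReal_measureReal]
  exact ENNReal.ofReal_le_ofReal (by linarith)

end FreshNoise

lemma labelLaw_pair : labelLaw {1, -1} = 1 := by
  simp [labelLaw, ENNReal.inv_two_add_inv_two]

lemma measurable_update_signal (alpha : ℝ) {P d : ℕ} (hd : 0 < d) :
    Measurable fun z : ℝ × Fin P × (Fin P → Fin d → ℝ) =>
      (Function.update z.2.2 z.2.1 ((alpha * z.1) • e1 d hd), z.1) := by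
  refine Measurable.prodMk ?_ measurable_fst
  refine measurable_pi_lambda _ fun p => measurable_pi_lambda _ fun k => ?_
  have hite : (fun z : ℝ × Fin P × (Fin P → Fin d → ℝ) =>
      Function.update z.2.2 z.2.1 ((alpha * z.1) • e1 d hd) p k) =
        fun z => if p = z.2.1 then alpha * z.1 * e1 d hd k else z.2.2 p k := by
    ext z
    by_cases hp : p = z.2.1
    · rw [if_pos hp, ← hp]
      simp
    · rw [if_neg hp, Function.update_of_ne hp]
  rw [hite]
  exact Measurable.ite (measurableSet_eq_fun measurable_const (by fun_prop)) (by fun_prop)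
    (by fun_prop)

lemma pi_noisePatchLaw_le_testLaw {alpha sigman : ℝ} {P d : ℕ} (hP : 0 < P) (hd : 0 < d)
    {A : Set (Fin P → Fin d → ℝ)} {B : Set ((Fin P → Fin d → ℝ) × ℝ)}
    (h : ∀ y : ℝ, y = 1 ∨ y = -1 → ∀ s, ∀ ξ ∈ A,
      (Function.update ξ s ((alpha * y) • e1 d hd), y) ∈ B) :
    (Measure.pi fun _ : Fin P => noisePatchLaw sigman d) A ≤ testLaw alpha sigman P d hP hd B := by
  have hsub : ({1, -1} : Set ℝ) ×ˢ ((Set.univ : Set (Fin P)) ×ˢ A) ⊆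
      (fun z : ℝ × Fin P × (Fin P → Fin d → ℝ) =>
        (Function.update z.2.2 z.2.1 ((alpha * z.1) • e1 d hd), z.1)) ⁻¹' B := by
    rintro ⟨y, s, ξ⟩ ⟨hy, -, hξ⟩
    exact h y hy s ξ hξ
  calc (Measure.pi fun _ : Fin P => noisePatchLaw sigman d) A
      = (labelLaw.prod ((uniformPatch P hP).prod
          (Measure.pi fun _ : Fin P => noisePatchLaw sigman d)))
          (({1, -1} : Set ℝ) ×ˢ ((Set.univ : Set (Fin P)) ×ˢ A)) := by
        rw [Measure.prod_prod, Measure.prod_prod, measure_univ, one_mul, labelLaw_pair, one_mul]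
    _ ≤ _ := measure_mono hsub
    _ ≤ testLaw alpha sigman P d hP hd B :=
        Measure.le_map_apply (measurable_update_signal alpha hd).aemeasurable B

/-! ### The state at the horizon -/

namespace Setting

section Horizon

variable {S : Setting} {C Γ : ℝ} {fT : Fin S.N → ℝ} (hdyn : S.ADDyn fT) (hE : S.EventE)
  (h : S.ParamBounds C) (hdΓ : S.d ≤ Γ) (hΓ : ∀ i, Γ ≤ S.y i * fT i)

include hdyn hE h hdΓ hΓ

lemma noiseCoef_mem_Icc (z : Fin S.N × Fin S.P) (r : Fin S.m) :
    S.noiseCoef fT S.T z r ∈ Set.Icc 0 (12 * S.ℓ) :=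
  have hbounds := (toBadTeacherDynamics hdyn hE h hdΓ hΓ).crudeBounds le_rfl
  ⟨hbounds.coef_nonneg z r, hbounds.coef_le z r⟩

lemma neg_le_noiseCorr (z : Fin S.N × Fin S.P) (r : Fin S.m) :
    -(4 * S.ν * S.ℓ + 12 * (S.κ * S.N * S.P * S.ℓ)) ≤ S.noiseCorr S.T z r := by
  rw [← hdyn.corr_dynamics]
  exact ((toBadTeacherDynamics hdyn hE h hdΓ hΓ).crudeBounds le_rfl).neg_τ_le_corr z r

lemma sum_signal_cube_le : ∑ r, (S.alpha * S.wsig S.T r) ^ 3 ≤ S.m * (6 * S.ℓ) ^ 3 :=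
  ((toBadTeacherDynamics hdyn hE h hdΓ hΓ).crudeBounds le_rfl).signalMass_le

lemma le_sum_signal_cube {K : ℝ} (hK : 0 ≤ K) (hKΓ : K + 3 ≤ Γ)
    (hKC : 128 * Real.exp (K + 1) ≤ C) : K ≤ ∑ r, (S.alpha * S.wsig S.T r) ^ 3 := by
  refine (toBadTeacherDynamics hdyn hE h hdΓ hΓ).le_signalMass hK hKΓ ?_
  calc 128 * Real.exp (K + 1) ≤ C := hKC
    _ < 3 / 2 * C := by linarith [h.C_pos]
    _ ≤ 3 / 2 * (S.T * (S.eta * S.sigma0 * S.alpha ^ 3)) := by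
      gcongr
      exact h.le_signal_horizon
    _ = S.T * (3 * S.eta * S.alpha ^ 2) * (S.alpha * S.sigma0 / 2) := by ring

lemma neg_one_le_marg (i : Fin S.N) : -1 ≤ S.marg S.T i := by
  rw [← hdyn.margin_dynamics]
  exact ((toBadTeacherDynamics hdyn hE h hdΓ hΓ).crudeBounds le_rfl).neg_one_le_margin i

lemma sum_signal_cube_div_sub_le_marg {i : Fin S.N} (hi : i ∈ S.SL) :
    (∑ r, (S.alpha * S.wsig S.T r) ^ 3) / 8 - 1 / 2 ≤ S.marg S.T i := by
  rw [← hdyn.margin_dynamics]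
  exact ((toBadTeacherDynamics hdyn hE h hdΓ hΓ).crudeBounds le_rfl).signalMass_div_sub_le_margin hi

lemma exists_memorized : ∃ i ∈ S.SU, ∃ r, ∃ j, j ≠ S.sig i ∧
    1 ≤ 27 * (S.m * S.P * (S.y i * dot (S.w S.T r) (S.x i j)) ^ 3) := by
  obtain ⟨⟨i, j⟩, r, hi, hpos, hmem⟩ := (toBadTeacherDynamics hdyn hE h hdΓ hΓ).exists_memorized
  change 0 < (S.dynamics fT).corr S.T (i, j) r at hpos
  change 1 ≤ 27 * (S.m * S.P * (S.dynamics fT).corr S.T (i, j) r ^ 3) at hmem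
  rw [hdyn.corr_dynamics] at hpos hmem
  have hj : j ≠ S.sig i := fun hj => hpos.ne' (if_pos hj)
  rw [noiseCorr, if_neg hj] at hmem
  exact ⟨i, S.notMem_SL.1 hi, r, j, hj, hmem⟩

end Horizon

section FilterNorm

variable {S : Setting} {fT : Fin S.N → ℝ}

lemma ADDyn.w_apply_eq (hdyn : S.ADDyn fT) (t : ℕ) (r : Fin S.m) {k : Fin S.d}
    (hk : (k : ℕ) ≠ 0) :
    S.w t r k = S.w 0 r k + ∑ z : Fin S.N × Fin S.P,
      S.y z.1 * (S.noiseCoef fT t z r / (S.sigman ^ 2 * S.d)) * S.x z.1 z.2 k := by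
  have hsingle (v : Fin S.d → ℝ) : dot v (Pi.single k 1) = v k := by simp [dot, Pi.single_apply]
  have h0 : (Pi.single k 1 : Fin S.d → ℝ) ⟨0, S.hd⟩ = 0 :=
    Pi.single_eq_of_ne (fun h => hk (congrArg Fin.val h).symm) 1
  have hdot := hdyn.dot_w_eq t r h0
  simp only [hsingle] at hdot
  rw [hdot, Fintype.sum_prod_type]
  congr 1
  refine Finset.sum_congr rfl fun i _ => Finset.sum_congr rfl fun j _ => ?_
  rw [noiseCoef]
  split_ifs
  · simp
  · rw [mul_div_cancel_left₀ _ S.noiseVar_pos.ne']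

lemma EventE.sum_sq_w_zero_le (hE : S.EventE) (r : Fin S.m) :
    ∑ k, S.w 0 r k ^ 2 ≤ 4 * S.sigma0 ^ 2 * S.d := by
  have hnorm := hE.2.2.2.1 r
  have hσ₀ := S.hsigma0
  rw [Real.sqrt_le_iff, mul_pow, mul_pow, Real.sq_sqrt S.d_pos.le] at hnorm
  calc ∑ k, S.w 0 r k ^ 2 = sqnorm (S.w 0 r) := by simp only [sqnorm, dot, pow_two]
    _ ≤ 4 * S.sigma0 ^ 2 * S.d := by linarith [hnorm.2]

lemma EventE.sq_coef_mul_sqnorm_le (hE : S.EventE) {t : ℕ} {z : Fin S.N × Fin S.P} {r : Fin S.m}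
    (hcoef : S.noiseCoef fT t z r ∈ Set.Icc 0 (12 * S.ℓ)) :
    (S.y z.1 * (S.noiseCoef fT t z r / (S.sigman ^ 2 * S.d))) ^ 2 * sqnorm (S.x z.1 z.2) ≤
      216 * S.ℓ ^ 2 / (S.sigman ^ 2 * S.d) := by
  have hD := S.noiseVar_pos
  by_cases hz : z.2 = S.sig z.1
  · rw [noiseCoef, if_pos hz, zero_div, mul_zero, zero_pow two_ne_zero, zero_mul]
    positivity
  have hnorm : sqnorm (S.x z.1 z.2) ≤ 3 / 2 * (S.sigman ^ 2 * S.d) := by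
    linarith [(hE.1 z.1 z.2 hz).2]
  have hnonneg : 0 ≤ sqnorm (S.x z.1 z.2) := by
    unfold sqnorm dot
    exact sum_nonneg fun k _ => mul_self_nonneg _
  rw [mul_pow, pow_two (S.y z.1), S.y_mul_y, one_mul, div_pow]
  calc S.noiseCoef fT t z r ^ 2 / (S.sigman ^ 2 * S.d) ^ 2 * sqnorm (S.x z.1 z.2)
      ≤ (12 * S.ℓ) ^ 2 / (S.sigman ^ 2 * S.d) ^ 2 * (3 / 2 * (S.sigman ^ 2 * S.d)) := by
        have hlow := hcoef.1
        have hhigh := hcoef.2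
        gcongr
    _ = 216 * S.ℓ ^ 2 / (S.sigman ^ 2 * S.d) := by
        field_simp
        ring

lemma sq_add_sum_le {ι : Type*} [Fintype ι] (a : ℝ) (f : ι → ℝ) :
    (a + ∑ i, f i) ^ 2 ≤ 2 * a ^ 2 + 2 * (Fintype.card ι * ∑ i, f i ^ 2) := by
  have hcauchy := sq_sum_le_card_mul_sum_sq (s := univ) (f := f)
  rw [card_univ] at hcauchy
  linarith [add_sq_le (a := a) (b := ∑ i, f i)]

lemma ADDyn.sq_w_apply_le (hdyn : S.ADDyn fT) (t : ℕ) (r : Fin S.m) (k : Fin S.d) :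
    (if (k : ℕ) = 0 then 0 else S.w t r k ^ 2) ≤
      2 * S.w 0 r k ^ 2 + 2 * (S.N * S.P * ∑ z : Fin S.N × Fin S.P,
        (S.y z.1 * (S.noiseCoef fT t z r / (S.sigman ^ 2 * S.d)) * S.x z.1 z.2 k) ^ 2) := by
  split_ifs with hk
  · positivity
  · rw [hdyn.w_apply_eq t r hk]
    simpa only [Fintype.card_prod, Fintype.card_fin, Nat.cast_mul] using
      sq_add_sum_le (S.w 0 r k) fun z : Fin S.N × Fin S.P =>
        S.y z.1 * (S.noiseCoef fT t z r / (S.sigman ^ 2 * S.d)) * S.x z.1 z.2 k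

lemma sum_sq_w_le (hdyn : S.ADDyn fT) (hE : S.EventE) {t : ℕ} {r : Fin S.m}
    (hcoef : ∀ z, S.noiseCoef fT t z r ∈ Set.Icc 0 (12 * S.ℓ)) :
    S.sigman ^ 2 * ∑ k : Fin S.d, (if (k : ℕ) = 0 then 0 else S.w t r k ^ 2) ≤
      8 * S.ν ^ 2 + 18 * (S.κ * S.N * S.P) ^ 2 := by
  have hd := S.d_pos
  have hσ := S.hsigman
  set c : Fin S.N × Fin S.P → ℝ := fun z =>
    S.y z.1 * (S.noiseCoef fT t z r / (S.sigman ^ 2 * S.d))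
  have hlearned : ∑ k, ∑ z, (c z * S.x z.1 z.2 k) ^ 2 ≤
      S.N * S.P * (216 * S.ℓ ^ 2 / (S.sigman ^ 2 * S.d)) := by
    rw [Finset.sum_comm]
    simp only [mul_pow, ← mul_sum]
    refine (sum_le_card_nsmul _ _ (216 * S.ℓ ^ 2 / (S.sigman ^ 2 * S.d)) fun z _ => ?_).trans_eq
      (by simp only [card_univ, Fintype.card_prod, Fintype.card_fin, nsmul_eq_mul, Nat.cast_mul])
    simpa only [c, sqnorm, dot, mul_pow, ← pow_two] using hE.sq_coef_mul_sqnorm_le (hcoef z)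
  have hsum : ∑ k : Fin S.d, (if (k : ℕ) = 0 then 0 else S.w t r k ^ 2) ≤
      2 * (4 * S.sigma0 ^ 2 * S.d) +
        2 * (S.N * S.P * (S.N * S.P * (216 * S.ℓ ^ 2 / (S.sigman ^ 2 * S.d)))) := by
    refine (Finset.sum_le_sum fun k _ => hdyn.sq_w_apply_le t r k).trans ?_
    rw [sum_add_distrib, ← mul_sum, ← mul_sum, ← mul_sum]
    gcongr
    exact hE.sum_sq_w_zero_le r
  have hν : S.ν ^ 2 = S.sigma0 ^ 2 * S.sigman ^ 2 * S.d := by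
    rw [ν, mul_pow, mul_pow, Real.sq_sqrt hd.le]
  have hκ : (S.κ * S.N * S.P) ^ 2 = 25 * (S.ℓ ^ 2 / S.d * (S.N * S.P) ^ 2) := by
    rw [κ, mul_pow, mul_pow, div_pow, Real.sq_sqrt hd.le]
    ring
  calc S.sigman ^ 2 * ∑ k : Fin S.d, (if (k : ℕ) = 0 then 0 else S.w t r k ^ 2)
      ≤ S.sigman ^ 2 * (2 * (4 * S.sigma0 ^ 2 * S.d) +
        2 * (S.N * S.P * (S.N * S.P * (216 * S.ℓ ^ 2 / (S.sigman ^ 2 * S.d))))) := by gcongr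
    _ = 8 * (S.sigma0 ^ 2 * S.sigman ^ 2 * S.d) +
        432 * (S.ℓ ^ 2 / S.d * (S.N * S.P) ^ 2) := by
      field_simp
      ring
    _ ≤ 8 * S.ν ^ 2 + 18 * (S.κ * S.N * S.P) ^ 2 := by
      rw [hν, hκ]
      linarith [show 0 ≤ S.ℓ ^ 2 / S.d * ((S.N : ℝ) * S.P) ^ 2 by positivity]

end FilterNorm

end Setting

/-! ### The attack on memorized noise -/

section PatchAttack

lemma add_one_cube_le {τ : ℝ} (hτ : 0 ≤ τ) : (1 + τ) ^ 3 ≤ 4 + 4 * τ ^ 3 := by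
  have hpow := add_pow_le zero_le_one hτ 3
  norm_num at hpow
  linarith

lemma sum_sub_cube_le {ι : Type*} [Fintype ι] {u v : ι → ℝ} {τ : ℝ} {i₀ : ι} (hτ : 0 ≤ τ)
    (hu : ∀ i, u i ≤ 1) (hv : ∀ i, -τ ≤ v i) (hi₀ : 2 ≤ v i₀) :
    ∑ i, (u i - v i) ^ 3 ≤ Fintype.card ι * (4 + 4 * τ ^ 3) - v i₀ ^ 3 / 8 := by
  classical
  have hterm (i : ι) : (u i - v i) ^ 3 ≤ (4 + 4 * τ ^ 3) - if i = i₀ then v i₀ ^ 3 / 8 else 0 := by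
    split_ifs with hi
    · subst hi
      calc (u i - v i) ^ 3 ≤ (-(v i / 2)) ^ 3 := cube_le_cube (by linarith [hu i])
        _ = 0 - v i ^ 3 / 8 := by ring
        _ ≤ 4 + 4 * τ ^ 3 - v i ^ 3 / 8 := by gcongr; positivity
    · rw [sub_zero]
      exact (cube_le_cube (by linarith [hu i, hv i])).trans (add_one_cube_le hτ)
  refine (sum_le_sum fun i _ => hterm i).trans_eq ?_
  rw [sum_sub_distrib, sum_ite_eq' univ i₀, if_pos (mem_univ i₀), sum_const, card_univ,
    nsmul_eq_mul]

lemma sum_attacked_cube_le {ι : Type*} [Fintype ι] [DecidableEq ι] {a : ι → ℝ} {s p₀ : ι}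
    (hp₀ : p₀ ≠ s) (ha : ∀ p ≠ s, |a p| ≤ 1) (b : ℝ) :
    ∑ p, (if p = p₀ then b else a p) ^ 3 ≤ a s ^ 3 + ∑ p ∈ univ.erase s, a p ^ 2 + b ^ 3 := by
  rw [← add_sum_erase _ _ (mem_univ s), if_neg hp₀.symm,
    ← add_sum_erase _ _ (mem_erase.2 ⟨hp₀, mem_univ p₀⟩), if_pos rfl, add_comm (b ^ 3), ← add_assoc]
  gcongr
  refine (sum_le_sum fun p hp => ?_).trans
    (sum_le_sum_of_subset_of_nonneg (erase_subset p₀ _) fun p _ _ => sq_nonneg (a p))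
  obtain ⟨hpp₀, hps⟩ := mem_erase.1 hp
  rw [if_neg hpp₀, pow_succ]
  exact mul_le_of_le_one_right (sq_nonneg _) (le_of_abs_le (ha p (ne_of_mem_erase hps)))

lemma abs_le_one_of_sum_sq_le_one {ι κ : Type*} [Fintype ι] {t : Finset κ} {f : ι → κ → ℝ}
    (h : ∑ i, ∑ k ∈ t, f i k ^ 2 ≤ 1) (i : ι) {k : κ} (hk : k ∈ t) : |f i k| ≤ 1 := by
  refine (sq_le_one_iff_abs_le_one _).1 (le_trans ?_ h)
  calc f i k ^ 2 ≤ ∑ k ∈ t, f i k ^ 2 := single_le_sum (fun k _ => sq_nonneg (f i k)) hk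
    _ ≤ ∑ i, ∑ k ∈ t, f i k ^ 2 :=
      single_le_sum (f := fun i => ∑ k ∈ t, f i k ^ 2)
        (fun i _ => sum_nonneg fun k _ => sq_nonneg (f i k)) (mem_univ i)

variable {m P d : ℕ} {w : Fin m → Fin d → ℝ} {X : Fin P → Fin d → ℝ} {s p₀ : Fin P} {y : ℝ}
  {a : Fin d → ℝ}

lemma mul_dot_attack_cube (hy : y = 1 ∨ y = -1) (v : Fin d → ℝ) (p : Fin P) :
    y * dot v (X p + if p = p₀ then (-y) • a else 0) ^ 3 =
      (if p = p₀ then y * dot v (X p₀) - dot v a else y * dot v (X p)) ^ 3 := by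
  split_ifs with hp
  · subst hp
    rw [dot_add_right, dot_smul_right]
    rcases hy with rfl | rfl <;> ring
  · rw [add_zero]
    rcases hy with rfl | rfl <;> ring

lemma mul_netOut_attack_neg (hy : y = 1 ∨ y = -1) (hp₀ : p₀ ≠ s) {B τ : ℝ} {r₀ : Fin m}
    (hsignal : ∑ r, y * dot (w r) (X s) ^ 3 ≤ B)
    (hnoise : ∑ r, ∑ p ∈ univ.erase s, dot (w r) (X p) ^ 2 ≤ 1)
    (hτ : 0 ≤ τ) (ha : ∀ r, -τ ≤ dot (w r) a) (hr₀ : 2 ≤ dot (w r₀) a)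
    (hlt : B + 1 + m * (4 + 4 * τ ^ 3) < dot (w r₀) a ^ 3 / 8) :
    y * netOut w (fun p => X p + if p = p₀ then (-y) • a else 0) < 0 := by
  have hsq (u : ℝ) : (y * u) ^ 2 = u ^ 2 := by rcases hy with rfl | rfl <;> ring
  have hcube (u : ℝ) : (y * u) ^ 3 = y * u ^ 3 := by rcases hy with rfl | rfl <;> ring
  have habs (r : Fin m) (p : Fin P) (hp : p ≠ s) : |y * dot (w r) (X p)| ≤ 1 :=
    abs_le_one_of_sum_sq_le_one (f := fun r p => y * dot (w r) (X p))
      (by simpa only [hsq] using hnoise) r (mem_erase.2 ⟨hp, mem_univ p⟩)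
  have hrow (r : Fin m) : ∑ p, y * dot (w r) (X p + if p = p₀ then (-y) • a else 0) ^ 3 ≤
      y * dot (w r) (X s) ^ 3 + ∑ p ∈ univ.erase s, dot (w r) (X p) ^ 2 +
        (y * dot (w r) (X p₀) - dot (w r) a) ^ 3 := by
    simpa only [mul_dot_attack_cube hy, hsq, hcube] using
      sum_attacked_cube_le hp₀ (habs r) (y * dot (w r) (X p₀) - dot (w r) a)
  have hdamage := sum_sub_cube_le (u := fun r => y * dot (w r) (X p₀)) hτ
    (fun r => le_of_abs_le (habs r p₀ hp₀)) ha hr₀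
  rw [Fintype.card_fin] at hdamage
  have htotal := sum_le_sum fun r (_ : r ∈ univ) => hrow r
  rw [sum_add_distrib, sum_add_distrib] at htotal
  simp only [netOut_eq_sum_cube, mul_sum]
  linarith

end PatchAttack

section AttackStrength

variable {m P l c b τ : ℝ}

lemma le_attack_cube (hm : 1 ≤ m) (hP : 1 ≤ P) (hl : 0 ≤ l)
    (hc : 10 ^ 4 * (m * Real.sqrt P * l) ≤ c) : 10 ^ 12 * (m * l ^ 3) * (m * P) ≤ c ^ 3 := by
  have hroot : 1 ≤ Real.sqrt P := Real.one_le_sqrt.2 hP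
  calc 10 ^ 12 * (m * l ^ 3) * (m * P) = 10 ^ 12 * (m * m * 1 * P * 1 * l ^ 3) := by ring
    _ ≤ 10 ^ 12 * (m * m * m * P * Real.sqrt P * l ^ 3) := by gcongr
    _ = (10 ^ 4 * (m * Real.sqrt P * l)) ^ 3 := by
      linear_combination (-(10 ^ 12 * m ^ 3 * Real.sqrt P * l ^ 3)) *
        Real.mul_self_sqrt (zero_le_one.trans hP)
    _ ≤ c ^ 3 := by gcongr

variable (hm : 1 ≤ m) (hP : 1 ≤ P) (hb : 1 ≤ 27 * (m * P * b ^ 3))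

include hm hP hb

lemma le_attack_mul_memorized_cube (hl : 0 ≤ l) (hc : 10 ^ 4 * (m * Real.sqrt P * l) ≤ c) :
    10 ^ 10 * (m * l ^ 3) ≤ (c * b) ^ 3 := by
  have hmP : 0 < m * P := by positivity
  have hb0 : 0 < b ^ 3 := (mul_pos_iff_of_pos_left hmP).1 (by linarith)
  calc 10 ^ 10 * (m * l ^ 3) ≤ 10 ^ 10 * (m * l ^ 3) * (27 * (m * P * b ^ 3)) :=
        le_mul_of_one_le_right (by positivity) hb
    _ = 27 / 100 * (10 ^ 12 * (m * l ^ 3) * (m * P) * b ^ 3) := by ring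
    _ ≤ 1 * (c ^ 3 * b ^ 3) := by
      gcongr
      exacts [by norm_num, le_attack_cube hm hP hl hc]
    _ = (c * b) ^ 3 := by ring

lemma mul_noise_cube_le_memorized_cube (hτ : 1728 * (m ^ 2 * P * τ ^ 3) ≤ 1) :
    64 * (m * τ ^ 3) ≤ b ^ 3 := by
  have hmP : 0 < m * P := by positivity
  refine le_of_mul_le_mul_left ?_ hmP
  linarith

lemma attack_strength_lt (hl : 1 ≤ l) (hc : 10 ^ 4 * (m * Real.sqrt P * l) ≤ c)
    (hτ : 1728 * (m ^ 2 * P * τ ^ 3) ≤ 1) :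
    m * (6 * l) ^ 3 + 1 + m * (4 + 4 * (c * τ) ^ 3) < (c * b) ^ 3 / 8 := by
  have hl0 : 0 ≤ l := zero_le_one.trans hl
  have hc0 : 0 ≤ c := le_trans (by positivity) hc
  have hml : m ≤ m * l ^ 3 := le_mul_of_one_le_right (by linarith) (one_le_pow₀ hl)
  have hattack := le_attack_mul_memorized_cube hm hP hb hl0 hc
  have hnoise : 64 * (m * (c * τ) ^ 3) ≤ (c * b) ^ 3 := by
    rw [mul_pow, mul_pow]
    linarith [mul_le_mul_of_nonneg_left (mul_noise_cube_le_memorized_cube hm hP hb hτ)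
      (pow_nonneg hc0 3)]
  linarith

end AttackStrength

namespace Setting

lemma noise_sup_pos (S : Setting) :
    0 < S.sigman * Real.sqrt (2 * Real.log ((16 : ℝ) * S.d * S.N * S.P / S.delta)) := by
  have hσ := S.hsigman
  have hone : (1 : ℝ) < 16 * S.d * S.N * S.P / S.delta := by
    rw [lt_div_iff₀ S.hdelta0, one_mul]
    have hdNP : (1 : ℝ) ≤ S.d * S.N * S.P :=
      one_le_mul_of_one_le_of_one_le
        (one_le_mul_of_one_le_of_one_le S.one_le_d S.one_le_N) S.one_le_P
    linarith [S.hdelta1]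
  have hlog := Real.log_pos hone
  positivity

section RobustError

variable {S : Setting} {C Γ : ℝ} {fT : Fin S.N → ℝ} (hdyn : S.ADDyn fT) (hE : S.EventE)
  (h : S.ParamBounds C) (hdΓ : S.d ≤ Γ) (hΓ : ∀ i, Γ ≤ S.y i * fT i)

include hdyn hE h hdΓ hΓ

lemma exists_attack_direction : ∃ (a : Fin S.d → ℝ) (τ : ℝ) (r₀ : Fin S.m), (∀ k, |a k| ≤ S.eps) ∧
    0 ≤ τ ∧ (∀ r, -τ ≤ dot (S.w S.T r) a) ∧ 2 ≤ dot (S.w S.T r₀) a ∧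
    S.m * (6 * S.ℓ) ^ 3 + 1 + S.m * (4 + 4 * τ ^ 3) < dot (S.w S.T r₀) a ^ 3 / 8 := by
  obtain ⟨i, -, r₀, j, hj, hmem⟩ := exists_memorized hdyn hE h hdΓ hΓ
  have hq := S.noise_sup_pos
  have hattack := h.attack_dominates_noise
  have hsup := hE.noise_sup_le hj
  set q := S.sigman * Real.sqrt (2 * Real.log ((16 : ℝ) * S.d * S.N * S.P / S.delta))
  set τ := 4 * S.ν * S.ℓ + 12 * (S.κ * S.N * S.P * S.ℓ)
  have hε := S.heps
  have hν := S.ν_pos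
  have hκ := S.κ_nonneg
  have hℓ := S.ℓ_nonneg
  have hc : 0 ≤ S.eps / q := by positivity
  have hcge : 10 ^ 4 * (S.m * Real.sqrt S.P * S.ℓ) ≤ S.eps / q := (le_div_iff₀ hq).2 hattack
  have hdot (r : Fin S.m) : dot (S.w S.T r) ((S.eps / q) • S.y i • S.x i j) =
      S.eps / q * (S.y i * dot (S.w S.T r) (S.x i j)) := by rw [dot_smul_right, dot_smul_right]
  have hlt := attack_strength_lt S.one_le_m S.one_le_P hmem h.one_le_ℓ hcge h.noise_small
  refine ⟨(S.eps / q) • S.y i • S.x i j, S.eps / q * τ, r₀, fun k => ?_, by positivity,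
    fun r => ?_, ?_, ?_⟩
  · rw [Pi.smul_apply, Pi.smul_apply, smul_eq_mul, smul_eq_mul, abs_mul, abs_mul, abs_y, one_mul,
      abs_of_nonneg hc, div_mul_eq_mul_div, div_le_iff₀ hq]
    exact mul_le_mul_of_nonneg_left (hsup k) hε.le
  · rw [hdot, ← mul_neg]
    have hcorr := neg_le_noiseCorr hdyn hE h hdΓ hΓ (i, j) r
    rw [noiseCorr, if_neg hj] at hcorr
    exact mul_le_mul_of_nonneg_left hcorr hc
  · rw [hdot]
    refine le_of_cube_le_cube ?_
    have hℓ3 := one_le_pow₀ h.one_le_ℓ (n := 3)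
    have hmℓ := one_le_mul_of_one_le_of_one_le S.one_le_m hℓ3
    linarith [le_attack_mul_memorized_cube S.one_le_m S.one_le_P hmem hℓ hcge]
  · rwa [hdot]

lemma half_le_robErr : ENNReal.ofReal (1 / 2) ≤ S.robErr S.T := by
  obtain ⟨a, τ, r₀, ha, hτ, hcorr, hr₀, hlt⟩ := exists_attack_direction hdyn hE h hdΓ hΓ
  have hvar : S.m * S.P * (8 * S.ν ^ 2 + 18 * (S.κ * S.N * S.P) ^ 2) ≤ 1 / 2 := by
    linarith [h.init_variance_small, h.learned_variance_small]
  refine (half_le_measure_sum_dot_sq_le_one S.sigman (fun r => sum_sq_w_le hdyn hE fun z =>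
    noiseCoef_mem_Icc hdyn hE h hdΓ hΓ z r) hvar).trans ?_
  refine pi_noisePatchLaw_le_testLaw S.hP S.hd fun y hy s ξ hξ => ?_
  obtain ⟨p₀, hp₀⟩ := exists_ne_of_two_le h.two_le_P s
  have hy_abs : |y| = 1 := by rcases hy with rfl | rfl <;> norm_num
  refine ⟨fun p => if p = p₀ then (-y) • a else 0, fun p k => ?_,
    mul_netOut_attack_neg hy hp₀ ?_ ?_ hτ hcorr hr₀ hlt⟩
  · dsimp only
    split_ifs
    · rw [Pi.smul_apply, smul_eq_mul, abs_mul, abs_neg, hy_abs, one_mul]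
      exact ha k
    · simpa using S.heps.le
  · refine le_of_eq_of_le (sum_congr rfl fun r _ => ?_) (sum_signal_cube_le hdyn hE h hdΓ hΓ)
    dsimp only
    rw [Function.update_self, dot_smul_right, dot_e1, ← wsig]
    rcases hy with rfl | rfl <;> ring
  · refine le_trans (sum_le_sum fun r _ => ?_) hξ
    refine (sum_congr rfl fun p hp => ?_).trans_le
      (sum_le_sum_of_subset_of_nonneg (erase_subset s _) fun p _ _ => sq_nonneg _)
    dsimp only
    rw [Function.update_of_ne (ne_of_mem_erase hp)]

end RobustError

end Setting

/-! ### Training loss and memorization at the horizon -/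

lemma lloss_le_two {z : ℝ} (hz : -1 ≤ z) : lloss z ≤ 2 := by
  have hexp : 1 + Real.exp (-z) ≤ Real.exp 2 := by
    have hle : Real.exp (-z) ≤ Real.exp 1 := Real.exp_le_exp.2 (by linarith)
    have htwo : Real.exp 2 = Real.exp 1 * Real.exp 1 := by
      rw [← Real.exp_add]
      norm_num
    nlinarith [Real.add_one_le_exp (1 : ℝ)]
  exact (Real.log_le_iff_le_exp (by positivity)).2 hexp

lemma one_div_rpow_third_le {n b : ℝ} (hn : 0 < n) (h : 1 ≤ n * b ^ 3) :
    1 / n ^ ((1 : ℝ) / 3) ≤ b := by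
  refine le_of_cube_le_cube ?_
  rwa [div_pow, rpow_third_cube hn.le, one_pow, div_le_iff₀' hn]

lemma exists_one_le_card_mul_cube {ι : Type*} [Fintype ι] {f : ι → ℝ} (h : 1 ≤ ∑ i, f i ^ 3) :
    ∃ i, 1 ≤ Fintype.card ι * f i ^ 3 := by
  by_contra! hlt
  have hne : (univ : Finset ι).Nonempty :=
    nonempty_of_sum_ne_zero (zero_lt_one.trans_le h).ne'
  have hcard : 0 < (Fintype.card ι : ℝ) := by exact_mod_cast hne.card_pos
  have hsum := sum_lt_sum_of_nonempty hne fun i _ => hlt i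
  rw [← mul_sum, sum_const, card_univ, nsmul_eq_mul] at hsum
  linarith [lt_of_mul_lt_mul_left hsum hcard.le]

namespace Setting

variable {S : Setting} {C Γ : ℝ} {fT : Fin S.N → ℝ}

lemma exists_le_wsig {t : ℕ} (h : 1 ≤ ∑ r, (S.alpha * S.wsig t r) ^ 3) :
    ∃ r, 1 / (S.alpha * (S.m : ℝ) ^ ((1 : ℝ) / 3)) ≤ S.wsig t r := by
  obtain ⟨r, hr⟩ := exists_one_le_card_mul_cube h
  rw [Fintype.card_fin] at hr
  refine ⟨r, ?_⟩
  rw [mul_comm S.alpha, ← div_div, div_le_iff₀' S.halpha]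
  exact one_div_rpow_third_le (zero_lt_one.trans_le S.one_le_m) hr

lemma mean_le_of_learnable {f : Fin S.N → ℝ} {a b : ℝ} (ha : 0 ≤ a)
    (hL : ∀ i ∈ S.SL, f i ≤ a) (hU : ∀ i ∈ S.SU, f i ≤ b) :
    1 / (S.N : ℝ) * ∑ i, f i ≤ a + b * S.pun := by
  have hterm (i : Fin S.N) : f i ≤ a + if i ∈ S.SU then b else 0 := by
    split_ifs with hi
    · linarith [hU i hi]
    · rw [add_zero]
      exact hL i (by_contra fun hiL => hi (S.notMem_SL.1 hiL))
  have hN := zero_lt_one.trans_le S.one_le_N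
  rw [one_div, inv_mul_le_iff₀ hN]
  calc ∑ i, f i ≤ ∑ i, (a + if i ∈ S.SU then b else 0) := sum_le_sum fun i _ => hterm i
    _ = S.N * a + S.SU.card * b := by
      simp only [sum_add_distrib, sum_ite_mem, univ_inter, sum_const, card_univ,
        Fintype.card_fin, nsmul_eq_mul]
    _ = S.N * (a + b * S.pun) := by
      rw [pun]
      field_simp

variable (hdyn : S.ADDyn fT) (hE : S.EventE)
  (h : S.ParamBounds C) (hdΓ : S.d ≤ Γ) (hΓ : ∀ i, Γ ≤ S.y i * fT i)

include hdyn hE h hdΓ hΓ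

lemma exists_memorized_ge : ∃ i ∈ S.SU, ∃ r, ∃ j, j ≠ S.sig i ∧
    1 / (3 * ((S.m : ℝ) * S.P) ^ ((1 : ℝ) / 3)) ≤ S.y i * dot (S.w S.T r) (S.x i j) := by
  obtain ⟨i, hi, r, j, hj, hmem⟩ := exists_memorized hdyn hE h hdΓ hΓ
  refine ⟨i, hi, r, j, hj, ?_⟩
  have hmP : 0 < (S.m : ℝ) * S.P :=
    mul_pos (zero_lt_one.trans_le S.one_le_m) (zero_lt_one.trans_le S.one_le_P)
  rw [mul_comm (3 : ℝ), ← div_div, div_le_iff₀' three_pos]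
  exact one_div_rpow_third_le hmP (by linarith)

lemma mean_lloss_le {θ K : ℝ} (hθ : 0 < θ) (hθC : 4 / θ ≤ C)
    (hK : K ≤ ∑ r, (S.alpha * S.wsig S.T r) ^ 3) (hKθ : Real.log (2 / θ) ≤ K / 8 - 1 / 2) :
    1 / (S.N : ℝ) * ∑ i, lloss (S.marg S.T i) ≤ θ := by
  have hlearn (i) (hi : i ∈ S.SL) : lloss (S.marg S.T i) ≤ θ / 2 := by
    have hmarg := sum_signal_cube_div_sub_le_marg hdyn hE h hdΓ hΓ hi
    calc lloss (S.marg S.T i) ≤ Real.exp (-S.marg S.T i) := lloss_le_exp_neg _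
      _ ≤ Real.exp (-Real.log (2 / θ)) := Real.exp_le_exp.2 (by linarith)
      _ = θ / 2 := by rw [Real.exp_neg, Real.exp_log (by positivity), inv_div]
  have hpun : 4 * S.pun ≤ θ := by
    have hle := (mul_le_mul_of_nonneg_right hθC S.pun_nonneg).trans h.C_mul_pun_le_one
    rwa [div_mul_eq_mul_div, div_le_one hθ] at hle
  calc 1 / (S.N : ℝ) * ∑ i, lloss (S.marg S.T i) ≤ θ / 2 + 2 * S.pun :=
        mean_le_of_learnable (by positivity) hlearn
          (fun i _ => lloss_le_two (neg_one_le_marg hdyn hE h hdΓ hΓ i))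
    _ ≤ θ := by linarith

end Setting

/-- Adversarial distillation under a Bad Teacher. On the event `E`,
under Condition (H) in the sparse-unlearnable regime with teacher margin `Γ ≥ C d` on
all samples (a Bad Teacher): (1) some filter aligns with the learnable feature; (2)
the network memorizes noise on some unlearnable sample; (3) the robust training error
is `o(1)`; (4) the robust test error on the learnable test distribution is at least
`1/2 − o(1)`. -/
theorem stmt18 :
    ∃ C0 C1 : ℝ, 0 < C0 ∧ 0 < C1 ∧
      ∀ θ : ℝ, 0 < θ →
        ∃ C : ℝ, 0 < C ∧
          ∀ (S : Setting) (fT : Fin S.N → ℝ) (Γ : ℝ),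
            S.ADDyn fT → S.EventE → S.CondH C → S.SparseRegime C →
            C * S.d ≤ Γ →
            (∀ i ∈ S.SL, Γ ≤ S.y i * fT i) →
            (∀ i ∈ S.SU, Γ ≤ S.y i * fT i) →
            (∃ r, C0 / (S.alpha * (S.m : ℝ) ^ ((1 : ℝ) / 3)) ≤ S.wsig S.T r) ∧
            (∃ i ∈ S.SU, ∃ r : Fin S.m, ∃ j, j ≠ S.sig i ∧
              C1 / (3 * ((S.m : ℝ) * S.P) ^ ((1 : ℝ) / 3)) ≤ S.y i * dot (S.w S.T r) (S.x i j)) ∧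
            1 / (S.N : ℝ) * ∑ i, lloss (S.marg S.T i) ≤ θ ∧
            ENNReal.ofReal (1 / 2 - θ) ≤ S.robErr S.T := by
  refine ⟨1, 1, one_pos, one_pos, fun θ hθ => ?_⟩
  set K : ℝ := 8 * (1 + |Real.log (2 / θ)|)
  set C : ℝ := 10 ^ 20 + 128 * Real.exp (K + 1) + (K + 3) + 4 / θ
  have hlog := le_abs_self (Real.log (2 / θ))
  have hK_nonneg : 0 ≤ K := by positivity
  have hexp := Real.exp_pos (K + 1)
  have hθ4 : 0 < 4 / θ := by positivity
  refine ⟨C, by positivity, fun S fT Γ hdyn hE hH hS hCΓ hL hU => ?_⟩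
  have hparam : S.ParamBounds C := Setting.paramBounds (by linarith) hH hS
  have hΓ (i) : Γ ≤ S.y i * fT i := (em (i ∈ S.SL)).elim (hL i) fun hi => hU i (S.notMem_SL.1 hi)
  have hdΓ : S.d ≤ Γ := (le_mul_of_one_le_left S.d_pos.le (by linarith)).trans hCΓ
  have hC_le_Γ : C ≤ Γ := (le_mul_of_one_le_right hparam.C_pos.le S.one_le_d).trans hCΓ
  have hsignal : K ≤ ∑ r, (S.alpha * S.wsig S.T r) ^ 3 :=
    Setting.le_sum_signal_cube hdyn hE hparam hdΓ hΓ hK_nonneg (by linarith) (by linarith)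
  exact ⟨Setting.exists_le_wsig (by linarith [abs_nonneg (Real.log (2 / θ))]),
    Setting.exists_memorized_ge hdyn hE hparam hdΓ hΓ,
    Setting.mean_lloss_le hdyn hE hparam hdΓ hΓ hθ (by linarith) hsignal
      (by linarith [abs_nonneg (Real.log (2 / θ))]),
    (ENNReal.ofReal_le_ofReal (by linarith)).trans (Setting.half_le_robErr hdyn hE hparam hdΓ hΓ)⟩

end AD

end
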